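/- For every real μ > 4·ln 2 there exist constants 0 < c' < c and N ∈ ℕ such that for all n ≥ N divisible by 6, setting β = μ/n: the Metropolis chain on Ω_RGB at inverse temperature β has mixing time τ(ε) ≤ e^{c'n}·(1 + ln(1/ε)) for all ε ∈ (0,1), while the simulated tempering chain on Ω_RGB with the n+1 equally spaced inverse temperatures β_i = i·β/n, 0 ≤ i ≤ n, has mixing time τ(ε) ≥ e^{cn}·ln(1/ε) for all ε ∈ (0,1/4). In particular, tempering is slower than the fixed-temperature Metropolis chain by an exponential factor. -/

import Mathlib

/-!
Write a configuration through its color densities `(s, t, u)`. A color class has total weight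
`exp (n F(s, t, u) + o(n))`, where `F = entropy + (μ/2)(s² + t² + u²)` is the free energy. Both
bounds are read off this function. Put `c0 = log 3 - (19/12) log 2`, which is the free-energy
difference `F(1/3, 1/3, 1/3) - F(1/2, 1/4, 1/4)` at the critical value `μ = 4 log 2`.

*Metropolis chain.* From any configuration the two minority colors can be equalized without ever
decreasing the class weight (`balance`), and then the first color is moved monotonically to the
density `r` maximizing the free energy `g(s)` of the balanced line `(s, (1-s)/2, (1-s)/2)` over
`[1/2, 1]`. For `μ > 4 log 2` this last walk never descends by more than some `b < c0`
(`exists_landscape`): `g` is quasi-concave on `[1/2, 1]`, and on `[1/3, 1/2]` raising `μ` above the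
critical value strictly lowers the barrier `c0`. The canonical paths obtained in this way
(`canonical_path`) give a Poincaré inequality with constant `e^{(b + o(1)) n}`
(`poincare_of_paths`), hence the upper bound on the mixing time.

*Tempering chain.* At every inverse temperature `ν/n`, the free energy on the slice `s = 1/2` lies
at least `c0` below that of the equipartition `(1/3, 1/3, 1/3)` or that of `(2/3, 1/6, 1/6)`
(`FF_half_le`, from the binary Pinsker inequality). So the slice has stationary mass at most
`e^{-(c0 - o(1)) n}` at all levels simultaneously, and every transition out of
`{s < 1/2} × levels` lands in it. Both sides of the cut have mass at least `e^{-o(n)}`: the low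
side at level `0`, the high side at level `n` since `μ` is supercritical. The bottleneck bound
`RevChain.le_mixingTime` then gives a mixing time of at least `e^{(c0 - o(1)) n} log (1/ε)`.
-/

open Finset

noncomputable section

/-- The mixing time of a Markov chain with transition matrix `P` and target
distribution `π`: the least `t` such that for all `t' ≥ t` the total variation
distance of the `t'`-step distribution from `π` is at most `ε`, from every start. -/
noncomputable def mixingTime {S : Type} [Fintype S] [DecidableEq S]
    (P : Matrix S S ℝ) (π : S → ℝ) (ε : ℝ) : ℕ :=
  sInf {t : ℕ | ∀ t' : ℕ, t ≤ t' → ∀ x : S,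
    (1/2) * ∑ y : S, |(P ^ t') x y - π y| ≤ ε}

/-- The Metropolis chain with proposal kernel `Q` and target distribution `π`. -/
noncomputable def metropolis {S : Type} [Fintype S] [DecidableEq S]
    (Q : S → S → ℝ) (π : S → ℝ) : Matrix S S ℝ :=
  Matrix.of fun x y =>
    if y = x then 1 - ∑ z ∈ Finset.univ.erase x, Q x z * min 1 (π z / π x)
    else Q x y * min 1 (π y / π x)

/-- Off-diagonal transition rates of the simulated tempering chain. -/
noncomputable def temperingOff {S : Type} [Fintype S] [DecidableEq S] {M : ℕ}
    (Mk : Fin (M+1) → Matrix S S ℝ) (π : Fin (M+1) → S → ℝ)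
    (p q : S × Fin (M+1)) : ℝ :=
  (if q.2 = p.2 then (1/2) * Mk p.2 p.1 q.1 else 0) +
  (if q.1 = p.1 ∧ ((q.2 : ℕ) = (p.2 : ℕ) + 1 ∨ (q.2 : ℕ) + 1 = (p.2 : ℕ)) then
    (1/4) * min 1 (π q.2 p.1 / π p.2 p.1) else 0)

/-- The simulated tempering chain built from level Metropolis kernels `Mk` and
the tempering distributions `π`. -/
noncomputable def temperingChain {S : Type} [Fintype S] [DecidableEq S] {M : ℕ}
    (Mk : Fin (M+1) → Matrix S S ℝ) (π : Fin (M+1) → S → ℝ) :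
    Matrix (S × Fin (M+1)) (S × Fin (M+1)) ℝ :=
  Matrix.of fun p q =>
    if q = p then 1 - ∑ r ∈ Finset.univ.erase p, temperingOff Mk π p r
    else temperingOff Mk π p q

/-- Conductance of a chain `(P, π)`. -/
noncomputable def conductance {S : Type} [Fintype S] [DecidableEq S]
    (P : Matrix S S ℝ) (π : S → ℝ) : ℝ :=
  sInf {r : ℝ | ∃ A : Finset S, 0 < ∑ x ∈ A, π x ∧ (∑ x ∈ A, π x) ≤ 1/2 ∧
    r = (∑ x ∈ A, ∑ y ∈ Aᶜ, π x * P x y) / ∑ x ∈ A, π x}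

/-- Potts Hamiltonian. -/
def pottsH (n : ℕ) (x : Fin n → Fin 3) : ℕ :=
  (Finset.univ.filter (fun p : Fin n × Fin n => p.1 < p.2 ∧ x p.1 = x p.2)).card

/-- Gibbs distribution of the mean-field 3-state Potts model. -/
noncomputable def pottsGibbs (n : ℕ) (β : ℝ) (x : Fin n → Fin 3) : ℝ :=
  Real.exp (β * pottsH n x) / ∑ y : Fin n → Fin 3, Real.exp (β * pottsH n y)

/-- Proposal: recolor a uniformly random vertex with a uniformly random color. -/
noncomputable def pottsProp (n : ℕ) (x y : Fin n → Fin 3) : ℝ :=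
  ((Finset.univ.filter
    (fun vc : Fin n × Fin 3 => Function.update x vc.1 vc.2 = y)).card : ℝ) / (n * 3)


/-- Number of vertices of color `j`. -/
def colorCount (n : ℕ) (x : Fin n → Fin 3) (j : Fin 3) : ℕ :=
  (Finset.univ.filter (fun i => x i = j)).card

/-- The restricted state space `Ω_RGB = {x : σ₁(x) ≥ σ₂(x) ≥ σ₃(x)}`. -/
def RGBset (n : ℕ) : Finset (Fin n → Fin 3) :=
  Finset.univ.filter
    (fun x => colorCount n x 1 ≤ colorCount n x 0 ∧ colorCount n x 2 ≤ colorCount n x 1)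

/-- The Gibbs distribution at inverse temperature `β`, normalized on `Ω_RGB`. -/
noncomputable def gibbsRGB (n : ℕ) (β : ℝ) (x : ↥(RGBset n)) : ℝ :=
  Real.exp (β * pottsH n (x : Fin n → Fin 3)) /
    ∑ y : ↥(RGBset n), Real.exp (β * pottsH n (y : Fin n → Fin 3))

/-- The recoloring proposal restricted to `Ω_RGB` (moves leaving `Ω_RGB` are
rejected, contributing to the holding probability of the Metropolis chain). -/
noncomputable def propRGB (n : ℕ) (a b : ↥(RGBset n)) : ℝ :=
  pottsProp n (a : Fin n → Fin 3) (b : Fin n → Fin 3)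

end

/-! ### Reversible chains on a finite state space -/

/-- `P` is a stochastic matrix reversible with respect to the positive probability vector `π`. -/
structure RevChain {S : Type} [Fintype S] [DecidableEq S]
    (P : Matrix S S ℝ) (π : S → ℝ) : Prop where
  nonneg : ∀ x y, 0 ≤ P x y
  row : ∀ x, ∑ y, P x y = 1
  pos : ∀ x, 0 < π x
  tot : ∑ x, π x = 1
  rev : ∀ x y, π x * P x y = π y * P y x

/-- Twice the Dirichlet form of `(P, π)`. -/
noncomputable def energy {S : Type} [Fintype S] (P : Matrix S S ℝ) (π : S → ℝ) (f : S → ℝ) : ℝ :=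
  ∑ x, ∑ y, π x * P x y * (f x - f y) ^ 2

/-- Twice the variance of `f` under `π`. -/
noncomputable def vari {S : Type} [Fintype S] (π : S → ℝ) (f : S → ℝ) : ℝ :=
  ∑ x, ∑ y, π x * π y * (f x - f y) ^ 2

section generic
variable {S : Type} [Fintype S] [DecidableEq S] {P : Matrix S S ℝ} {π : S → ℝ}

omit [DecidableEq S] in
lemma vari_eq (hπ : ∑ x, π x = 1) (f : S → ℝ) :
    vari π f = 2 * (∑ x, π x * f x ^ 2 - (∑ x, π x * f x) ^ 2) := by
  have h1 : ∑ x, ∑ y, π x * π y * f x ^ 2 = ∑ x, π x * f x ^ 2 := by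
    refine sum_congr rfl fun x _ => ?_
    have : ∀ y, π x * π y * f x ^ 2 = (π x * f x ^ 2) * π y := fun y => by ring
    simp_rw [this, ← mul_sum, hπ, mul_one]
  have h2 : ∑ x, ∑ y, π x * π y * f y ^ 2 = ∑ x, π x * f x ^ 2 := by
    rw [sum_comm, ← h1]
    exact sum_congr rfl fun x _ => sum_congr rfl fun y _ => by ring
  have h3 : ∑ x, ∑ y, π x * f x * (π y * f y) = (∑ x, π x * f x) ^ 2 := by
    rw [sq, sum_mul_sum]
  have : vari π f = ∑ x, ∑ y, π x * π y * f x ^ 2 + ∑ x, ∑ y, π x * π y * f y ^ 2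
      - 2 * ∑ x, ∑ y, π x * f x * (π y * f y) := by
    unfold vari
    simp_rw [mul_sum, ← sum_add_distrib, ← sum_sub_distrib]
    exact sum_congr rfl fun x _ => sum_congr rfl fun y _ => by ring
  rw [this, h1, h2, h3]; ring

namespace RevChain

lemma sum_mul_col (h : RevChain P π) (g : S → ℝ) :
    ∑ x, ∑ y, π x * P x y * g y = ∑ x, π x * g x := by
  rw [sum_comm]
  refine sum_congr rfl fun y _ => ?_
  have : ∀ x, π x * P x y * g y = (π y * g y) * P y x := fun x => by rw [h.rev]; ring
  simp_rw [this, ← mul_sum, h.row, mul_one]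

lemma sum_mul_row (h : RevChain P π) (g : S → ℝ) :
    ∑ x, ∑ y, π x * P x y * g x = ∑ x, π x * g x := by
  refine sum_congr rfl fun x _ => ?_
  have : ∀ y, π x * P x y * g x = (π x * g x) * P x y := fun y => by ring
  simp_rw [this, ← mul_sum, h.row, mul_one]

lemma energy_eq (h : RevChain P π) (f : S → ℝ) :
    energy P π f = 2 * (∑ x, π x * f x ^ 2 - ∑ x, π x * f x * (P.mulVec f) x) := by
  have h3 : ∑ x, π x * f x * (P.mulVec f) x = ∑ x, ∑ y, π x * P x y * (f x * f y) := by
    refine sum_congr rfl fun x _ => ?_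
    simp only [Matrix.mulVec, dotProduct, mul_sum]
    exact sum_congr rfl fun y _ => by ring
  have : energy P π f = ∑ x, ∑ y, π x * P x y * f x ^ 2 + ∑ x, ∑ y, π x * P x y * f y ^ 2
      - 2 * ∑ x, ∑ y, π x * P x y * (f x * f y) := by
    unfold energy
    simp_rw [mul_sum, ← sum_add_distrib, ← sum_sub_distrib]
    exact sum_congr rfl fun x _ => sum_congr rfl fun y _ => by ring
  rw [this, h3, h.sum_mul_row (fun x => f x ^ 2), h.sum_mul_col (fun x => f x ^ 2)]; ring

lemma energy_nonneg (h : RevChain P π) (f : S → ℝ) : 0 ≤ energy P π f :=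
  sum_nonneg fun x _ => sum_nonneg fun y _ =>
    mul_nonneg (mul_nonneg (h.pos x).le (h.nonneg x y)) (sq_nonneg _)

lemma mean_mulVec (h : RevChain P π) (f : S → ℝ) :
    ∑ x, π x * (P.mulVec f) x = ∑ x, π x * f x := by
  rw [← h.sum_mul_col f]
  refine sum_congr rfl fun x _ => ?_
  simp only [Matrix.mulVec, dotProduct, mul_sum]
  exact sum_congr rfl fun y _ => by ring

/-- With holding probability at least `κ`, the operator `I - P` has spectrum in `[0, 2(1-κ)]`;
this is the quadratic-form version of that bound. -/
lemma sq_sub_mulVec_le (h : RevChain P π) {κ : ℝ} (hκ : ∀ x, κ ≤ P x x) (f : S → ℝ) :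
    ∑ x, π x * (f x - (P.mulVec f) x) ^ 2 ≤ (1 - κ) * energy P π f := by
  unfold energy
  rw [mul_sum]
  refine sum_le_sum fun x _ => ?_
  have e1 : f x - (P.mulVec f) x = ∑ y ∈ univ.erase x, P x y * (f x - f y) := by
    have : ∑ y ∈ univ.erase x, P x y * (f x - f y) = ∑ y, P x y * (f x - f y) := by
      rw [← add_sum_erase univ _ (mem_univ x)]; simp
    rw [this]
    simp_rw [mul_sub, sum_sub_distrib, ← sum_mul, h.row]
    simp [Matrix.mulVec, dotProduct]
  have e2 : ∑ y ∈ univ.erase x, P x y = 1 - P x x := by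
    rw [← h.row x, ← add_sum_erase univ _ (mem_univ x)]; ring
  have e3 : (∑ y ∈ univ.erase x, P x y * (f x - f y)) ^ 2 ≤
      (∑ y ∈ univ.erase x, P x y) * ∑ y ∈ univ.erase x, P x y * (f x - f y) ^ 2 :=
    sum_sq_le_sum_mul_sum_of_sq_le_mul _ (fun y _ => h.nonneg x y)
      (fun y _ => mul_nonneg (h.nonneg x y) (sq_nonneg _)) (fun y _ => le_of_eq (by ring))
  have e4 : ∑ y ∈ univ.erase x, P x y * (f x - f y) ^ 2 = ∑ y, P x y * (f x - f y) ^ 2 := by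
    rw [← add_sum_erase univ _ (mem_univ x)]; simp
  have e5 : 0 ≤ ∑ y, P x y * (f x - f y) ^ 2 :=
    sum_nonneg fun y _ => mul_nonneg (h.nonneg x y) (sq_nonneg _)
  rw [e1]
  rw [e2, e4] at e3
  have e6 : (∑ y ∈ univ.erase x, P x y * (f x - f y)) ^ 2 ≤
      (1 - κ) * ∑ y, P x y * (f x - f y) ^ 2 :=
    e3.trans (mul_le_mul_of_nonneg_right (by linarith [hκ x]) e5)
  calc _ ≤ π x * ((1 - κ) * ∑ y, P x y * (f x - f y) ^ 2) :=
        mul_le_mul_of_nonneg_left e6 (h.pos x).le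
    _ = _ := by
        rw [mul_left_comm, mul_sum]
        congr 1
        exact sum_congr rfl fun y _ => by ring

/-- One step of the chain contracts the variance when a Poincaré inequality holds. -/
lemma contraction (h : RevChain P π) {κ K : ℝ} (hκ0 : 0 ≤ κ) (hκ : ∀ x, κ ≤ P x x) (hK : 0 < K)
    (hP : ∀ f, vari π f ≤ K * energy P π f) (f : S → ℝ) (hf : ∑ x, π x * f x = 0) :
    ∑ x, π x * (P.mulVec f) x ^ 2 ≤ (1 - 2 * κ / K) * ∑ x, π x * f x ^ 2 := by
  have h1 := h.sq_sub_mulVec_le hκ f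
  have h2 := h.energy_eq f
  have h3 := hP f
  rw [vari_eq h.tot, hf] at h3
  have h4 : ∑ x, π x * (f x - (P.mulVec f) x) ^ 2 = ∑ x, π x * f x ^ 2
      - 2 * ∑ x, π x * f x * (P.mulVec f) x + ∑ x, π x * (P.mulVec f) x ^ 2 := by
    simp_rw [mul_sum, ← sum_sub_distrib, ← sum_add_distrib]
    exact sum_congr rfl fun x _ => by ring
  set A := ∑ x, π x * f x ^ 2
  set B := ∑ x, π x * (P.mulVec f) x ^ 2
  set E := energy P π f
  have h5 : κ * (2 * A / K) ≤ κ * E := by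
    apply mul_le_mul_of_nonneg_left _ hκ0
    rw [div_le_iff₀ hK]; linarith
  have : 2 * κ / K * A = κ * (2 * A / K) := by ring
  rw [sub_mul, this]
  nlinarith

lemma pow_row (h : RevChain P π) (t : ℕ) (x : S) : ∑ y, (P ^ t) x y = 1 := by
  induction t with
  | zero => simp [Matrix.one_apply]
  | succ t ih =>
    simp_rw [pow_succ, Matrix.mul_apply]
    rw [sum_comm]
    simp_rw [← mul_sum, h.row, mul_one, ih]

/-- Exponential `L²` convergence from a Poincaré inequality. -/
lemma tv_le (h : RevChain P π) {κ K : ℝ} (hκ0 : 0 ≤ κ) (hκ : ∀ x, κ ≤ P x x) (hK : 0 < K)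
    (hP : ∀ f, vari π f ≤ K * energy P π f) (hθ : 2 * κ / K ≤ 1) (t : ℕ) (x : S) :
    (∑ y, |(P ^ t) x y - π y|) ^ 2 ≤ (1 - 2 * κ / K) ^ t / π x := by
  have key : ∀ t : ℕ, ∑ y, π y * ((P ^ t) x y / π y - 1) ^ 2 ≤ (1 - 2 * κ / K) ^ t / π x := by
    intro t
    induction t with
    | zero =>
      have e : ∀ y, π y * ((P ^ 0) x y / π y - 1) ^ 2 =
          (if x = y then 1 / π x else 0) - 2 * (if x = y then 1 else 0) + π y := by
        intro y
        have := (h.pos y).ne'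
        by_cases hxy : x = y
        · subst hxy
          simp only [pow_zero, Matrix.one_apply_eq, if_true]
          field_simp
          ring
        · simp [hxy]
      simp_rw [e, sum_add_distrib, sum_sub_distrib, ← mul_sum, h.tot]
      simp
      linarith
    | succ t ih =>
      set g : S → ℝ := fun y => (P ^ t) x y / π y - 1
      have hg : ∑ y, π y * g y = 0 := by
        have : ∀ y, π y * g y = (P ^ t) x y - π y := fun y => by
          have := (h.pos y).ne'
          simp only [g]; field_simp
        simp_rw [this, sum_sub_distrib, h.pow_row, h.tot, sub_self]
      have hs : ∀ y, (P ^ (t + 1)) x y / π y - 1 = (P.mulVec g) y := by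
        intro y
        have e1 : (P.mulVec g) y = ∑ z, P y z * ((P ^ t) x z / π z) - 1 := by
          simp only [Matrix.mulVec, dotProduct, g, mul_sub, sum_sub_distrib, mul_one, h.row]
        rw [e1, pow_succ, Matrix.mul_apply, sum_div]
        congr 1
        refine sum_congr rfl fun z _ => ?_
        have h1 := (h.pos y).ne'
        have h2 := (h.pos z).ne'
        have h3 := h.rev y z
        generalize (P ^ t) x z = q
        field_simp
        linear_combination (-q) * h3
      simp_rw [hs]
      calc _ ≤ (1 - 2 * κ / K) * ∑ y, π y * g y ^ 2 := h.contraction hκ0 hκ hK hP g hg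
        _ ≤ (1 - 2 * κ / K) * ((1 - 2 * κ / K) ^ t / π x) :=
            mul_le_mul_of_nonneg_left ih (by linarith)
        _ = _ := by rw [pow_succ]; ring
  refine le_trans ?_ (key t)
  have e3 : (∑ y, |(P ^ t) x y - π y|) ^ 2 ≤
      (∑ y, π y) * ∑ y, π y * ((P ^ t) x y / π y - 1) ^ 2 := by
    refine sum_sq_le_sum_mul_sum_of_sq_le_mul _ (fun y _ => (h.pos y).le)
      (fun y _ => mul_nonneg (h.pos y).le (sq_nonneg _)) (fun y _ => le_of_eq ?_)
    have := (h.pos y).ne'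
    rw [sq_abs]; field_simp
  rwa [h.tot, one_mul] at e3

/-- A Poincaré inequality with constant `K` bounds the mixing time. -/
lemma mixingTime_le (h : RevChain P π) {κ K : ℝ} (hκ0 : 0 < κ) (hκ : ∀ x, κ ≤ P x x) (hK : 0 < K)
    (hP : ∀ f, vari π f ≤ K * energy P π f) (hθ : 2 * κ / K ≤ 1) {B : ℝ}
    (hB : ∀ x, Real.exp (-B) ≤ π x) (hB0 : 0 ≤ B) {ε : ℝ} (hε : 0 < ε) (hε1 : ε < 1) :
    (∃ t, ∀ t' : ℕ, t ≤ t' → ∀ x : S, (1/2) * ∑ y : S, |(P ^ t') x y - π y| ≤ ε) ∧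
    (mixingTime P π ε : ℝ) ≤ K / (2 * κ) * (2 * Real.log (1 / ε) + B) + 1 := by
  set R := K / (2 * κ) * (2 * Real.log (1 / ε) + B) with hR
  have hL : 0 ≤ Real.log (1 / ε) := Real.log_nonneg (by rw [le_div_iff₀ hε]; linarith)
  have hR0 : 0 ≤ R := by positivity
  have main : ∀ t' : ℕ, ⌈R⌉₊ ≤ t' → ∀ x : S, (1/2) * ∑ y : S, |(P ^ t') x y - π y| ≤ ε := by
    intro t ht x
    have ht' : R ≤ t := (Nat.le_ceil R).trans (by exact_mod_cast ht)
    have h1 := h.tv_le hκ0.le hκ hK hP hθ t x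
    have h2 : (1 - 2 * κ / K) ^ t ≤ Real.exp (-(2 * κ / K) * t) := by
      rw [mul_comm (-(2 * κ / K)), Real.exp_nat_mul]
      exact pow_le_pow_left₀ (by linarith) (by linarith [Real.add_one_le_exp (-(2 * κ / K))]) t
    have h3 : (1 - 2 * κ / K) ^ t ≤ ε ^ 2 * π x := by
      have : 2 * Real.log (1 / ε) + B ≤ 2 * κ / K * t := by
        have := mul_le_mul_of_nonneg_left ht' (show 0 ≤ 2 * κ / K by positivity)
        rw [hR] at this
        calc _ = 2 * κ / K * (K / (2 * κ) * (2 * Real.log (1 / ε) + B)) := by field_simp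
          _ ≤ _ := this
      calc _ ≤ Real.exp (-(2 * κ / K) * t) := h2
        _ ≤ Real.exp (2 * Real.log ε + (-B)) := by
            apply Real.exp_le_exp.mpr
            rw [one_div, Real.log_inv] at this
            linarith
        _ = ε ^ 2 * Real.exp (-B) := by
            rw [Real.exp_add, two_mul, Real.exp_add, Real.exp_log hε, sq]
        _ ≤ _ := mul_le_mul_of_nonneg_left (hB x) (by positivity)
    have h4 : (∑ y, |(P ^ t) x y - π y|) ^ 2 ≤ ε ^ 2 :=
      h1.trans (by rw [div_le_iff₀ (h.pos x)]; exact h3)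
    have h5 := abs_le_of_sq_le_sq h4 hε.le
    have h6 := le_abs_self (∑ y, |(P ^ t) x y - π y|)
    linarith
  refine ⟨⟨_, main⟩, ?_⟩
  have : mixingTime P π ε ≤ ⌈R⌉₊ := Nat.sInf_le main
  calc (mixingTime P π ε : ℝ) ≤ (⌈R⌉₊ : ℝ) := by exact_mod_cast this
    _ ≤ R + 1 := (Nat.ceil_lt_add_one hR0).le

/-- An irreducible chain satisfies a Poincaré inequality with some constant. -/
lemma exists_poincare (h : RevChain P π)
    (hc : ∀ x y, Relation.ReflTransGen (fun a b => 0 < P a b) x y) :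
    ∃ K : ℝ, 2 ≤ K ∧ ∀ f, vari π f ≤ K * energy P π f := by
  have h1 : ∀ x y, ∃ C : ℝ, 0 ≤ C ∧ ∀ f : S → ℝ, (f x - f y) ^ 2 ≤ C * energy P π f := by
    intro x y
    induction hc x y with
    | refl => exact ⟨0, le_rfl, fun f => by simp⟩
    | @tail b c _ hbc ih =>
      obtain ⟨C, hC, hCf⟩ := ih
      have hp : 0 < π b * P b c := mul_pos (h.pos b) hbc
      refine ⟨2 * C + 2 / (π b * P b c), by positivity, fun f => ?_⟩
      have e : π b * P b c * (f b - f c) ^ 2 ≤ energy P π f := by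
        have nn : ∀ u v, 0 ≤ π u * P u v * (f u - f v) ^ 2 := fun u v =>
          mul_nonneg (mul_nonneg (h.pos u).le (h.nonneg u v)) (sq_nonneg _)
        calc _ ≤ ∑ v, π b * P b v * (f b - f v) ^ 2 :=
              single_le_sum (f := fun v => π b * P b v * (f b - f v) ^ 2)
                (fun v _ => nn b v) (mem_univ c)
          _ ≤ _ := single_le_sum (f := fun u => ∑ v, π u * P u v * (f u - f v) ^ 2)
                (fun u _ => sum_nonneg fun v _ => nn u v) (mem_univ b)
      have e2 : (f b - f c) ^ 2 ≤ energy P π f / (π b * P b c) := by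
        rw [le_div_iff₀ hp]; linarith
      have e3 := hCf f
      have e4 : (2 * C + 2 / (π b * P b c)) * energy P π f =
        2 * (C * energy P π f) + 2 * (energy P π f / (π b * P b c)) := by ring
      rw [e4]
      nlinarith [sq_nonneg ((f x - f b) - (f b - f c))]
  choose C hC hCf using h1
  have hs : 0 ≤ ∑ x, ∑ y, π x * π y * C x y := sum_nonneg fun x _ => sum_nonneg fun y _ =>
    mul_nonneg (mul_nonneg (h.pos x).le (h.pos y).le) (hC x y)
  refine ⟨2 + ∑ x, ∑ y, π x * π y * C x y, by linarith, fun f => ?_⟩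
  have : vari π f ≤ (∑ x, ∑ y, π x * π y * C x y) * energy P π f := by
    simp_rw [vari, sum_mul]
    refine sum_le_sum fun x _ => sum_le_sum fun y _ => ?_
    rw [mul_assoc (π x * π y)]
    exact mul_le_mul_of_nonneg_left (hCf x y f) (mul_nonneg (h.pos x).le (h.pos y).le)
  nlinarith [h.energy_nonneg f]

lemma pow_rev (h : RevChain P π) (t : ℕ) (x y : S) :
    π x * (P ^ t) x y = π y * (P ^ t) y x := by
  induction t generalizing x y with
  | zero =>
    by_cases hxy : x = y
    · subst hxy; rfl
    · simp [hxy, Ne.symm hxy]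
  | succ t ih =>
    rw [pow_succ, Matrix.mul_apply, ← pow_succ, pow_succ', Matrix.mul_apply, mul_sum, mul_sum]
    refine sum_congr rfl fun z _ => ?_
    have h1 := ih x z
    have h2 := h.rev z y
    generalize (P ^ t) x z = q at *
    generalize (P ^ t) z x = r at *
    generalize P z y = u at *
    generalize P y z = v at *
    linear_combination u * h1 + r * h2

/-- `⟨f, P^(2^k) f⟩ ≥ (1-γ)^(2^k) ⟨f, f⟩`, by repeated Cauchy–Schwarz. -/
lemma pow_two_inner_ge (h : RevChain P π) (f : S → ℝ) {γ : ℝ} (hγ1 : γ ≤ 1)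
    (h0 : 0 < ∑ x, π x * f x ^ 2)
    (h1 : (1 - γ) * ∑ x, π x * f x ^ 2 ≤ ∑ x, π x * f x * (P.mulVec f) x) (k : ℕ) :
    (1 - γ) ^ (2 ^ k) * ∑ x, π x * f x ^ 2 ≤
      ∑ x, π x * f x * ((P ^ (2 ^ k)).mulVec f) x := by
  induction k with
  | zero => simpa using h1
  | succ k ih =>
    set s := 2 ^ k
    set a := ∑ x, π x * f x ^ 2
    set g := (P ^ s).mulVec f with hg
    have e1 : (P ^ (2 ^ (k + 1))).mulVec f = (P ^ s).mulVec g := by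
      rw [hg, Matrix.mulVec_mulVec, ← pow_add]; congr 2; simp only [s]; ring
    have e2 : ∑ x, π x * f x * ((P ^ s).mulVec g) x = ∑ x, π x * g x ^ 2 := by
      have l : ∀ x, π x * f x * ((P ^ s).mulVec g) x =
          ∑ y, π x * (P ^ s) x y * (f x * g y) := by
        intro x
        simp only [Matrix.mulVec, dotProduct, mul_sum]
        exact sum_congr rfl fun y _ => by ring
      have r : ∀ y, π y * g y ^ 2 = ∑ x, π y * (P ^ s) y x * (f x * g y) := by
        intro y
        rw [sq]
        nth_rewrite 1 [hg]
        simp only [Matrix.mulVec, dotProduct, mul_sum, sum_mul]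
        exact sum_congr rfl fun x _ => by ring
      simp_rw [l, r]
      rw [sum_comm]
      exact sum_congr rfl fun y _ => sum_congr rfl fun x _ => by rw [h.pow_rev]
    have e3 : (∑ x, π x * f x * g x) ^ 2 ≤ a * ∑ x, π x * g x ^ 2 :=
      sum_sq_le_sum_mul_sum_of_sq_le_mul _ (fun y _ => mul_nonneg (h.pos y).le (sq_nonneg _))
        (fun y _ => mul_nonneg (h.pos y).le (sq_nonneg _)) (fun y _ => le_of_eq (by ring))
    rw [e1, e2]
    have e4 : ((1 - γ) ^ s * a) ^ 2 ≤ (∑ x, π x * f x * g x) ^ 2 :=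
      pow_le_pow_left₀ (mul_nonneg (pow_nonneg (by linarith) _) h0.le) ih 2
    have e5 : (1 - γ) ^ (2 ^ (k + 1)) = ((1 - γ) ^ s) ^ 2 := by
      rw [← pow_mul, pow_succ]
    rw [e5]
    have e6 : a * (((1 - γ) ^ s) ^ 2 * a) ≤ a * ∑ x, π x * g x ^ 2 := by nlinarith
    exact le_of_mul_le_mul_left e6 h0

/-- A bottleneck forces slow mixing: if the flow out of `A` is at most `γ π(A) π(Aᶜ)`, the mixing
time is at least `log (1/ε) / (8γ)`, provided the chain converges at all (`hne`). -/
lemma le_mixingTime (h : RevChain P π) (A : Finset S) {γ ε : ℝ} (hγ0 : 0 < γ) (hγ : γ ≤ 1 / 4)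
    (hA0 : 0 < ∑ x ∈ A, π x) (hA1 : ∑ x ∈ A, π x < 1)
    (hflow : ∑ x ∈ A, ∑ y ∈ Aᶜ, π x * P x y ≤ γ * ((∑ x ∈ A, π x) * (1 - ∑ x ∈ A, π x)))
    (hε : 0 < ε) (hε1 : ε < 1 / 4)
    (hne : ∃ t, ∀ t' : ℕ, t ≤ t' → ∀ x : S, (1/2) * ∑ y : S, |(P ^ t') x y - π y| ≤ ε) :
    Real.log (1 / ε) / (8 * γ) ≤ mixingTime P π ε := by
  set p := ∑ x ∈ A, π x with hp
  set ind : S → ℝ := fun x => if x ∈ A then 1 else 0 with hind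
  set f : S → ℝ := fun x => ind x - p with hf
  have hsum : ∑ x, π x * ind x = p := by simp [hind, hp]
  have hmean : ∑ x, π x * f x = 0 := by
    simp only [hf, mul_sub, sum_sub_distrib, hsum, ← sum_mul, h.tot]; ring
  have ha0 : ∑ x, π x * f x ^ 2 = p * (1 - p) := by
    have : ∀ x, π x * f x ^ 2 = (1 - 2 * p) * (π x * ind x) + p ^ 2 * π x := by
      intro x; simp only [hf, hind]; split_ifs <;> ring
    simp_rw [this, sum_add_distrib, ← mul_sum, hsum, h.tot]; ring
  have habs : ∑ x, π x * |f x| = 2 * (p * (1 - p)) := by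
    have : ∀ x, π x * |f x| = (1 - 2 * p) * (π x * ind x) + p * π x := by
      intro x; simp only [hf, hind]; split_ifs
      · rw [abs_of_pos (by linarith)]; ring
      · rw [abs_of_neg (by linarith)]; ring
    simp_rw [this, sum_add_distrib, ← mul_sum, hsum, h.tot]; ring
  have hpos : 0 < p * (1 - p) := mul_pos hA0 (by linarith)
  have hE : energy P π f = 2 * ∑ x ∈ A, ∑ y ∈ Aᶜ, π x * P x y := by
    have e1 : energy P π f = ∑ x, ∑ y, ((if x ∈ A then (if y ∈ Aᶜ then π x * P x y else 0) else 0)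
        + (if y ∈ A then (if x ∈ Aᶜ then π y * P y x else 0) else 0)) := by
      refine sum_congr rfl fun x _ => sum_congr rfl fun y _ => ?_
      by_cases hx : x ∈ A <;> by_cases hy : y ∈ A <;> simp [hf, hind, hx, hy, h.rev x y]
      rw [show (-p - (1 - p)) ^ 2 = 1 by ring, mul_one]
    have e2 : ∑ x ∈ A, ∑ y ∈ Aᶜ, π x * P x y =
        ∑ x, ∑ y, (if x ∈ A then (if y ∈ Aᶜ then π x * P x y else 0) else 0) := by
      have aux : ∀ (B : Finset S) (g : S → ℝ), ∑ x ∈ B, g x = ∑ x, if x ∈ B then g x else 0 := by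
        intro B g; simp [sum_ite_mem]
      rw [aux A]
      refine sum_congr rfl fun x _ => ?_
      by_cases hx : x ∈ A
      · simp only [hx, if_true]; exact aux _ _
      · simp [hx]
    rw [e1, e2]
    simp_rw [sum_add_distrib]
    rw [two_mul]
    congr 1
    rw [sum_comm]
  have hstep : (1 - γ) * ∑ x, π x * f x ^ 2 ≤ ∑ x, π x * f x * (P.mulVec f) x := by
    have e := h.energy_eq f
    rw [hE] at e
    rw [ha0] at e ⊢
    linarith
  -- every power of two at or beyond the mixing time satisfies `(1-γ)^(2^k) ≤ 2ε`
  have hdecay : ∀ k : ℕ, (∀ x : S, (1/2) * ∑ y : S, |(P ^ (2 ^ k)) x y - π y| ≤ ε) →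
      (1 - γ) ^ (2 ^ k) ≤ 2 * ε := by
    intro k hk
    have e1 := h.pow_two_inner_ge f (by linarith) (by rw [ha0]; exact hpos) hstep k
    rw [ha0] at e1
    have e2 : ∀ x, |((P ^ (2 ^ k)).mulVec f) x| ≤ ε := by
      intro x
      have s1 : ((P ^ (2 ^ k)).mulVec f) x = ∑ y ∈ A, ((P ^ (2 ^ k)) x y - π y) := by
        simp only [Matrix.mulVec, dotProduct, hf, mul_sub, sum_sub_distrib, ← sum_mul, h.pow_row]
        simp [hind, hp]
      have s2 : ∑ y ∈ A, ((P ^ (2 ^ k)) x y - π y) + ∑ y ∈ Aᶜ, ((P ^ (2 ^ k)) x y - π y) = 0 := by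
        rw [sum_add_sum_compl, sum_sub_distrib, h.pow_row, h.tot, sub_self]
      have s3 := abs_sum_le_sum_abs (fun y => (P ^ (2 ^ k)) x y - π y) A
      have s4 := abs_sum_le_sum_abs (fun y => (P ^ (2 ^ k)) x y - π y) Aᶜ
      have s5 := sum_add_sum_compl A (fun y => |(P ^ (2 ^ k)) x y - π y|)
      have s6 : |∑ y ∈ Aᶜ, ((P ^ (2 ^ k)) x y - π y)| = |∑ y ∈ A, ((P ^ (2 ^ k)) x y - π y)| := by
        rw [← abs_neg]; congr 1; linarith
      have s7 := hk x
      rw [s1]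
      linarith
    have e3 : ∑ x, π x * f x * ((P ^ (2 ^ k)).mulVec f) x ≤ ε * (2 * (p * (1 - p))) := by
      rw [← habs, mul_sum]
      refine sum_le_sum fun x _ => ?_
      calc _ ≤ |π x * f x * ((P ^ (2 ^ k)).mulVec f) x| := le_abs_self _
        _ = π x * |f x| * |((P ^ (2 ^ k)).mulVec f) x| := by
            rw [abs_mul, abs_mul, abs_of_pos (h.pos x)]
        _ ≤ π x * |f x| * ε := mul_le_mul_of_nonneg_left (e2 x)
            (mul_nonneg (h.pos x).le (abs_nonneg _))
        _ = _ := by ring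
    have e4 : (1 - γ) ^ (2 ^ k) * (p * (1 - p)) ≤ 2 * ε * (p * (1 - p)) := by linarith
    exact le_of_mul_le_mul_right e4 hpos
  have hmem : ∀ t' : ℕ, mixingTime P π ε ≤ t' →
      ∀ x : S, (1/2) * ∑ y : S, |(P ^ t') x y - π y| ≤ ε := Nat.sInf_mem hne
  set T := mixingTime P π ε
  have hT : T ≠ 0 := by
    intro h0
    have := hdecay 0 (hmem _ (by omega))
    simp only [pow_zero, pow_one] at this
    linarith
  obtain ⟨k, hk1, hk2⟩ : ∃ k : ℕ, T ≤ 2 ^ k ∧ 2 ^ k ≤ 2 * T := by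
    refine ⟨Nat.log 2 T + 1, (Nat.lt_pow_succ_log_self (by norm_num) T).le, ?_⟩
    have := Nat.pow_log_le_self 2 hT
    rw [pow_succ]; omega
  have h6 := hdecay k (hmem _ hk1)
  have h7 : Real.exp (-(2 * γ)) ≤ 1 - γ := by
    have e1 : 1 + 2 * γ ≤ Real.exp (2 * γ) := by linarith [Real.add_one_le_exp (2 * γ)]
    rw [Real.exp_neg, inv_le_comm₀ (Real.exp_pos _) (by linarith)]
    refine le_trans ?_ e1
    rw [inv_le_iff_one_le_mul₀ (by linarith)]
    nlinarith
  have h8 : Real.exp (-(2 * γ) * (2 ^ k : ℕ)) ≤ 2 * ε := by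
    rw [mul_comm, Real.exp_nat_mul]
    exact (pow_le_pow_left₀ (Real.exp_pos _).le h7 _).trans h6
  have h9 : -(2 * γ) * (2 ^ k : ℕ) ≤ Real.log 2 + Real.log ε := by
    rw [← Real.log_mul (by norm_num) hε.ne']
    exact (Real.le_log_iff_exp_le (by positivity)).mpr h8
  have h10 : 2 * Real.log 2 ≤ Real.log (1 / ε) := by
    have : (2 : ℝ) * Real.log 2 = Real.log 4 := by
      rw [show (4 : ℝ) = 2 ^ 2 by norm_num, Real.log_pow]; norm_num
    rw [this]
    apply Real.log_le_log (by norm_num)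
    rw [le_div_iff₀ hε]; linarith
  have h11 : ((2 ^ k : ℕ) : ℝ) ≤ 2 * T := by exact_mod_cast hk2
  have h12 : Real.log ε = -Real.log (1 / ε) := by rw [one_div, Real.log_inv, neg_neg]
  rw [div_le_iff₀ (by positivity)]
  nlinarith

end RevChain
end generic

/-! ### Metropolis and simulated tempering chains -/

section metro
variable {S : Type} [Fintype S] [DecidableEq S]

lemma mul_min_one_div {a b : ℝ} (ha : 0 < a) : a * min 1 (b / a) = min a b := by
  rw [mul_min_of_nonneg _ _ ha.le, mul_one, mul_div_cancel₀ _ ha.ne']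

lemma metropolis_revChain {Q : S → S → ℝ} {π : S → ℝ} (hQ : ∀ x y, 0 ≤ Q x y)
    (hQs : ∀ x y, Q x y = Q y x) (hQ1 : ∀ x, ∑ z ∈ univ.erase x, Q x z ≤ 2 / 3)
    (hπ : ∀ x, 0 < π x) (hπ1 : ∑ x, π x = 1) :
    RevChain (metropolis Q π) π ∧ ∀ x, 1 / 3 ≤ metropolis Q π x x := by
  have hold : ∀ x, 1 / 3 ≤ metropolis Q π x x := by
    intro x
    simp only [metropolis, Matrix.of_apply, if_true]
    have : ∑ z ∈ univ.erase x, Q x z * min 1 (π z / π x) ≤ ∑ z ∈ univ.erase x, Q x z :=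
      sum_le_sum fun z _ => mul_le_of_le_one_right (hQ x z) (min_le_left _ _)
    linarith [hQ1 x]
  refine ⟨⟨?_, ?_, hπ, hπ1, ?_⟩, hold⟩
  · intro x y
    by_cases hxy : y = x
    · subst hxy; linarith [hold y]
    · simp only [metropolis, Matrix.of_apply, hxy, if_false]
      exact mul_nonneg (hQ x y) (le_min zero_le_one (div_pos (hπ y) (hπ x)).le)
  · intro x
    rw [← add_sum_erase univ _ (mem_univ x)]
    have : ∑ z ∈ univ.erase x, metropolis Q π x z =
        ∑ z ∈ univ.erase x, Q x z * min 1 (π z / π x) := by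
      refine sum_congr rfl fun z hz => ?_
      simp [metropolis, ne_of_mem_erase hz]
    rw [this]
    simp [metropolis]
  · intro x y
    by_cases hxy : y = x
    · subst hxy; rfl
    · simp only [metropolis, Matrix.of_apply, hxy, Ne.symm hxy, if_false]
      rw [mul_left_comm, mul_left_comm (π y), mul_min_one_div (hπ x), mul_min_one_div (hπ y),
        hQs, min_comm]

variable {M : ℕ} {Mk : Fin (M + 1) → Matrix S S ℝ} {π : Fin (M + 1) → S → ℝ}

lemma temperingOff_nonneg (h : ∀ i, RevChain (Mk i) (π i)) (p q : S × Fin (M + 1)) :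
    0 ≤ temperingOff Mk π p q := by
  unfold temperingOff
  refine add_nonneg ?_ ?_ <;> split_ifs
  · exact mul_nonneg (by norm_num) ((h _).nonneg _ _)
  · exact le_rfl
  · exact mul_nonneg (by norm_num) (le_min zero_le_one (div_pos ((h _).pos _) ((h _).pos _)).le)
  · exact le_rfl

lemma sum_temperingOff_le (h : ∀ i, RevChain (Mk i) (π i)) (hh : ∀ i x, 1 / 3 ≤ Mk i x x)
    (p : S × Fin (M + 1)) :
    ∑ r ∈ univ.erase p, temperingOff Mk π p r ≤ 5 / 6 := by
  unfold temperingOff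
  rw [sum_add_distrib]
  have h1 : ∑ r ∈ univ.erase p, (if r.2 = p.2 then (1/2) * Mk p.2 p.1 r.1 else 0) ≤ 1 / 3 := by
    have e := add_sum_erase univ
      (fun r : S × Fin (M + 1) => if r.2 = p.2 then (1/2) * Mk p.2 p.1 r.1 else 0) (mem_univ p)
    have e2 : ∑ r : S × Fin (M + 1), (if r.2 = p.2 then (1/2) * Mk p.2 p.1 r.1 else 0) = 1 / 2 := by
      rw [Fintype.sum_prod_type]
      simp [← mul_sum, (h p.2).row]
    rw [e2] at e
    simp only [if_true] at e
    linarith [hh p.2 p.1]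
  have h2 : ∑ r ∈ univ.erase p, (if r.1 = p.1 ∧
      ((r.2 : ℕ) = (p.2 : ℕ) + 1 ∨ (r.2 : ℕ) + 1 = (p.2 : ℕ)) then
      (1/4) * min 1 (π r.2 p.1 / π p.2 p.1) else 0) ≤ 1 / 2 := by
    set F := univ.filter (fun r : S × Fin (M + 1) => r.1 = p.1 ∧
      ((r.2 : ℕ) = (p.2 : ℕ) + 1 ∨ (r.2 : ℕ) + 1 = (p.2 : ℕ)))
    have hc : F.card ≤ 2 := by
      refine (card_le_card_of_injOn (t := {(p.2 : ℕ) + 1, (p.2 : ℕ) - 1})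
        (fun r => (r.2 : ℕ)) ?_ ?_).trans card_le_two
      · intro r hr
        simp only [F, coe_filter, mem_univ, true_and, Set.mem_ofPred_eq] at hr
        simp only [coe_insert, coe_singleton, Set.mem_insert_iff, Set.mem_singleton_iff]
        omega
      · intro r hr s hs hrs
        simp only [F, coe_filter, mem_univ, true_and, Set.mem_ofPred_eq] at hr hs
        exact Prod.ext (hr.1.trans hs.1.symm) (Fin.ext hrs)
    calc _ ≤ ∑ r ∈ univ.erase p, (if r.1 = p.1 ∧
            ((r.2 : ℕ) = (p.2 : ℕ) + 1 ∨ (r.2 : ℕ) + 1 = (p.2 : ℕ)) then (1/4 : ℝ) else 0) := by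
          refine sum_le_sum fun r _ => ?_
          split_ifs
          · linarith [min_le_left 1 (π r.2 p.1 / π p.2 p.1)]
          · exact le_rfl
      _ ≤ ∑ r : S × Fin (M + 1), (if r.1 = p.1 ∧
            ((r.2 : ℕ) = (p.2 : ℕ) + 1 ∨ (r.2 : ℕ) + 1 = (p.2 : ℕ)) then (1/4 : ℝ) else 0) :=
          sum_le_sum_of_subset_of_nonneg (subset_univ _) fun r _ _ => by split_ifs <;> norm_num
      _ = F.card * (1/4) := by rw [← sum_filter, sum_const, nsmul_eq_mul]
      _ ≤ _ := by
          have : (F.card : ℝ) ≤ 2 := by exact_mod_cast hc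
          linarith
  linarith

lemma tempering_revChain (h : ∀ i, RevChain (Mk i) (π i)) (hh : ∀ i x, 1 / 3 ≤ Mk i x x) :
    RevChain (temperingChain Mk π) (fun p => π p.2 p.1 / (M + 1)) ∧
      ∀ p, 1 / 6 ≤ temperingChain Mk π p p := by
  have hM : (0 : ℝ) < M + 1 := by positivity
  have hold : ∀ p, 1 / 6 ≤ temperingChain Mk π p p := by
    intro p
    simp only [temperingChain, Matrix.of_apply, if_true]
    linarith [sum_temperingOff_le h hh p]
  refine ⟨⟨?_, ?_, ?_, ?_, ?_⟩, hold⟩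
  · intro p q
    by_cases hpq : q = p
    · subst hpq; linarith [hold q]
    · simp only [temperingChain, Matrix.of_apply, hpq, if_false]
      exact temperingOff_nonneg h p q
  · intro p
    rw [← add_sum_erase univ _ (mem_univ p)]
    have : ∑ z ∈ univ.erase p, temperingChain Mk π p z =
        ∑ z ∈ univ.erase p, temperingOff Mk π p z := by
      refine sum_congr rfl fun z hz => ?_
      simp [temperingChain, ne_of_mem_erase hz]
    rw [this]
    simp [temperingChain]
  · intro p
    exact div_pos ((h _).pos _) hM
  · rw [Fintype.sum_prod_type_right]
    simp_rw [← sum_div, (h _).tot]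
    simp only [sum_const, card_univ, Fintype.card_fin, nsmul_eq_mul]
    push_cast
    rw [mul_one, div_self hM.ne']
  · intro p q
    by_cases hpq : q = p
    · subst hpq; rfl
    · simp only [temperingChain, Matrix.of_apply, hpq, Ne.symm hpq, if_false]
      obtain ⟨x, i⟩ := p
      obtain ⟨y, j⟩ := q
      simp only [temperingOff]
      by_cases hij : j = i
      · subst hij
        have := (h j).rev x y
        simp only [if_true, left_eq_add, Nat.one_ne_zero, add_eq_left, or_false, and_false, if_false,
          add_zero]
        field_simp
        linarith
      · simp only [hij, Ne.symm hij, if_false, zero_add]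
        by_cases hxy : y = x
        · subst hxy
          have e1 := mul_min_one_div (b := π j y) ((h i).pos y)
          have e2 := mul_min_one_div (b := π i y) ((h j).pos y)
          rw [min_comm (π j y)] at e2
          by_cases hc : (j : ℕ) = (i : ℕ) + 1 ∨ (j : ℕ) + 1 = (i : ℕ)
          · have hc' : (i : ℕ) = (j : ℕ) + 1 ∨ (i : ℕ) + 1 = (j : ℕ) := by omega
            simp only [hc, hc', and_self, if_true]
            have : π i y * min 1 (π j y / π i y) = π j y * min 1 (π i y / π j y) := e1.trans e2.symm
            field_simp
            exact this
          · have hc' : ¬ ((i : ℕ) = (j : ℕ) + 1 ∨ (i : ℕ) + 1 = (j : ℕ)) := by omega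
            simp [hc, hc']
        · simp [hxy, Ne.symm hxy]

/-- The tempering chain inherits irreducibility from its level chains. -/
lemma tempering_connected (h : ∀ i, RevChain (Mk i) (π i))
    (hc : ∀ i x y, Relation.ReflTransGen (fun a b => 0 < Mk i a b) x y)
    (hold : ∀ p, 0 < temperingChain Mk π p p) (p q : S × Fin (M + 1)) :
    Relation.ReflTransGen (fun a b => 0 < temperingChain Mk π a b) p q := by
  have hlev : ∀ i x y, Relation.ReflTransGen (fun a b => 0 < temperingChain Mk π a b)
      ((x, i) : S × Fin (M + 1)) (y, i) := by
    intro i x y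
    refine Relation.ReflTransGen.lift (fun a => ((a, i) : S × Fin (M + 1))) ?_ x y (hc i x y)
    intro a b hab
    change 0 < temperingChain Mk π (a, i) (b, i)
    by_cases hba : ((b, i) : S × Fin (M + 1)) = (a, i)
    · rw [hba]; exact hold _
    · simp only [temperingChain, Matrix.of_apply, hba, if_false, temperingOff, if_true]
      have : 0 ≤ (if b = a ∧ ((i : ℕ) = (i : ℕ) + 1 ∨ (i : ℕ) + 1 = (i : ℕ)) then
        (1/4) * min 1 (π i a / π i a) else 0) := by simp
      linarith
  have hstep : ∀ (i j : Fin (M + 1)) (x : S), ((j : ℕ) = i + 1 ∨ (j : ℕ) + 1 = i) →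
      0 < temperingChain Mk π (x, i) (x, j) := by
    intro i j x hij
    have hne : j ≠ i := by rintro rfl; omega
    have hne' : ((x, j) : S × Fin (M + 1)) ≠ (x, i) := fun e => hne (Prod.ext_iff.mp e).2
    simp only [temperingChain, Matrix.of_apply, hne', if_false, temperingOff, hne, hij, and_self,
      if_true, zero_add]
    exact mul_pos (by norm_num) (lt_min one_pos (div_pos ((h j).pos x) ((h i).pos x)))
  have hdown : ∀ (k : ℕ) (hk : k < M + 1) (x : S),
      Relation.ReflTransGen (fun a b => 0 < temperingChain Mk π a b)
        ((x, ⟨k, hk⟩) : S × Fin (M + 1)) (x, 0) ∧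
      Relation.ReflTransGen (fun a b => 0 < temperingChain Mk π a b)
        ((x, 0) : S × Fin (M + 1)) (x, ⟨k, hk⟩) := by
    intro k
    induction k with
    | zero => intro hk x; exact ⟨.refl, .refl⟩
    | succ k ih =>
      intro hk x
      obtain ⟨h1, h2⟩ := ih (by omega) x
      exact ⟨.head (hstep _ _ x (Or.inr rfl)) h1, .tail h2 (hstep _ _ x (Or.inl rfl))⟩
  obtain ⟨x, i⟩ := p
  obtain ⟨y, j⟩ := q
  exact ((hdown i i.2 x).1.trans (hlev 0 x y)).trans (hdown j j.2 y).2

end metro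

/-! ### Color counts, color classes and the Hamiltonian -/

section potts
variable {n : ℕ}

lemma colorCount_update_new (x : Fin n → Fin 3) (v : Fin n) {c : Fin 3} (h : x v ≠ c) :
    colorCount n (Function.update x v c) c = colorCount n x c + 1 := by
  unfold colorCount
  have : univ.filter (fun i => Function.update x v c i = c) =
      insert v (univ.filter (fun i => x i = c)) := by
    ext i
    by_cases hi : i = v
    · subst hi; simp
    · simp [hi]
  rw [this, card_insert_of_notMem (by simpa using h)]

lemma colorCount_update_old (x : Fin n → Fin 3) (v : Fin n) {c : Fin 3} (h : x v ≠ c) :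
    colorCount n (Function.update x v c) (x v) + 1 = colorCount n x (x v) := by
  unfold colorCount
  have : univ.filter (fun i => x i = x v) =
      insert v (univ.filter (fun i => Function.update x v c i = x v)) := by
    ext i
    by_cases hi : i = v
    · subst hi; simp
    · simp [hi]
  rw [this, card_insert_of_notMem (by simpa using h.symm)]

lemma colorCount_update_other (x : Fin n → Fin 3) (v : Fin n) {c j : Fin 3} (h : j ≠ x v)
    (hc : j ≠ c) : colorCount n (Function.update x v c) j = colorCount n x j := by
  unfold colorCount
  congr 1
  ext i
  by_cases hi : i = v
  · subst hi; simp [h.symm, hc.symm]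
  · simp [hi]

lemma colorCount_update (x : Fin n → Fin 3) (v : Fin n) (c j : Fin 3) :
    colorCount n (Function.update x v c) j + (if j = x v then 1 else 0) =
      colorCount n x j + (if j = c then 1 else 0) := by
  by_cases h : x v = c
  · rw [← h, Function.update_eq_self]
  by_cases h1 : j = c
  · subst h1; simp [colorCount_update_new x v h, Ne.symm h]
  by_cases h2 : j = x v
  · subst h2; simpa [h1] using colorCount_update_old x v h
  · simp [h1, h2, colorCount_update_other x v h2 h1]

lemma colorCount_sum (x : Fin n → Fin 3) :
    colorCount n x 0 + colorCount n x 1 + colorCount n x 2 = n := by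
  have := card_eq_sum_card_fiberwise (f := x) (s := univ) (t := univ) (fun _ _ => mem_univ _)
  rw [Fin.sum_univ_three] at this
  simpa [colorCount] using this.symm

lemma colorCount_comp (x : Fin n → Fin 3) (τ : Equiv.Perm (Fin n)) :
    colorCount n (x ∘ τ) = colorCount n x := by
  funext j
  unfold colorCount
  refine card_bij (fun i _ => τ i) ?_ ?_ ?_
  · intro i hi; simpa using hi
  · intro i _ k _ h; exact τ.injective h
  · intro i hi; exact ⟨τ.symm i, by simpa using hi, by simp⟩

lemma two_mul_pottsH (x : Fin n → Fin 3) :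
    2 * pottsH n x + n = ∑ j, colorCount n x j ^ 2 := by
  have h1 : ∑ j, colorCount n x j ^ 2 =
      (univ.filter (fun p : Fin n × Fin n => x p.1 = x p.2)).card := by
    rw [card_eq_sum_card_fiberwise (f := fun p => x p.1) (t := univ) (fun _ _ => mem_univ _)]
    refine sum_congr rfl fun j _ => ?_
    rw [sq]
    unfold colorCount
    rw [← card_product]
    congr 1
    ext p
    simp only [mem_product, mem_filter, mem_univ, true_and]
    constructor
    · rintro ⟨a, b⟩; exact ⟨a.trans b.symm, a⟩
    · rintro ⟨a, b⟩; exact ⟨b, a ▸ b⟩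
  have h2 : univ.filter (fun p : Fin n × Fin n => x p.1 = x p.2) =
      (univ.filter (fun p : Fin n × Fin n => p.1 < p.2 ∧ x p.1 = x p.2) ∪
      univ.filter (fun p : Fin n × Fin n => p.2 < p.1 ∧ x p.1 = x p.2)) ∪
      univ.filter (fun p : Fin n × Fin n => p.1 = p.2) := by
    ext ⟨a, b⟩
    simp only [mem_union, mem_filter, mem_univ, true_and]
    rcases lt_trichotomy a b with h | h | h
    · simp [h, h.ne, h.not_gt]
    · simp [h]
    · simp [h, h.ne', h.not_gt]
  have h3 : (univ.filter (fun p : Fin n × Fin n => p.2 < p.1 ∧ x p.1 = x p.2)).card =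
      pottsH n x := by
    unfold pottsH
    refine card_bij (fun p _ => p.swap) ?_ ?_ ?_
    · rintro ⟨a, b⟩ h
      simp only [mem_filter, mem_univ, true_and, Prod.swap_prod_mk] at h ⊢
      exact ⟨h.1, h.2.symm⟩
    · intro p _ q _ h; exact Prod.swap_injective h
    · rintro ⟨a, b⟩ h
      simp only [mem_filter, mem_univ, true_and] at h
      exact ⟨(b, a), by simpa using ⟨h.1, h.2.symm⟩, rfl⟩
  have h4 : (univ.filter (fun p : Fin n × Fin n => p.1 = p.2)).card = n := by
    have : univ.filter (fun p : Fin n × Fin n => p.1 = p.2) = univ.map ⟨fun a => (a, a),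
        fun a b h => (Prod.ext_iff.mp h).1⟩ := by
      ext ⟨a, b⟩
      simp only [mem_filter, mem_univ, true_and, mem_map]
      exact ⟨fun h => ⟨a, Prod.ext rfl h⟩,
        fun ⟨_, h⟩ => (congrArg Prod.fst h).symm.trans (congrArg Prod.snd h)⟩
    rw [this, card_map, card_univ, Fintype.card_fin]
  rw [h1, h2, card_union_of_disjoint, card_union_of_disjoint, h3, h4]
  · unfold pottsH; ring
  · rw [disjoint_filter]; rintro ⟨a, b⟩ _ h h'; exact absurd h.1 h'.1.not_gt
  · rw [disjoint_left]
    rintro ⟨a, b⟩ h h'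
    simp only [mem_union, mem_filter, mem_univ, true_and] at h h'
    subst h'
    simp at h

lemma two_mul_pottsH_real (x : Fin n → Fin 3) :
    2 * (pottsH n x : ℝ) + n =
      (colorCount n x 0 : ℝ) ^ 2 + (colorCount n x 1 : ℝ) ^ 2 + (colorCount n x 2 : ℝ) ^ 2 := by
  have := two_mul_pottsH x
  rw [Fin.sum_univ_three] at this
  exact_mod_cast this

/-- The configurations with the same color counts as `x`. -/
def cls (n : ℕ) (x : Fin n → Fin 3) : Finset (Fin n → Fin 3) :=
  univ.filter (fun y => colorCount n y = colorCount n x)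

lemma mem_cls {x y : Fin n → Fin 3} : y ∈ cls n x ↔ colorCount n y = colorCount n x := by
  simp [cls]

lemma self_mem_cls (x : Fin n → Fin 3) : x ∈ cls n x := mem_cls.mpr rfl

lemma cls_congr {x y : Fin n → Fin 3} (h : colorCount n x = colorCount n y) :
    cls n x = cls n y := by
  simp [cls, h]

lemma pottsH_congr {x y : Fin n → Fin 3} (h : colorCount n x = colorCount n y) :
    pottsH n x = pottsH n y := by
  have h1 := two_mul_pottsH x
  have h2 := two_mul_pottsH y
  rw [h] at h1
  omega

lemma exists_perm {x y : Fin n → Fin 3} (h : colorCount n y = colorCount n x) :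
    ∃ τ : Equiv.Perm (Fin n), x ∘ τ = y := by
  have e : ∀ j, Nonempty ({a // y a = j} ≃ {b // x b = j}) := fun j => by
    rw [← Fintype.card_eq, Fintype.card_subtype, Fintype.card_subtype]
    exact congrFun h j
  refine ⟨Equiv.ofFiberEquiv (fun j => (e j).some), ?_⟩
  funext i
  exact Equiv.ofFiberEquiv_map _ i

/-- Orbit-stabilizer: each member of the class of `x` is `x ∘ τ` for `∏ⱼ σⱼ!` permutations `τ`. -/
lemma card_perm_eq {x y : Fin n → Fin 3} (h : colorCount n y = colorCount n x) :
    (univ.filter (fun τ : Equiv.Perm (Fin n) => x ∘ τ = y)).card =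
      ∏ j, (colorCount n x j).factorial := by
  obtain ⟨τ₀, rfl⟩ := exists_perm h
  have := DomMulAct.stabilizer_card x
  rw [Fintype.card_subtype] at this
  have e : ∏ j, (colorCount n x j).factorial = ∏ i, (Fintype.card {a // x a = i}).factorial := by
    refine prod_congr rfl fun j _ => ?_
    rw [Fintype.card_subtype]; rfl
  rw [e, ← this]
  refine card_bij (fun τ _ => τ * τ₀⁻¹) ?_ ?_ ?_
  · intro τ hτ
    simp only [mem_filter, mem_univ, true_and] at hτ ⊢
    funext i
    have := congrFun hτ (τ₀⁻¹ i)
    simpa using this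
  · intro τ _ τ' _ h; exact mul_right_cancel h
  · intro τ hτ
    simp only [mem_filter, mem_univ, true_and] at hτ
    refine ⟨τ * τ₀, ?_, by simp⟩
    simp only [mem_filter, mem_univ, true_and]
    funext i
    have := congrFun hτ (τ₀ i)
    simpa using this

lemma sum_perm (x : Fin n → Fin 3) (G : (Fin n → Fin 3) → ℝ) :
    ∑ τ : Equiv.Perm (Fin n), G (x ∘ τ) =
      ((∏ j, (colorCount n x j).factorial : ℕ) : ℝ) * ∑ y ∈ cls n x, G y := by
  rw [mul_sum, ← sum_fiberwise_of_maps_to (s := univ) (t := cls n x)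
    (g := fun τ : Equiv.Perm (Fin n) => x ∘ τ) (fun τ _ => mem_cls.mpr (colorCount_comp x τ))]
  refine sum_congr rfl fun y hy => ?_
  rw [← card_perm_eq (mem_cls.mp hy), ← nsmul_eq_mul, ← sum_const]
  refine sum_congr rfl fun τ hτ => ?_
  rw [(mem_filter.mp hτ).2]

lemma card_cls_mul (x : Fin n → Fin 3) :
    (cls n x).card * ∏ j, (colorCount n x j).factorial = n.factorial := by
  have := sum_perm x (fun _ => 1)
  simp only [sum_const, card_univ, Fintype.card_perm, Fintype.card_fin, nsmul_eq_mul, mul_one] at this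
  rw [mul_comm]
  exact_mod_cast this.symm

lemma card_cls_pos (x : Fin n → Fin 3) : 0 < ((cls n x).card : ℝ) :=
  Nat.cast_pos.mpr (card_pos.mpr ⟨x, self_mem_cls x⟩)

/-- Averages over permutations are averages over color classes. -/
lemma avg_perm (x : Fin n → Fin 3) (G : (Fin n → Fin 3) → ℝ) :
    (∑ τ : Equiv.Perm (Fin n), G (x ∘ τ)) / n.factorial =
      (∑ y ∈ cls n x, G y) / (cls n x).card := by
  rw [sum_perm, div_eq_div_iff (by positivity) (card_cls_pos x).ne', ← card_cls_mul x]
  push_cast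
  ring

/-! ### The restricted state space -/

lemma mem_RGB {x : Fin n → Fin 3} : x ∈ RGBset n ↔
    colorCount n x 1 ≤ colorCount n x 0 ∧ colorCount n x 2 ≤ colorCount n x 1 := by
  simp [RGBset]

lemma mem_RGB_congr {x y : Fin n → Fin 3} (h : colorCount n x = colorCount n y) :
    x ∈ RGBset n ↔ y ∈ RGBset n := by
  rw [mem_RGB, mem_RGB, h]

/-- The partition function of the model restricted to `Ω_RGB`. -/
noncomputable def ZRGB (n : ℕ) (β : ℝ) : ℝ := ∑ y ∈ RGBset n, Real.exp (β * pottsH n y)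

/-- The total unnormalized Gibbs weight of the color class of `x`. -/
noncomputable def Wt (n : ℕ) (β : ℝ) (x : Fin n → Fin 3) : ℝ :=
  (cls n x).card * Real.exp (β * pottsH n x)

lemma Wt_pos (β : ℝ) (x : Fin n → Fin 3) : 0 < Wt n β x :=
  mul_pos (card_cls_pos x) (Real.exp_pos _)

lemma Wt_congr (β : ℝ) {x y : Fin n → Fin 3} (h : colorCount n x = colorCount n y) :
    Wt n β x = Wt n β y := by
  rw [Wt, Wt, cls_congr h, pottsH_congr h]

lemma gibbsRGB_eq (β : ℝ) (x : RGBset n) :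
    gibbsRGB n β x = Real.exp (β * pottsH n x.1) / ZRGB n β := by
  rw [gibbsRGB, ZRGB, sum_coe_sort (RGBset n) (fun y => Real.exp (β * pottsH n y))]

lemma Wt_le_ZRGB (β : ℝ) {x : Fin n → Fin 3} (hx : x ∈ RGBset n) : Wt n β x ≤ ZRGB n β := by
  have : Wt n β x = ∑ y ∈ cls n x, Real.exp (β * pottsH n y) := by
    rw [Wt, ← nsmul_eq_mul, ← sum_const]
    exact sum_congr rfl fun y hy => by rw [pottsH_congr (mem_cls.mp hy)]
  rw [this, ZRGB]
  refine sum_le_sum_of_subset_of_nonneg (fun y hy => ?_) fun _ _ _ => (Real.exp_pos _).le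
  exact (mem_RGB_congr (mem_cls.mp hy)).mpr hx

lemma const_mem_RGB : (fun _ => 0 : Fin n → Fin 3) ∈ RGBset n := by
  rw [mem_RGB]; simp [colorCount]

lemma ZRGB_pos (β : ℝ) : 0 < ZRGB n β :=
  (Wt_pos β _).trans_le (Wt_le_ZRGB β const_mem_RGB)

lemma gibbsRGB_pos (β : ℝ) (x : RGBset n) : 0 < gibbsRGB n β x := by
  rw [gibbsRGB_eq]; exact div_pos (Real.exp_pos _) (ZRGB_pos β)

lemma gibbsRGB_sum (β : ℝ) : ∑ x, gibbsRGB n β x = 1 := by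
  simp_rw [gibbsRGB_eq, ← sum_div]
  rw [sum_coe_sort (RGBset n) (fun y => Real.exp (β * pottsH n y))]
  exact div_self (ZRGB_pos β).ne'

/-- There are at most `(n+1)³` color classes. -/
lemma sum_inv_card_cls_le (T : Finset (Fin n → Fin 3)) :
    ∑ x ∈ T, ((cls n x).card : ℝ)⁻¹ ≤ (n + 1) ^ 3 := by
  have hcc : ∀ (x : Fin n → Fin 3) j, colorCount n x j < n + 1 := fun x j => by
    have : colorCount n x j ≤ _ := card_filter_le _ _
    rw [card_univ, Fintype.card_fin] at this
    omega
  calc ∑ x ∈ T, ((cls n x).card : ℝ)⁻¹ ≤ ∑ x, ((cls n x).card : ℝ)⁻¹ :=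
        sum_le_sum_of_subset_of_nonneg (subset_univ _) fun _ _ _ => by positivity
    _ = ∑ s : Fin 3 → Fin (n + 1), ∑ x ∈ univ.filter
          (fun x => (fun j => (⟨colorCount n x j, hcc x j⟩ : Fin (n + 1))) = s),
          ((cls n x).card : ℝ)⁻¹ := (sum_fiberwise _ _ _).symm
    _ ≤ ∑ s : Fin 3 → Fin (n + 1), 1 := by
        refine sum_le_sum fun s _ => ?_
        rcases (univ.filter
          (fun x => (fun j => (⟨colorCount n x j, hcc x j⟩ : Fin (n + 1))) = s)).eq_empty_or_nonempty
          with h | ⟨x, hx⟩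
        · rw [h]; simp
        · have hx := (mem_filter.mp hx).2
          have e : univ.filter
              (fun x => (fun j => (⟨colorCount n x j, hcc x j⟩ : Fin (n + 1))) = s) = cls n x := by
            ext y
            simp only [mem_filter, mem_univ, true_and, mem_cls, ← hx]
            constructor
            · intro h; funext j; exact congrArg Fin.val (congrFun h j)
            · intro h; simp [h]
          rw [e, sum_congr rfl (fun y hy => by rw [cls_congr (mem_cls.mp hy)]), sum_const,
            nsmul_eq_mul, mul_inv_cancel₀ (card_cls_pos x).ne']
    _ = (n + 1) ^ 3 := by simp

lemma sum_exp_le {β W : ℝ} {T : Finset (Fin n → Fin 3)} (hW0 : 0 ≤ W)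
    (hW : ∀ x ∈ T, Wt n β x ≤ W) :
    ∑ x ∈ T, Real.exp (β * pottsH n x) ≤ (n + 1) ^ 3 * W := by
  calc ∑ x ∈ T, Real.exp (β * pottsH n x) ≤ ∑ x ∈ T, ((cls n x).card : ℝ)⁻¹ * W := by
        refine sum_le_sum fun x hx => ?_
        rw [← div_eq_inv_mul, le_div_iff₀' (card_cls_pos x)]
        exact hW x hx
    _ = (∑ x ∈ T, ((cls n x).card : ℝ)⁻¹) * W := (sum_mul _ _ _).symm
    _ ≤ _ := mul_le_mul_of_nonneg_right (sum_inv_card_cls_le T) hW0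

/-! ### The recoloring proposal -/

lemma propRGB_nonneg (a b : RGBset n) : 0 ≤ propRGB n a b := by
  unfold propRGB pottsProp; positivity

lemma propRGB_symm (a b : RGBset n) : propRGB n a b = propRGB n b a := by
  unfold propRGB
  generalize (a : Fin n → Fin 3) = x
  generalize (b : Fin n → Fin 3) = y
  by_cases hxy : x = y
  · rw [hxy]
  unfold pottsProp
  congr 2
  have key : ∀ x y : Fin n → Fin 3, ∀ vc ∈ (univ.filter
      (fun vc : Fin n × Fin 3 => Function.update x vc.1 vc.2 = y)),
      (vc.1, x vc.1) ∈ (univ.filter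
      (fun vc : Fin n × Fin 3 => Function.update y vc.1 vc.2 = x)) := by
    intro x y vc h
    simp only [mem_filter, mem_univ, true_and] at h ⊢
    rw [← h]; simp
  have key2 : ∀ x y : Fin n → Fin 3, ∀ vc ∈ (univ.filter
      (fun vc : Fin n × Fin 3 => Function.update x vc.1 vc.2 = y)), vc.2 = y vc.1 := by
    intro x y vc h
    simp only [mem_filter, mem_univ, true_and] at h
    rw [← h]; simp
  refine card_bij' (fun vc _ => (vc.1, x vc.1)) (fun vc _ => (vc.1, y vc.1))
    (key x y) (key y x) ?_ ?_
  · intro vc h; exact Prod.ext rfl (key2 x y vc h).symm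
  · intro vc h; exact Prod.ext rfl (key2 y x vc h).symm

/-- Summing against the proposal kernel is averaging over the `3n` recolorings. -/
lemma sum_propRGB_mul (a : RGBset n) (G : (Fin n → Fin 3) → ℝ) :
    ∑ b, propRGB n a b * G b.1 =
      (∑ vc ∈ univ.filter (fun vc : Fin n × Fin 3 => Function.update a.1 vc.1 vc.2 ∈ RGBset n),
        G (Function.update a.1 vc.1 vc.2)) / (n * 3) := by
  unfold propRGB
  rw [sum_coe_sort (RGBset n) (fun y => pottsProp n a.1 y * G y), sum_div,
    ← sum_fiberwise_of_maps_to (t := RGBset n)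
    (g := fun vc : Fin n × Fin 3 => Function.update a.1 vc.1 vc.2) (by intro vc h; simpa using h)]
  refine sum_congr rfl fun y hy => ?_
  rw [pottsProp, div_mul_eq_mul_div, ← sum_div, ← nsmul_eq_mul, ← sum_const]
  congr 1
  rw [filter_filter]
  refine sum_congr ?_ ?_
  · ext vc
    simp only [mem_filter, mem_univ, true_and]
    exact ⟨fun h => ⟨h ▸ hy, h⟩, fun h => h.2⟩
  · intro vc h
    simp only [mem_filter, mem_univ, true_and] at h
    rw [h.2]

lemma propRGB_sum_le (a : RGBset n) : ∑ b ∈ univ.erase a, propRGB n a b ≤ 2 / 3 := by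
  have h := sum_propRGB_mul a (fun y => if y = a.1 then 0 else 1)
  have h1 : ∑ b ∈ univ.erase a, propRGB n a b =
      ∑ b, propRGB n a b * (if b.1 = a.1 then 0 else 1) := by
    rw [← add_sum_erase univ _ (mem_univ a)]
    simp only [if_true, mul_zero, zero_add]
    refine sum_congr rfl fun b hb => ?_
    have : b.1 ≠ a.1 := fun e => ne_of_mem_erase hb (Subtype.ext e)
    simp [this]
  rw [h1, h]
  rcases Nat.eq_zero_or_pos n with rfl | hn
  · simp; norm_num
  have hn' : (0 : ℝ) < n := by exact_mod_cast hn
  rw [div_le_iff₀ (by positivity)]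
  calc _ ≤ ∑ vc : Fin n × Fin 3, (if vc.2 = a.1 vc.1 then (0 : ℝ) else 1) := by
        refine (sum_le_sum_of_subset_of_nonneg (subset_univ _) fun _ _ _ => by
          split_ifs <;> norm_num).trans (sum_le_sum fun vc _ => ?_)
        by_cases h : vc.2 = a.1 vc.1
        · simp [h]
        · rw [if_neg h]; split_ifs <;> norm_num
    _ = ∑ v : Fin n, (2 : ℝ) := by
        rw [Fintype.sum_prod_type]
        refine sum_congr rfl fun v _ => ?_
        have : ∀ d : Fin 3, ∑ c : Fin 3, (if c = d then (0 : ℝ) else 1) = 2 := by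
          intro d
          fin_cases d <;> simp [Fin.sum_univ_three] <;> norm_num
        exact this _
    _ = _ := by simp; ring

/-- The fixed-temperature Metropolis chain is reversible and holds with probability `≥ 1/3`. -/
lemma metroRGB_revChain (β : ℝ) :
    RevChain (metropolis (propRGB n) (gibbsRGB n β)) (gibbsRGB n β) ∧
      ∀ x, 1 / 3 ≤ metropolis (propRGB n) (gibbsRGB n β) x x :=
  metropolis_revChain propRGB_nonneg propRGB_symm propRGB_sum_le (gibbsRGB_pos β) (gibbsRGB_sum β)

lemma pottsH_update_ge (x : Fin n → Fin 3) (v : Fin n) (c : Fin 3) :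
    pottsH n x ≤ pottsH n (Function.update x v c) + n := by
  by_cases h : x v = c
  · rw [← h, Function.update_eq_self]; omega
  have h1 := two_mul_pottsH x
  have h2 := two_mul_pottsH (Function.update x v c)
  have a := fun j => colorCount_update x v c j
  have a4 := colorCount_sum x
  rw [Fin.sum_univ_three] at h1 h2
  have a0 := a 0
  have a1 := a 1
  have a2 := a 2
  clear a
  generalize Function.update x v c = y at *
  generalize x v = d at *
  generalize colorCount n x 0 = s0 at *
  generalize colorCount n x 1 = s1 at *
  generalize colorCount n x 2 = s2 at *
  generalize colorCount n y 0 = t0 at *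
  generalize colorCount n y 1 = t1 at *
  generalize colorCount n y 2 = t2 at *
  fin_cases c <;> fin_cases d <;> simp at h a0 a1 a2 <;> subst a0 <;> subst a1 <;> subst a2 <;>
    nlinarith

lemma prop_pos_of_update {a b : RGBset n} {v : Fin n} {c : Fin 3}
    (h : Function.update a.1 v c = b.1) : 0 < propRGB n a b := by
  have hn : 0 < n := v.pos
  unfold propRGB pottsProp
  refine div_pos (Nat.cast_pos.mpr (card_pos.mpr ⟨(v, c), by simpa using h⟩)) ?_
  have : (0 : ℝ) < n := by exact_mod_cast hn
  positivity

end potts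

/-! ### A Poincaré inequality from paths between color classes -/

section paths
variable {n : ℕ}

/-- Mean square difference of `F` between `x` and `y` under a simultaneous random permutation of
the vertices. -/
noncomputable def davg (F : (Fin n → Fin 3) → ℝ) (x y : Fin n → Fin 3) : ℝ :=
  (∑ τ : Equiv.Perm (Fin n), (F (x ∘ τ) - F (y ∘ τ)) ^ 2) / n.factorial

/-- Sum of the squared increments of `F` over all recolorings of `x` inside `Ω_RGB`. -/
noncomputable def gam (F : (Fin n → Fin 3) → ℝ) (x : Fin n → Fin 3) : ℝ :=
  ∑ vc ∈ univ.filter (fun vc : Fin n × Fin 3 => Function.update x vc.1 vc.2 ∈ RGBset n),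
    (F x - F (Function.update x vc.1 vc.2)) ^ 2

lemma gam_nonneg (F : (Fin n → Fin 3) → ℝ) (x : Fin n → Fin 3) : 0 ≤ gam F x :=
  sum_nonneg fun _ _ => sq_nonneg _

lemma davg_symm (F : (Fin n → Fin 3) → ℝ) (x y : Fin n → Fin 3) : davg F x y = davg F y x := by
  unfold davg
  congr 1
  exact sum_congr rfl fun τ _ => by ring

lemma davg_self (F : (Fin n → Fin 3) → ℝ) (x : Fin n → Fin 3) : davg F x x = 0 := by
  simp [davg]

lemma davg_two (F : (Fin n → Fin 3) → ℝ) (x y z : Fin n → Fin 3) :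
    davg F x y ≤ 2 * davg F x z + 2 * davg F y z := by
  unfold davg
  rw [← mul_div_assoc, ← mul_div_assoc, ← add_div, mul_sum, mul_sum, ← sum_add_distrib]
  refine div_le_div_of_nonneg_right (sum_le_sum fun τ _ => ?_) (by positivity)
  nlinarith [sq_nonneg (F (x ∘ τ) + F (y ∘ τ) - 2 * F (z ∘ τ))]

lemma davg_succ (F : (Fin n → Fin 3) → ℝ) (x y z : Fin n → Fin 3) {k d : ℝ} (hk : 0 < k)
    (h1 : davg F x y ≤ k ^ 2 * d) (h2 : davg F y z ≤ d) :
    davg F x z ≤ (k + 1) ^ 2 * d := by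
  have key : k * davg F x z ≤ (k + 1) * davg F x y + k * (k + 1) * davg F y z := by
    unfold davg
    rw [← mul_div_assoc, ← mul_div_assoc, ← mul_div_assoc, ← add_div, mul_sum, mul_sum, mul_sum,
      ← sum_add_distrib]
    refine div_le_div_of_nonneg_right (sum_le_sum fun τ _ => ?_) (by positivity)
    nlinarith [sq_nonneg ((F (x ∘ τ) - F (y ∘ τ)) - k * (F (y ∘ τ) - F (z ∘ τ)))]
  have a1 : (k + 1) * davg F x y ≤ (k + 1) * (k ^ 2 * d) :=
    mul_le_mul_of_nonneg_left h1 (by linarith)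
  have a2 : k * (k + 1) * davg F y z ≤ k * (k + 1) * d :=
    mul_le_mul_of_nonneg_left h2 (by positivity)
  refine le_of_mul_le_mul_left ?_ hk
  calc _ ≤ _ := key
    _ ≤ (k + 1) * (k ^ 2 * d) + k * (k + 1) * d := by linarith
    _ = _ := by ring

/-- A recoloring moves every permuted copy of `x` by a recoloring, so it costs at most the average
of `gam` over the class of `x`. -/
lemma davg_update_le (F : (Fin n → Fin 3) → ℝ) (x : Fin n → Fin 3) (v : Fin n) (c : Fin 3)
    (hy : Function.update x v c ∈ RGBset n) :
    davg F x (Function.update x v c) ≤ (∑ y ∈ cls n x, gam F y) / (cls n x).card := by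
  rw [← avg_perm, davg]
  refine div_le_div_of_nonneg_right (sum_le_sum fun τ _ => ?_) (by positivity)
  have e : Function.update x v c ∘ τ = Function.update (x ∘ τ) (τ.symm v) c :=
    Function.update_comp_equiv x τ v c
  have hm : Function.update (x ∘ τ) (τ.symm v) c ∈ RGBset n := by
    rw [← e]
    exact (mem_RGB_congr (colorCount_comp _ τ)).mpr hy
  rw [e]
  exact single_le_sum
    (f := fun vc : Fin n × Fin 3 => (F (x ∘ τ) - F (Function.update (x ∘ τ) vc.1 vc.2)) ^ 2)
    (fun _ _ => sq_nonneg _) (by simpa using hm : (τ.symm v, c) ∈ _)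

/-- The Dirichlet form of the Metropolis chain controls the sum of squared increments. -/
lemma sum_gam_le {β : ℝ} (hβ : 0 ≤ β) (F : (Fin n → Fin 3) → ℝ) :
    ∑ x ∈ RGBset n, Real.exp (β * pottsH n x) * gam F x ≤
      3 * n * Real.exp (β * n) * ZRGB n β *
        energy (metropolis (propRGB n) (gibbsRGB n β)) (gibbsRGB n β) (fun a => F a.1) := by
  rw [← sum_coe_sort (RGBset n) (fun x => Real.exp (β * pottsH n x) * gam F x), energy, mul_sum]
  refine sum_le_sum fun a _ => ?_
  have hZ := ZRGB_pos (n := n) β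
  rcases Nat.eq_zero_or_pos n with rfl | hn
  · simp [gam]
  have hn' : (0 : ℝ) < n := by exact_mod_cast hn
  have h1 : gam F a.1 = 3 * n * ∑ b, propRGB n a b * (F a.1 - F b.1) ^ 2 := by
    rw [sum_propRGB_mul a (fun y => (F a.1 - F y) ^ 2), gam]
    field_simp
  have h2 : ∀ b, propRGB n a b * (F a.1 - F b.1) ^ 2 ≤
      Real.exp (β * n) * (metropolis (propRGB n) (gibbsRGB n β) a b * (F a.1 - F b.1) ^ 2) := by
    intro b
    rw [← mul_assoc]
    by_cases hab : b = a
    · subst hab; simp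
    refine mul_le_mul_of_nonneg_right ?_ (sq_nonneg _)
    simp only [metropolis, Matrix.of_apply, hab, if_false]
    rcases (propRGB_nonneg a b).eq_or_lt with h0 | h0
    · rw [← h0]; simp
    have hex : ∃ v c, Function.update a.1 v c = b.1 := by
      by_contra! hcon
      have : propRGB n a b = 0 := by
        unfold propRGB pottsProp
        rw [filter_false_of_mem (fun vc _ => hcon vc.1 vc.2)]
        simp
      linarith
    obtain ⟨v, c, hvc⟩ := hex
    have hH : (pottsH n a.1 : ℝ) ≤ pottsH n b.1 + n := by
      have := pottsH_update_ge a.1 v c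
      rw [hvc] at this
      exact_mod_cast this
    have hratio : Real.exp (-(β * n)) ≤ gibbsRGB n β b / gibbsRGB n β a := by
      rw [gibbsRGB_eq, gibbsRGB_eq, div_div_div_cancel_right₀ hZ.ne', ← Real.exp_sub]
      apply Real.exp_le_exp.mpr
      nlinarith
    have hmin : Real.exp (-(β * n)) ≤ min 1 (gibbsRGB n β b / gibbsRGB n β a) :=
      le_min (Real.exp_le_one_iff.mpr (by simp; positivity)) hratio
    calc propRGB n a b = Real.exp (β * n) * (propRGB n a b * Real.exp (-(β * n))) := by
          rw [Real.exp_neg]; field_simp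
      _ ≤ _ := by gcongr
  have h3 : ∑ b, propRGB n a b * (F a.1 - F b.1) ^ 2 ≤ Real.exp (β * n) *
      ∑ b, metropolis (propRGB n) (gibbsRGB n β) a b * (F a.1 - F b.1) ^ 2 := by
    rw [mul_sum]; exact sum_le_sum fun b _ => h2 b
  have h4 : ∑ b, gibbsRGB n β a * metropolis (propRGB n) (gibbsRGB n β) a b *
      (F a.1 - F b.1) ^ 2 = Real.exp (β * pottsH n a.1) / ZRGB n β *
      ∑ b, metropolis (propRGB n) (gibbsRGB n β) a b * (F a.1 - F b.1) ^ 2 := by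
    rw [mul_sum, gibbsRGB_eq]
    exact sum_congr rfl fun b _ => by ring
  rw [h4, h1]
  have h5 := mul_le_mul_of_nonneg_left h3
    (by positivity : 0 ≤ Real.exp (β * pottsH n a.1) * (3 * n))
  calc _ = Real.exp (β * pottsH n a.1) * (3 * n) *
        ∑ b, propRGB n a b * (F a.1 - F b.1) ^ 2 := by ring
    _ ≤ _ := h5
    _ = _ := by field_simp

lemma davg_update_le' {β : ℝ} (hβ : 0 ≤ β) (F : (Fin n → Fin 3) → ℝ) (x : Fin n → Fin 3)
    (v : Fin n) (c : Fin 3) (hx : x ∈ RGBset n) (hy : Function.update x v c ∈ RGBset n) :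
    davg F x (Function.update x v c) ≤ 3 * n * Real.exp (β * n) * ZRGB n β *
        energy (metropolis (propRGB n) (gibbsRGB n β)) (gibbsRGB n β) (fun a => F a.1) /
          Wt n β x := by
  refine (davg_update_le F x v c hy).trans ?_
  rw [div_le_div_iff₀ (card_cls_pos x) (Wt_pos β x), Wt]
  have h1 : ∑ y ∈ cls n x, Real.exp (β * pottsH n y) * gam F y ≤
      ∑ y ∈ RGBset n, Real.exp (β * pottsH n y) * gam F y := by
    refine sum_le_sum_of_subset_of_nonneg (fun y hy => (mem_RGB_congr (mem_cls.mp hy)).mpr hx) ?_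
    exact fun y _ _ => mul_nonneg (Real.exp_pos _).le (gam_nonneg F y)
  have h2 : ∑ y ∈ cls n x, Real.exp (β * pottsH n y) * gam F y =
      Real.exp (β * pottsH n x) * ∑ y ∈ cls n x, gam F y := by
    rw [mul_sum]
    exact sum_congr rfl fun y hy => by rw [pottsH_congr (mem_cls.mp hy)]
  have h3 := (h2 ▸ h1).trans (sum_gam_le hβ F)
  calc _ = (Real.exp (β * pottsH n x) * ∑ y ∈ cls n x, gam F y) * (cls n x).card := by ring
    _ ≤ _ := mul_le_mul_of_nonneg_right h3 (card_cls_pos x).le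

/-- A recoloring inside `Ω_RGB` with an endpoint whose class has weight at least `w`. -/
def RStep (n : ℕ) (β w : ℝ) (x y : Fin n → Fin 3) : Prop :=
  x ∈ RGBset n ∧ y ∈ RGBset n ∧ (∃ v c, Function.update x v c = y) ∧
    (w ≤ Wt n β x ∨ w ≤ Wt n β y)

/-- `RPath n β w k x y`: there is a sequence of `k` steps of weight at least `w` from `x` to `y`. -/
inductive RPath (n : ℕ) (β w : ℝ) : ℕ → (Fin n → Fin 3) → (Fin n → Fin 3) → Prop
  | refl (x) : RPath n β w 0 x x
  | tail {k x y z} : RPath n β w k x y → RStep n β w y z → RPath n β w (k + 1) x z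

lemma RPath.trans {β w : ℝ} {k l : ℕ} {x y z : Fin n → Fin 3} (h : RPath n β w k x y)
    (h' : RPath n β w l y z) : RPath n β w (k + l) x z := by
  induction h' with
  | refl => exact h
  | tail _ hs ih => exact RPath.tail (ih h) hs

lemma RPath.single {β w : ℝ} {x y : Fin n → Fin 3} (h : RStep n β w x y) : RPath n β w 1 x y :=
  RPath.tail (RPath.refl x) h

lemma RPath.mono {β w w' : ℝ} (hw : w' ≤ w) {k : ℕ} {x y : Fin n → Fin 3}
    (h : RPath n β w k x y) : RPath n β w' k x y := by
  induction h with
  | refl => exact RPath.refl _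
  | tail _ hs ih =>
    exact RPath.tail ih ⟨hs.1, hs.2.1, hs.2.2.1, hs.2.2.2.imp hw.trans hw.trans⟩

lemma RPath.davg_le {β w : ℝ} (hβ : 0 ≤ β) (hw : 0 < w) (F : (Fin n → Fin 3) → ℝ) {k : ℕ}
    {x y : Fin n → Fin 3} (h : RPath n β w k x y) :
    davg F x y ≤ (k : ℝ) ^ 2 * (3 * n * Real.exp (β * n) * ZRGB n β *
        energy (metropolis (propRGB n) (gibbsRGB n β)) (gibbsRGB n β) (fun a => F a.1) / w) := by
  have hE := (metroRGB_revChain (n := n) β).1.energy_nonneg (fun a => F a.1)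
  have hZ := (ZRGB_pos (n := n) β).le
  induction h with
  | refl => simp [davg_self]
  | @tail k x y z hp hs ih =>
    obtain ⟨hy, hz, ⟨v, c, rfl⟩, hw'⟩ := hs
    have hstep : davg F y (Function.update y v c) ≤ 3 * n * Real.exp (β * n) * ZRGB n β *
        energy (metropolis (propRGB n) (gibbsRGB n β)) (gibbsRGB n β) (fun a => F a.1) / w := by
      rcases hw' with hw' | hw'
      · refine (davg_update_le' hβ F y v c hy hz).trans ?_
        gcongr
      · have := davg_update_le' hβ F (Function.update y v c) v (y v) hz (by simpa using hy)
        rw [Function.update_idem, Function.update_eq_self, davg_symm] at this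
        refine this.trans ?_
        gcongr
    rcases Nat.eq_zero_or_pos k with rfl | hk
    · cases hp
      simpa using hstep
    · have := davg_succ F x y _ (by exact_mod_cast hk : (0 : ℝ) < k) ih hstep
      push_cast
      exact this

lemma vari_eq_davg {β : ℝ} (F : (Fin n → Fin 3) → ℝ) :
    vari (gibbsRGB n β) (fun a => F a.1) =
      ∑ x ∈ RGBset n, ∑ y ∈ RGBset n, (Real.exp (β * pottsH n x) / ZRGB n β) *
        (Real.exp (β * pottsH n y) / ZRGB n β) * davg F x y := by
  have inv : ∀ (τ : Equiv.Perm (Fin n)) (G : (Fin n → Fin 3) → ℝ),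
      ∑ x ∈ RGBset n, G (x ∘ τ) = ∑ x ∈ RGBset n, G x := by
    intro τ G
    refine sum_bij' (fun x _ => x ∘ τ) (fun x _ => x ∘ τ.symm) ?_ ?_ ?_ ?_ ?_
    · intro x hx; exact (mem_RGB_congr (colorCount_comp x τ)).mpr hx
    · intro x hx; exact (mem_RGB_congr (colorCount_comp x τ.symm)).mpr hx
    · intro x _; funext i; simp
    · intro x _; funext i; simp
    · intro x _; rfl
  set g : (Fin n → Fin 3) → ℝ := fun x => Real.exp (β * pottsH n x) / ZRGB n β with hg
  have hgτ : ∀ x (τ : Equiv.Perm (Fin n)), g (x ∘ τ) = g x := fun x τ => by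
    simp only [hg, pottsH_congr (colorCount_comp x τ)]
  have h1 : vari (gibbsRGB n β) (fun a => F a.1) =
      ∑ x ∈ RGBset n, ∑ y ∈ RGBset n, g x * g y * (F x - F y) ^ 2 := by
    rw [vari, ← sum_coe_sort (RGBset n)]
    refine sum_congr rfl fun a _ => ?_
    rw [← sum_coe_sort (RGBset n)]
    exact sum_congr rfl fun b _ => by rw [gibbsRGB_eq, gibbsRGB_eq]
  have h2 : ∀ τ : Equiv.Perm (Fin n),
      ∑ x ∈ RGBset n, ∑ y ∈ RGBset n, g x * g y * (F (x ∘ τ) - F (y ∘ τ)) ^ 2 =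
      ∑ x ∈ RGBset n, ∑ y ∈ RGBset n, g x * g y * (F x - F y) ^ 2 := by
    intro τ
    rw [← inv τ (fun x => ∑ y ∈ RGBset n, g x * g y * (F x - F y) ^ 2)]
    refine sum_congr rfl fun x _ => ?_
    rw [← inv τ (fun y => g (x ∘ τ) * g y * (F (x ∘ τ) - F y) ^ 2)]
    exact sum_congr rfl fun y _ => by rw [hgτ, hgτ]
  have hf : (n.factorial : ℝ) ≠ 0 := by positivity
  have h3 : ∑ x ∈ RGBset n, ∑ y ∈ RGBset n, g x * g y * davg F x y =
      (∑ τ : Equiv.Perm (Fin n), ∑ x ∈ RGBset n, ∑ y ∈ RGBset n,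
        g x * g y * (F (x ∘ τ) - F (y ∘ τ)) ^ 2) / n.factorial := by
    simp_rw [davg, ← mul_div_assoc, ← sum_div, mul_sum]
    congr 1
    rw [eq_comm, sum_comm]
    refine sum_congr rfl fun x _ => ?_
    rw [sum_comm]
  rw [h3, h1]
  simp_rw [h2]
  rw [sum_const, card_univ, Fintype.card_perm,
    Fintype.card_fin, nsmul_eq_mul, mul_div_cancel_left₀ _ hf]

/-- If every `x` is joined to `z` by at most `k` steps of weight at least `e^{-E}` times that of
`x`, the Metropolis chain satisfies a Poincaré inequality with constant `poly(n)·e^E`. -/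
lemma poincare_of_paths {β E : ℝ} (hβ : 0 ≤ β) {k : ℕ} (z : Fin n → Fin 3)
    (hp : ∀ x ∈ RGBset n, ∃ l ≤ k, RPath n β (Wt n β x * Real.exp (-E)) l x z)
    (f : RGBset n → ℝ) :
    vari (gibbsRGB n β) f ≤ (12 * (k : ℝ) ^ 2 * n * Real.exp (β * n) * Real.exp E * (n + 1) ^ 3) *
      energy (metropolis (propRGB n) (gibbsRGB n β)) (gibbsRGB n β) f := by
  obtain ⟨F, rfl⟩ : ∃ F : (Fin n → Fin 3) → ℝ, (fun a : RGBset n => F a.1) = f :=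
    ⟨fun x => if h : x ∈ RGBset n then f ⟨x, h⟩ else 0, by funext a; simp⟩
  have hE := (metroRGB_revChain (n := n) β).1.energy_nonneg (fun a => F a.1)
  have hZ := ZRGB_pos (n := n) β
  rw [vari_eq_davg]
  set e := energy (metropolis (propRGB n) (gibbsRGB n β)) (gibbsRGB n β) (fun a => F a.1)
  set g : (Fin n → Fin 3) → ℝ := fun x => Real.exp (β * pottsH n x) / ZRGB n β with hg
  have hg0 : ∀ x, 0 ≤ g x := fun x => by positivity
  have hg1 : ∑ x ∈ RGBset n, g x = 1 := by
    rw [hg, ← sum_div]; exact div_self hZ.ne'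
  have hd : ∀ x ∈ RGBset n, g x * davg F x z ≤
      (3 * (k : ℝ) ^ 2 * n * Real.exp (β * n) * Real.exp E * e) * ((cls n x).card : ℝ)⁻¹ := by
    intro x hx
    obtain ⟨l, hl, hpath⟩ := hp x hx
    have hW := Wt_pos β x
    have h1 := hpath.davg_le hβ (mul_pos hW (Real.exp_pos _)) F
    have h2 : (l : ℝ) ^ 2 ≤ (k : ℝ) ^ 2 := by gcongr
    have h3 : davg F x z ≤ (k : ℝ) ^ 2 * (3 * n * Real.exp (β * n) * ZRGB n β * e /
        (Wt n β x * Real.exp (-E))) :=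
      h1.trans (mul_le_mul_of_nonneg_right h2 (by positivity))
    refine (mul_le_mul_of_nonneg_left h3 (hg0 x)).trans (le_of_eq ?_)
    rw [hg, Wt, Real.exp_neg]
    have := card_cls_pos x
    field_simp
  have h4 : ∑ x ∈ RGBset n, g x * davg F x z ≤
      (3 * (k : ℝ) ^ 2 * n * Real.exp (β * n) * Real.exp E * e) * (n + 1) ^ 3 := by
    refine (sum_le_sum hd).trans ?_
    rw [← mul_sum]
    exact mul_le_mul_of_nonneg_left (sum_inv_card_cls_le _) (by positivity)
  calc ∑ x ∈ RGBset n, ∑ y ∈ RGBset n, g x * g y * davg F x y ≤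
        ∑ x ∈ RGBset n, ∑ y ∈ RGBset n, g x * g y * (2 * davg F x z + 2 * davg F y z) :=
        sum_le_sum fun x _ => sum_le_sum fun y _ =>
          mul_le_mul_of_nonneg_left (davg_two F x y z) (mul_nonneg (hg0 x) (hg0 y))
    _ = 4 * ((∑ x ∈ RGBset n, g x * davg F x z) * ∑ y ∈ RGBset n, g y) := by
        have e1 : ∑ x ∈ RGBset n, ∑ y ∈ RGBset n, g x * g y * (2 * davg F x z + 2 * davg F y z) =
            2 * ((∑ x ∈ RGBset n, g x * davg F x z) * ∑ y ∈ RGBset n, g y) +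
            2 * ((∑ x ∈ RGBset n, g x) * ∑ y ∈ RGBset n, g y * davg F y z) := by
          rw [sum_mul_sum, sum_mul_sum, mul_sum, mul_sum, ← sum_add_distrib]
          refine sum_congr rfl fun x _ => ?_
          rw [mul_sum, mul_sum, ← sum_add_distrib]
          exact sum_congr rfl fun y _ => by ring
        rw [e1]; ring
    _ ≤ 4 * ((3 * (k : ℝ) ^ 2 * n * Real.exp (β * n) * Real.exp E * e) * (n + 1) ^ 3) := by
        rw [hg1, mul_one]; linarith
    _ = _ := by ring

end paths

/-! ### Canonical paths in `Ω_RGB` -/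

section canonical
variable {n : ℕ}

lemma exists_color {x : Fin n → Fin 3} {j : Fin 3} (h : 0 < colorCount n x j) : ∃ v, x v = j := by
  obtain ⟨v, hv⟩ := card_pos.mp h
  exact ⟨v, by simpa using hv⟩

lemma prod_factorial_update (x : Fin n → Fin 3) (v : Fin n) {c : Fin 3} (h : x v ≠ c) :
    (∏ j, (colorCount n (Function.update x v c) j).factorial) * colorCount n x (x v) =
      (∏ j, (colorCount n x j).factorial) * (colorCount n x c + 1) := by
  have a0 := colorCount_update x v c 0
  have a1 := colorCount_update x v c 1
  have a2 := colorCount_update x v c 2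
  rw [Fin.prod_univ_three, Fin.prod_univ_three]
  generalize Function.update x v c = y at *
  generalize x v = d at *
  fin_cases c <;> fin_cases d <;> simp at h a0 a1 a2 ⊢ <;>
    simp only [← a0, ← a1, ← a2, Nat.factorial_succ] <;> simp only [a0, a1, a2] <;>
    simp only [Nat.factorial_succ] <;> ring

lemma pottsH_update (x : Fin n → Fin 3) (v : Fin n) {c : Fin 3} (h : x v ≠ c) :
    pottsH n (Function.update x v c) + colorCount n x (x v) = pottsH n x + colorCount n x c + 1 := by
  have h1 := two_mul_pottsH x
  have h2 := two_mul_pottsH (Function.update x v c)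
  have a0 := colorCount_update x v c 0
  have a1 := colorCount_update x v c 1
  have a2 := colorCount_update x v c 2
  rw [Fin.sum_univ_three] at h1 h2
  generalize Function.update x v c = y at *
  generalize x v = d at *
  generalize hs0 : colorCount n x 0 = s0 at *
  generalize hs1 : colorCount n x 1 = s1 at *
  generalize hs2 : colorCount n x 2 = s2 at *
  generalize colorCount n y 0 = t0 at *
  generalize colorCount n y 1 = t1 at *
  generalize colorCount n y 2 = t2 at *
  fin_cases c <;> fin_cases d <;> simp at h a0 a1 a2 ⊢ <;> simp only [hs0, hs1, hs2] <;>
    clear hs0 hs1 hs2 <;> subst a0 <;> subst a1 <;> subst a2 <;> nlinarith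

/-- Detailed change of class weight under one recoloring. -/
lemma Wt_update (β : ℝ) (x : Fin n → Fin 3) (v : Fin n) {c : Fin 3} (h : x v ≠ c) :
    Wt n β (Function.update x v c) *
        ((colorCount n x c + 1 : ℝ) * Real.exp (-(β * (colorCount n x c + 1)))) =
      Wt n β x * (colorCount n x (x v) * Real.exp (-(β * colorCount n x (x v)))) := by
  have h1 := prod_factorial_update x v h
  have h2 : (pottsH n (Function.update x v c) : ℝ) =
      pottsH n x + colorCount n x c + 1 - colorCount n x (x v) := by
    have := pottsH_update x v h
    rw [eq_sub_iff_add_eq]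
    exact_mod_cast this
  have h3 := card_cls_mul x
  have h4 := card_cls_mul (Function.update x v c)
  have h5 : ((cls n (Function.update x v c)).card : ℝ) * (colorCount n x c + 1) =
      (cls n x).card * colorCount n x (x v) := by
    have hp : 0 < ∏ j, (colorCount n x j).factorial := prod_pos fun _ _ => Nat.factorial_pos _
    have : (cls n (Function.update x v c)).card * (colorCount n x c + 1) =
        (cls n x).card * colorCount n x (x v) := by
      have hq : 0 < ∏ j, (colorCount n (Function.update x v c) j).factorial :=
        prod_pos fun _ _ => Nat.factorial_pos _
      apply Nat.eq_of_mul_eq_mul_left (Nat.mul_pos hp hq)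
      calc _ = ((cls n (Function.update x v c)).card *
            ∏ j, (colorCount n (Function.update x v c) j).factorial) *
            ((∏ j, (colorCount n x j).factorial) * (colorCount n x c + 1)) := by ring
        _ = ((cls n x).card * ∏ j, (colorCount n x j).factorial) *
            ((∏ j, (colorCount n (Function.update x v c) j).factorial) *
              colorCount n x (x v)) := by rw [h4, ← h3, h1]
        _ = _ := by ring
    exact_mod_cast this
  have h6 : Real.exp (β * pottsH n (Function.update x v c)) *
      Real.exp (-(β * (colorCount n x c + 1))) =
      Real.exp (β * pottsH n x) * Real.exp (-(β * colorCount n x (x v))) := by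
    rw [← Real.exp_add, ← Real.exp_add, h2]
    congr 1
    ring
  rw [Wt, Wt]
  calc _ = (((cls n (Function.update x v c)).card : ℝ) * (colorCount n x c + 1)) *
        (Real.exp (β * pottsH n (Function.update x v c)) *
          Real.exp (-(β * (colorCount n x c + 1)))) := by ring
    _ = _ := by rw [h5, h6]; ring

lemma Wt_le_update (β : ℝ) (x : Fin n → Fin 3) (v : Fin n) {c : Fin 3} (h : x v ≠ c)
    (hc : Real.log (colorCount n x c + 1) - β * (colorCount n x c + 1) ≤
      Real.log (colorCount n x (x v)) - β * colorCount n x (x v)) :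
    Wt n β x ≤ Wt n β (Function.update x v c) := by
  have e := Wt_update β x v h
  have hp : (0 : ℝ) < colorCount n x c + 1 := by positivity
  have hq : (0 : ℝ) < colorCount n x (x v) := by
    have : 0 < colorCount n x (x v) := card_pos.mpr ⟨v, by simp⟩
    exact_mod_cast this
  have h1 : (colorCount n x c + 1 : ℝ) * Real.exp (-(β * (colorCount n x c + 1))) ≤
      colorCount n x (x v) * Real.exp (-(β * colorCount n x (x v))) := by
    have := Real.exp_le_exp.mpr hc
    rwa [sub_eq_add_neg, sub_eq_add_neg, Real.exp_add, Real.exp_add, Real.exp_log hp,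
      Real.exp_log hq] at this
  have h2 : 0 < (colorCount n x c + 1 : ℝ) * Real.exp (-(β * (colorCount n x c + 1))) := by positivity
  refine le_of_mul_le_mul_right ?_ h2
  rw [e]
  exact mul_le_mul_of_nonneg_left h1 (Wt_pos β x).le

lemma min_log_sub_le {β p q r : ℝ} (hp : 0 < p) (hpq : p ≤ q) (hqr : q ≤ r) :
    Real.log p - β * p ≤ Real.log q - β * q ∨ Real.log r - β * r ≤ Real.log q - β * q := by
  have hc : ConcaveOn ℝ (Set.Ioi (0 : ℝ)) (fun t => Real.log t - β * t) := by
    refine strictConcaveOn_log_Ioi.concaveOn.sub ⟨convex_Ioi 0, ?_⟩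
    intro x _ y _ a b _ _ _
    simp only [smul_eq_mul]
    exact le_of_eq (by ring)
  have := hc.min_le_of_mem_Icc (x := p) (y := r) (z := q) hp
    (by simp only [Set.mem_Ioi]; linarith) ⟨hpq, hqr⟩
  exact min_le_iff.mp this

/-- From any state one can balance the two minority colors without ever decreasing the class
weight: `log t - βt` is concave, so moving a vertex from the middle color to one of the two others
does not lose weight. -/
lemma balance (β : ℝ) (d : ℕ) : ∀ x ∈ RGBset n, colorCount n x 1 - colorCount n x 2 ≤ d →
    ∃ y ∈ RGBset n, colorCount n y 1 ≤ colorCount n y 2 + 1 ∧ Wt n β x ≤ Wt n β y ∧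
      ∃ l ≤ d, RPath n β (Wt n β x) l x y := by
  induction d with
  | zero =>
    intro x hx h
    exact ⟨x, hx, by omega, le_rfl, 0, le_rfl, RPath.refl x⟩
  | succ d ih =>
    intro x hx h
    by_cases hsmall : colorCount n x 1 ≤ colorCount n x 2 + 1
    · exact ⟨x, hx, hsmall, le_rfl, 0, by omega, RPath.refl x⟩
    have hx' := mem_RGB.mp hx
    obtain ⟨v, hv⟩ := exists_color (x := x) (j := 1) (by omega)
    have key : ∃ c, Function.update x v c ∈ RGBset n ∧ Wt n β x ≤ Wt n β (Function.update x v c) ∧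
        colorCount n (Function.update x v c) 1 - colorCount n (Function.update x v c) 2 ≤ d := by
      have h21 : (colorCount n x 2 + 1 : ℝ) ≤ colorCount n x 1 := by
        exact_mod_cast (by omega : colorCount n x 2 + 1 ≤ colorCount n x 1)
      have h10 : (colorCount n x 1 : ℝ) ≤ colorCount n x 0 + 1 := by
        exact_mod_cast (by omega : colorCount n x 1 ≤ colorCount n x 0 + 1)
      rcases min_log_sub_le (β := β) (by positivity) h21 h10 with h' | h'
      · refine ⟨2, ?_, Wt_le_update β x v (by rw [hv]; decide) (by rw [hv]; exact h'), ?_⟩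
        all_goals
          have a0 := colorCount_update x v 2 0
          have a1 := colorCount_update x v 2 1
          have a2 := colorCount_update x v 2 2
          simp [hv] at a0 a1 a2
          try rw [mem_RGB]
          omega
      · refine ⟨0, ?_, Wt_le_update β x v (by rw [hv]; decide) (by rw [hv]; exact h'), ?_⟩
        all_goals
          have a0 := colorCount_update x v 0 0
          have a1 := colorCount_update x v 0 1
          have a2 := colorCount_update x v 0 2
          simp [hv] at a0 a1 a2
          try rw [mem_RGB]
          omega
    obtain ⟨c, hc, hW, hd⟩ := key
    obtain ⟨y, hy, hyb, hWy, l, hl, hp⟩ := ih _ hc hd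
    refine ⟨y, hy, hyb, hW.trans hWy, 1 + l, by omega, ?_⟩
    exact (RPath.single ⟨hx, hc, ⟨v, c, rfl⟩, Or.inl le_rfl⟩).trans (hp.mono hW)

lemma up_step {x : Fin n → Fin 3} (hx : x ∈ RGBset n)
    (hb : colorCount n x 1 ≤ colorCount n x 2 + 1) (hlt : colorCount n x 0 < n) :
    ∃ v c, Function.update x v c ∈ RGBset n ∧
      colorCount n (Function.update x v c) 1 ≤ colorCount n (Function.update x v c) 2 + 1 ∧
      colorCount n (Function.update x v c) 0 = colorCount n x 0 + 1 := by
  have hx' := mem_RGB.mp hx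
  have hs := colorCount_sum x
  by_cases h : colorCount n x 1 = colorCount n x 2
  · obtain ⟨v, hv⟩ := exists_color (x := x) (j := 2) (by omega)
    have a0 := colorCount_update x v 0 0
    have a1 := colorCount_update x v 0 1
    have a2 := colorCount_update x v 0 2
    simp [hv] at a0 a1 a2
    refine ⟨v, 0, ?_, ?_, ?_⟩
    · rw [mem_RGB]; omega
    · omega
    · omega
  · obtain ⟨v, hv⟩ := exists_color (x := x) (j := 1) (by omega)
    have a0 := colorCount_update x v 0 0
    have a1 := colorCount_update x v 0 1
    have a2 := colorCount_update x v 0 2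
    simp [hv] at a0 a1 a2
    refine ⟨v, 0, ?_, ?_, ?_⟩
    · rw [mem_RGB]; omega
    · omega
    · omega

lemma down_step {x : Fin n → Fin 3} (hx : x ∈ RGBset n) (hn : 12 ≤ n)
    (hb : colorCount n x 1 ≤ colorCount n x 2 + 1) (hlt : n < 2 * colorCount n x 0) :
    ∃ v c, Function.update x v c ∈ RGBset n ∧
      colorCount n (Function.update x v c) 1 ≤ colorCount n (Function.update x v c) 2 + 1 ∧
      colorCount n (Function.update x v c) 0 + 1 = colorCount n x 0 := by
  have hx' := mem_RGB.mp hx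
  have hs := colorCount_sum x
  obtain ⟨v, hv⟩ := exists_color (x := x) (j := 0) (by omega)
  by_cases h : colorCount n x 1 = colorCount n x 2
  · have a0 := colorCount_update x v 1 0
    have a1 := colorCount_update x v 1 1
    have a2 := colorCount_update x v 1 2
    simp [hv] at a0 a1 a2
    refine ⟨v, 1, ?_, ?_, ?_⟩
    · rw [mem_RGB]; omega
    · omega
    · omega
  · have a0 := colorCount_update x v 2 0
    have a1 := colorCount_update x v 2 1
    have a2 := colorCount_update x v 2 2
    simp [hv] at a0 a1 a2
    refine ⟨v, 2, ?_, ?_, ?_⟩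
    · rw [mem_RGB]; omega
    · omega
    · omega

/-- Among balanced states the majority count can be moved monotonically to any `m ≥ n/2`. -/
lemma move_majority {β w : ℝ} {m : ℕ} (hn : 12 ≤ n) (hm : n ≤ 2 * m) (hmn : m ≤ n) (d : ℕ) :
    ∀ x ∈ RGBset n, colorCount n x 1 ≤ colorCount n x 2 + 1 →
    colorCount n x 0 ≤ m + d → m ≤ colorCount n x 0 + d →
    (∀ z ∈ RGBset n, colorCount n z 1 ≤ colorCount n z 2 + 1 →
      (colorCount n x 0 ≤ colorCount n z 0 ∧ colorCount n z 0 ≤ m ∨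
        m ≤ colorCount n z 0 ∧ colorCount n z 0 ≤ colorCount n x 0) → w ≤ Wt n β z) →
    ∃ y ∈ RGBset n, colorCount n y 1 ≤ colorCount n y 2 + 1 ∧ colorCount n y 0 = m ∧
      ∃ l ≤ d, RPath n β w l x y := by
  induction d with
  | zero =>
    intro x hx hb h1 h2 _
    exact ⟨x, hx, hb, by omega, 0, le_rfl, RPath.refl x⟩
  | succ d ih =>
    intro x hx hb h1 h2 hw
    rcases lt_trichotomy (colorCount n x 0) m with h | h | h
    · obtain ⟨v, c, hc, hcb, hc0⟩ := up_step hx hb (by omega)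
      obtain ⟨y, hy, hyb, hym, l, hl, hp⟩ := ih _ hc hcb (by omega) (by omega)
        (fun z hz hzb hz0 => hw z hz hzb (by omega))
      exact ⟨y, hy, hyb, hym, 1 + l, by omega,
        (RPath.single ⟨hx, hc, ⟨v, c, rfl⟩, Or.inl (hw x hx hb (by omega))⟩).trans hp⟩
    · exact ⟨x, hx, hb, h, 0, by omega, RPath.refl x⟩
    · obtain ⟨v, c, hc, hcb, hc0⟩ := down_step hx hn hb (by omega)
      obtain ⟨y, hy, hyb, hym, l, hl, hp⟩ := ih _ hc hcb (by omega) (by omega)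
        (fun z hz hzb hz0 => hw z hz hzb (by omega))
      exact ⟨y, hy, hyb, hym, 1 + l, by omega,
        (RPath.single ⟨hx, hc, ⟨v, c, rfl⟩, Or.inl (hw x hx hb (by omega))⟩).trans hp⟩

/-- Two states of one class with a clear majority are joined by swaps, each a pair of recolorings
touching the class. -/
lemma swap_path {β : ℝ} {z : Fin n → Fin 3} (hz : z ∈ RGBset n)
    (hgap : colorCount n z 1 + 2 ≤ colorCount n z 0) (d : ℕ) :
    ∀ x, colorCount n x = colorCount n z → (univ.filter (fun u => x u ≠ z u)).card ≤ d →
    ∃ l ≤ 2 * d, RPath n β (Wt n β z) l x z := by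
  induction d with
  | zero =>
    intro x _ h
    have : x = z := by
      funext u
      by_contra hu
      exact absurd (mem_filter.mpr ⟨mem_univ u, hu⟩ : u ∈ univ.filter (fun u => x u ≠ z u))
        (by rw [card_eq_zero.mp (Nat.le_zero.mp h)]; simp)
    exact ⟨0, le_rfl, this ▸ RPath.refl x⟩
  | succ d ih =>
    intro x hxz h
    by_cases hxe : x = z
    · exact ⟨0, by omega, hxe ▸ RPath.refl x⟩
    obtain ⟨u, hu⟩ := Function.ne_iff.mp hxe
    have hv : ∃ v, x v = z u ∧ z v ≠ z u := by
      by_contra! hcon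
      have hsub : univ.filter (fun i => x i = z u) ⊂ univ.filter (fun i => z i = z u) := by
        rw [Finset.ssubset_iff_of_subset (fun i hi => by simpa using hcon i (by simpa using hi))]
        exact ⟨u, by simp, by simpa using hu⟩
      have := card_lt_card hsub
      have h' := congrFun hxz (z u)
      unfold colorCount at h'
      omega
    obtain ⟨v, hv1, hv2⟩ := hv
    have huv : u ≠ v := by rintro rfl; exact hv2 rfl
    have hcx := fun j => congrFun hxz j
    set x' := Function.update (Function.update x u (x v)) v (x u) with hx'
    have hx'2 : x' = Function.update (Function.update x v (x u)) u (x v) :=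
      Function.update_comm huv.symm _ _ _ ▸ rfl
    have hswap : x' = x ∘ Equiv.swap u v := by
      funext i
      by_cases h1 : i = u
      · subst h1; simp [hx', huv]
      by_cases h2 : i = v
      · subst h2; simp [hx']
      · simp [hx', h1, h2, Equiv.swap_apply_of_ne_of_ne h1 h2]
    have hx'c : colorCount n x' = colorCount n z := by rw [hswap, colorCount_comp, hxz]
    have hx'h : (univ.filter (fun i => x' i ≠ z i)).card ≤ d := by
      have : univ.filter (fun i => x' i ≠ z i) ⊂ univ.filter (fun i => x i ≠ z i) := by
        rw [Finset.ssubset_iff_of_subset]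
        · refine ⟨u, by simpa using hu, ?_⟩
          simp [hx', huv, hv1]
        · intro i hi
          simp only [mem_filter, mem_univ, true_and] at hi ⊢
          by_cases h1 : i = u
          · subst h1; exact hu
          by_cases h2 : i = v
          · subst h2; rw [hv1]; exact hv2.symm
          · simpa [hx', h1, h2] using hi
      have := card_lt_card this
      omega
    have hxR : x ∈ RGBset n := (mem_RGB_congr hxz).mpr hz
    have hx'R : x' ∈ RGBset n := (mem_RGB_congr hx'c).mpr hz
    obtain ⟨l, hl, hp⟩ := ih x' hx'c hx'h
    -- Recoloring `0 → 1`, `2 → 0` or `2 → 1` never leaves the region, so one order works.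
    have hmid : Function.update x u (x v) ∈ RGBset n ∨ Function.update x v (x u) ∈ RGBset n := by
      have hz' := mem_RGB.mp hz
      have c0 := hcx 0
      have c1 := hcx 1
      have c2 := hcx 2
      have a0 := colorCount_update x u (x v) 0
      have a1 := colorCount_update x u (x v) 1
      have a2 := colorCount_update x u (x v) 2
      have b0 := colorCount_update x v (x u) 0
      have b1 := colorCount_update x v (x u) 1
      have b2 := colorCount_update x v (x u) 2
      have hne : x u ≠ x v := by rw [hv1]; exact hu
      rw [mem_RGB, mem_RGB]
      generalize Function.update x u (x v) = y1 at *
      generalize Function.update x v (x u) = y2 at *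
      clear hx' hx'2
      generalize x u = p at *
      generalize x v = q at *
      fin_cases p <;> fin_cases q <;> simp at hne a0 a1 a2 b0 b1 b2 <;> omega
    refine ⟨(1 + 1) + l, by omega, RPath.trans ?_ hp⟩
    rcases hmid with hmid | hmid
    · exact (RPath.single ⟨hxR, hmid, ⟨u, x v, rfl⟩, Or.inl (Wt_congr β hxz).ge⟩).trans
        (RPath.single ⟨hmid, hx'R, ⟨v, x u, rfl⟩, Or.inr (Wt_congr β hx'c).ge⟩)
    · exact (RPath.single ⟨hxR, hmid, ⟨v, x u, rfl⟩, Or.inl (Wt_congr β hxz).ge⟩).trans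
        (RPath.single ⟨hmid, hx'R, ⟨u, x v, hx'2.symm⟩, Or.inr (Wt_congr β hx'c).ge⟩)

lemma balanced_congr {x y : Fin n → Fin 3} (hx : x ∈ RGBset n) (hy : y ∈ RGBset n)
    (hxb : colorCount n x 1 ≤ colorCount n x 2 + 1) (hyb : colorCount n y 1 ≤ colorCount n y 2 + 1)
    (h : colorCount n x 0 = colorCount n y 0) : colorCount n x = colorCount n y := by
  have h1 := mem_RGB.mp hx
  have h2 := mem_RGB.mp hy
  have h3 := colorCount_sum x
  have h4 := colorCount_sum y
  funext j
  fin_cases j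
  · exact h
  · change colorCount n x 1 = colorCount n y 1; omega
  · change colorCount n x 2 = colorCount n y 2; omega

/-- Joining any state to a fixed balanced state `z`: balance the minorities, move the majority
count, then permute. -/
lemma canonical_path {β w : ℝ} (hn : 12 ≤ n) {z : Fin n → Fin 3} (hz : z ∈ RGBset n)
    (hzb : colorCount n z 1 ≤ colorCount n z 2 + 1) (hm : n ≤ 2 * colorCount n z 0)
    {x : Fin n → Fin 3} (hx : x ∈ RGBset n) (hwx : w ≤ Wt n β x)
    (hw : ∀ y ∈ RGBset n, colorCount n y 1 ≤ colorCount n y 2 + 1 → Wt n β x ≤ Wt n β y →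
      ∀ y' ∈ RGBset n, colorCount n y' 1 ≤ colorCount n y' 2 + 1 →
      (colorCount n y 0 ≤ colorCount n y' 0 ∧ colorCount n y' 0 ≤ colorCount n z 0 ∨
        colorCount n z 0 ≤ colorCount n y' 0 ∧ colorCount n y' 0 ≤ colorCount n y 0) →
        w ≤ Wt n β y') :
    ∃ l ≤ 4 * n, RPath n β w l x z := by
  have hsx := colorCount_sum x
  have hsz := colorCount_sum z
  have hz' := mem_RGB.mp hz
  obtain ⟨y, hy, hyb, hWy, l1, hl1, hp1⟩ := balance β n x hx (by omega)
  have hsy := colorCount_sum y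
  have hwy := hw y hy hyb hWy
  obtain ⟨y', hy', hyb', hym', l2, hl2, hp2⟩ := move_majority (β := β) (w := w)
    (m := colorCount n z 0) hn hm (by omega) n y hy hyb (by omega) (by omega) hwy
  obtain ⟨l3, hl3, hp3⟩ := swap_path (β := β) hz (by omega) n y'
    (balanced_congr hy' hz hyb' hzb hym')
    ((card_filter_le _ _).trans (by simp))
  have hwz : w ≤ Wt n β z := hwy z hz hzb (by omega)
  exact ⟨l1 + l2 + l3, by omega, ((hp1.mono hwx).trans hp2).trans (hp3.mono hwz)⟩

lemma exists_config (a b c : ℕ) (h : a + b + c = n) : ∃ x : Fin n → Fin 3,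
    colorCount n x 0 = a ∧ colorCount n x 1 = b ∧ colorCount n x 2 = c := by
  induction c generalizing a with
  | zero =>
    induction b generalizing a with
    | zero => exact ⟨fun _ => 0, by simp [colorCount]; omega, by simp [colorCount],
        by simp [colorCount]⟩
    | succ b ih =>
      obtain ⟨x, h0, h1, h2⟩ := ih (a + 1) (by omega)
      obtain ⟨v, hv⟩ := exists_color (x := x) (j := 0) (by omega)
      have a0 := colorCount_update x v 1 0
      have a1 := colorCount_update x v 1 1
      have a2 := colorCount_update x v 1 2
      simp [hv] at a0 a1 a2
      exact ⟨Function.update x v 1, by omega, by omega, by omega⟩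
  | succ c ih =>
    obtain ⟨x, h0, h1, h2⟩ := ih (a + 1) (by omega)
    obtain ⟨v, hv⟩ := exists_color (x := x) (j := 0) (by omega)
    have a0 := colorCount_update x v 2 0
    have a1 := colorCount_update x v 2 1
    have a2 := colorCount_update x v 2 2
    simp [hv] at a0 a1 a2
    exact ⟨Function.update x v 2, by omega, by omega, by omega⟩

lemma metroRGB_pos_of_update (β : ℝ) {a b : RGBset n} {v : Fin n} {c : Fin 3}
    (h : Function.update a.1 v c = b.1) :
    0 < metropolis (propRGB n) (gibbsRGB n β) a b := by
  by_cases hab : b = a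
  · rw [hab]; linarith [(metroRGB_revChain β).2 a]
  · simp only [metropolis, Matrix.of_apply, hab, if_false]
    exact mul_pos (prop_pos_of_update h)
      (lt_min one_pos (div_pos (gibbsRGB_pos β b) (gibbsRGB_pos β a)))

lemma RPath.reflTransGen {β w : ℝ} (β' : ℝ) {k : ℕ} {x y : Fin n → Fin 3} (h : RPath n β w k x y)
    (hx : x ∈ RGBset n) : ∃ hy : y ∈ RGBset n,
    Relation.ReflTransGen (fun a b => 0 < metropolis (propRGB n) (gibbsRGB n β') a b)
      ⟨x, hx⟩ ⟨y, hy⟩ ∧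
    Relation.ReflTransGen (fun a b => 0 < metropolis (propRGB n) (gibbsRGB n β') a b)
      ⟨y, hy⟩ ⟨x, hx⟩ := by
  induction h with
  | refl => exact ⟨hx, .refl, .refl⟩
  | @tail _ _ y _ _ hs ih =>
    obtain ⟨hy, h1, h2⟩ := ih hx
    obtain ⟨_, hz, ⟨v, c, rfl⟩, _⟩ := hs
    refine ⟨hz, h1.tail (metroRGB_pos_of_update β' (v := v) (c := c) rfl), .head ?_ h2⟩
    exact metroRGB_pos_of_update β' (v := v) (c := y v) (by simp)

lemma metroRGB_connected (hn : 12 ≤ n) (β : ℝ) (x y : RGBset n) :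
    Relation.ReflTransGen (fun a b => 0 < metropolis (propRGB n) (gibbsRGB n β) a b) x y := by
  have h0 : colorCount n (fun _ => 0) 0 = n := by simp [colorCount]
  have key : ∀ x : RGBset n, ∃ l, RPath n β 0 l x.1 (fun _ => 0) := by
    intro x
    obtain ⟨l, _, hl⟩ := canonical_path (β := β) (w := 0) hn const_mem_RGB (by simp [colorCount])
      (by rw [h0]; omega) x.2 (Wt_pos β _).le (fun _ _ _ _ y' _ _ _ => (Wt_pos β y').le)
    exact ⟨l, hl⟩
  obtain ⟨_, hx⟩ := key x
  obtain ⟨_, hy⟩ := key y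
  obtain ⟨_, h1, _⟩ := hx.reflTransGen β x.2
  obtain ⟨_, _, h2⟩ := hy.reflTransGen β y.2
  exact h1.trans h2

end canonical

/-! ### The free energy along the balanced line -/

section freeEnergy

/-- Mean-field free energy at color densities `(s, t, u)`. -/
noncomputable def FF (μ s t u : ℝ) : ℝ :=
  s.negMulLog + t.negMulLog + u.negMulLog + μ / 2 * (s ^ 2 + t ^ 2 + u ^ 2)

/-- Free energy on the balanced line `(s, (1-s)/2, (1-s)/2)`. -/
noncomputable def gg (μ s : ℝ) : ℝ := FF μ s ((1 - s) / 2) ((1 - s) / 2)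

/-- The derivative of `gg μ`. -/
noncomputable def hh (μ s : ℝ) : ℝ :=
  Real.log (1 - s) - Real.log s - Real.log 2 + μ * (3 * s - 1) / 2

/-- The value `log 3 - (19/12) log 2` of the free-energy barrier at the critical `μ = 4 log 2`. -/
noncomputable def c0 : ℝ := Real.log 3 - 19 / 12 * Real.log 2

lemma c0_pos : 0 < c0 := by
  have h : Real.log ((2 : ℝ) ^ 19) < Real.log ((3 : ℝ) ^ 12) :=
    Real.log_lt_log (by norm_num) (by norm_num)
  rw [Real.log_pow, Real.log_pow] at h
  push_cast at h
  unfold c0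
  linarith

lemma gg_continuous (μ : ℝ) : Continuous (gg μ) := by
  unfold gg FF
  have := Real.continuous_negMulLog
  fun_prop

lemma gg_hasDerivAt (μ : ℝ) {s : ℝ} (h0 : 0 < s) (h1 : s < 1) :
    HasDerivAt (gg μ) (hh μ s) s := by
  have d1 := Real.hasDerivAt_negMulLog h0.ne'
  have hl : HasDerivAt (fun s : ℝ => (1 - s) / 2) (-1 / 2) s :=
    ((hasDerivAt_id s).const_sub 1).div_const 2
  have d2 := (Real.hasDerivAt_negMulLog (by linarith : (0:ℝ) < (1 - s) / 2).ne').comp s hl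
  have d3 := hl.pow 2
  have d4 := ((((hasDerivAt_id s).pow 2).add d3).add d3).const_mul (μ / 2)
  have := ((d1.add d2).add d2).add d4
  refine HasDerivAt.congr_deriv (f := gg μ) this ?_
  rw [hh, Real.log_div (by linarith) (by norm_num)]
  simp
  ring

lemma hh_hasDerivAt (μ : ℝ) {s : ℝ} (h0 : 0 < s) (h1 : s < 1) :
    HasDerivAt (hh μ) (-(s * (1 - s))⁻¹ + 3 * μ / 2) s := by
  have d1 : HasDerivAt (fun s : ℝ => Real.log (1 - s)) (-1 / (1 - s)) s :=
    ((hasDerivAt_id s).const_sub 1).log (by simp; linarith)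
  have d2 := Real.hasDerivAt_log h0.ne'
  have d3 : HasDerivAt (fun s : ℝ => μ * (3 * s - 1) / 2) (3 * μ / 2) s := by
    have := ((((hasDerivAt_id s).const_mul 3).sub_const 1).const_mul μ).div_const 2
    exact this.congr_deriv (by ring)
  have := ((d1.sub d2).sub_const (Real.log 2)).add d3
  refine HasDerivAt.congr_deriv (f := hh μ) this ?_
  have : 1 - s ≠ 0 := by linarith
  field_simp
  ring

lemma hh_half (μ : ℝ) : hh μ (1 / 2) = μ / 4 - Real.log 2 := by
  unfold hh; norm_num; ring

lemma hh_third (μ : ℝ) : hh μ (1 / 3) = 0 := by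
  unfold hh
  rw [show (1 : ℝ) - 1 / 3 = 2 * (1 / 3) by norm_num, Real.log_mul (by norm_num) (by norm_num)]
  norm_num

lemma hh_concave (μ : ℝ) {t : ℝ} (ht : t < 1) :
    ConcaveOn ℝ (Set.Icc (1 / 2) t) (hh μ) := by
  have hd : ∀ s ∈ Set.Icc (1 / 2) t, HasDerivAt (hh μ) (-(s * (1 - s))⁻¹ + 3 * μ / 2) s :=
    fun s hs => hh_hasDerivAt μ (by linarith [hs.1]) (by linarith [hs.2])
  refine AntitoneOn.concaveOn_of_deriv (convex_Icc _ _)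
    (fun s hs => (hd s hs).continuousAt.continuousWithinAt) ?_ ?_
  · intro s hs
    rw [interior_Icc] at hs
    exact (hd s (Set.Ioo_subset_Icc_self hs)).differentiableAt.differentiableWithinAt
  · intro s hs s' hs' hss
    rw [interior_Icc] at hs hs'
    rw [(hd s (Set.Ioo_subset_Icc_self hs)).deriv, (hd s' (Set.Ioo_subset_Icc_self hs')).deriv]
    have h1 : s' * (1 - s') ≤ s * (1 - s) := by nlinarith [hs.1, hs'.1]
    have h2 : 0 < s' * (1 - s') := mul_pos (by linarith [hs'.1]) (by linarith [hs'.2])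
    have := inv_anti₀ h2 h1
    linarith

lemma hh_convex (μ : ℝ) : ConvexOn ℝ (Set.Icc (1 / 3) (1 / 2)) (hh μ) := by
  have hd : ∀ s ∈ Set.Icc (1 / 3 : ℝ) (1 / 2), HasDerivAt (hh μ) (-(s * (1 - s))⁻¹ + 3 * μ / 2) s :=
    fun s hs => hh_hasDerivAt μ (by linarith [hs.1]) (by linarith [hs.2])
  refine MonotoneOn.convexOn_of_deriv (convex_Icc _ _)
    (fun s hs => (hd s hs).continuousAt.continuousWithinAt) ?_ ?_
  · intro s hs
    rw [interior_Icc] at hs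
    exact (hd s (Set.Ioo_subset_Icc_self hs)).differentiableAt.differentiableWithinAt
  · intro s hs s' hs' hss
    rw [interior_Icc] at hs hs'
    rw [(hd s (Set.Ioo_subset_Icc_self hs)).deriv, (hd s' (Set.Ioo_subset_Icc_self hs')).deriv]
    have h1 : s * (1 - s) ≤ s' * (1 - s') := by nlinarith [hs.2, hs'.2]
    have h2 : 0 < s * (1 - s) := mul_pos (by linarith [hs.1]) (by linarith [hs.2])
    have := inv_anti₀ h2 h1
    linarith

/-- Above the critical value, `gg μ` is quasi-concave on `[1/2, 1]`: its derivative is concave and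
positive at `1/2`, hence changes sign at most once. -/
lemma gg_quasiconcave {μ : ℝ} (hμ : 4 * Real.log 2 < μ) {a b c : ℝ} (ha : 1 / 2 ≤ a)
    (hab : a ≤ b) (hbc : b ≤ c) (hc : c ≤ 1) : gg μ a ≤ gg μ b ∨ gg μ c ≤ gg μ b := by
  by_contra! hcon
  obtain ⟨h1, h2⟩ := hcon
  have hab' : a < b := lt_of_le_of_ne hab (by rintro rfl; exact lt_irrefl _ h1)
  have hbc' : b < c := lt_of_le_of_ne hbc (by rintro rfl; exact lt_irrefl _ h2)
  obtain ⟨t1, ht1, e1⟩ := exists_hasDerivAt_eq_slope (gg μ) (hh μ) hab'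
    (gg_continuous μ).continuousOn
    (fun s hs => gg_hasDerivAt μ (by linarith [hs.1]) (by linarith [hs.2]))
  obtain ⟨t2, ht2, e2⟩ := exists_hasDerivAt_eq_slope (gg μ) (hh μ) hbc'
    (gg_continuous μ).continuousOn
    (fun s hs => gg_hasDerivAt μ (by linarith [hs.1]) (by linarith [hs.2]))
  have n1 : hh μ t1 < 0 := by rw [e1]; exact div_neg_of_neg_of_pos (by linarith) (by linarith)
  have n2 : 0 < hh μ t2 := by rw [e2]; exact div_pos (by linarith) (by linarith)
  have hcv := hh_concave μ (t := t2) (by linarith [ht2.2])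
  have := hcv.min_le_of_mem_Icc (x := 1 / 2) (y := t2) (z := t1)
    ⟨le_rfl, by linarith [ht1.1, ht2.1]⟩ ⟨by linarith [ht1.1, ht2.1], le_rfl⟩
    ⟨by linarith [ht1.1], by linarith [ht1.2, ht2.1]⟩
  have h3 : 0 < hh μ (1 / 2) := by rw [hh_half]; linarith
  rcases min_le_iff.mp this with h | h <;> linarith

lemma gg_crit_antitone : AntitoneOn (gg (4 * Real.log 2)) (Set.Icc (1 / 3) (1 / 2)) := by
  refine antitoneOn_of_deriv_nonpos (convex_Icc _ _) (gg_continuous _).continuousOn ?_ ?_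
  · intro s hs
    rw [interior_Icc] at hs
    exact (gg_hasDerivAt _ (by linarith [hs.1]) (by linarith [hs.2])).differentiableAt.differentiableWithinAt
  · intro s hs
    rw [interior_Icc] at hs
    rw [(gg_hasDerivAt _ (by linarith [hs.1]) (by linarith [hs.2])).deriv]
    have := (hh_convex (4 * Real.log 2)).le_max_of_mem_Icc (x := 1 / 3) (y := 1 / 2) (z := s)
      ⟨le_rfl, by norm_num⟩ ⟨by norm_num, le_rfl⟩ ⟨hs.1.le, hs.2.le⟩
    rw [hh_third, hh_half] at this
    simpa using this

lemma log_third : Real.log (1 / 3) = -Real.log 3 := by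
  rw [one_div, Real.log_inv]

lemma log_half : Real.log (1 / 2) = -Real.log 2 := by
  rw [one_div, Real.log_inv]

lemma log_quarter : Real.log (1 / 4) = -(2 * Real.log 2) := by
  rw [one_div, Real.log_inv, show (4 : ℝ) = 2 ^ 2 by norm_num, Real.log_pow]; push_cast; ring

lemma log_sixth : Real.log (1 / 6) = -(Real.log 2 + Real.log 3) := by
  rw [one_div, Real.log_inv, show (6 : ℝ) = 2 * 3 by norm_num,
    Real.log_mul (by norm_num) (by norm_num)]

lemma log_two_thirds : Real.log (2 / 3) = Real.log 2 - Real.log 3 :=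
  Real.log_div (by norm_num) (by norm_num)

lemma gg_third (μ : ℝ) : gg μ (1 / 3) = Real.log 3 + μ / 6 := by
  rw [gg, FF, show ((1 : ℝ) - 1 / 3) / 2 = 1 / 3 by norm_num, Real.negMulLog, log_third]; ring

lemma gg_half (μ : ℝ) : gg μ (1 / 2) = 3 / 2 * Real.log 2 + 3 * μ / 16 := by
  rw [gg, FF, show ((1 : ℝ) - 1 / 2) / 2 = 1 / 4 by norm_num, Real.negMulLog, Real.negMulLog,
    log_half, log_quarter]; ring

lemma gg_two_thirds (μ : ℝ) : gg μ (2 / 3) = Real.log 3 - Real.log 2 / 3 + μ / 4 := by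
  rw [gg, FF, show ((1 : ℝ) - 2 / 3) / 2 = 1 / 6 by norm_num, Real.negMulLog, Real.negMulLog,
    log_two_thirds, log_sixth]; ring

lemma gg_crit (μ s : ℝ) : gg μ s = gg (4 * Real.log 2) s +
    (μ - 4 * Real.log 2) / 2 * (s ^ 2 + (1 - s) ^ 2 / 2) := by
  unfold gg FF; ring

lemma gg_crit_barrier {s t : ℝ} (hs : 1 / 3 ≤ s) (hst : s ≤ t) (ht : t ≤ 1 / 2) :
    gg (4 * Real.log 2) s - gg (4 * Real.log 2) t ≤ c0 := by
  have h1 := gg_crit_antitone (a := 1 / 3) (b := s) ⟨le_rfl, by norm_num⟩ ⟨hs, hst.trans ht⟩ hs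
  have h2 := gg_crit_antitone (a := t) (b := 1 / 2) ⟨hs.trans hst, ht⟩ ⟨by norm_num, le_rfl⟩ ht
  rw [gg_third] at h1
  rw [gg_half] at h2
  unfold c0
  linarith

lemma gg_le_two_thirds {μ : ℝ} (hμ : 4 * Real.log 2 ≤ μ) {s : ℝ} (hs : 1 / 3 ≤ s)
    (hs' : s ≤ 1 / 2) : gg μ s ≤ gg μ (2 / 3) := by
  rw [gg_crit μ s, gg_crit μ (2 / 3)]
  have h1 := gg_crit_antitone (a := 1 / 3) (b := s) ⟨le_rfl, by norm_num⟩ ⟨hs, hs'⟩ hs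
  rw [gg_third] at h1
  rw [gg_two_thirds]
  have h2 : s ^ 2 + (1 - s) ^ 2 / 2 ≤ (2 / 3) ^ 2 + (1 - 2 / 3) ^ 2 / 2 := by nlinarith
  have h3 := mul_le_mul_of_nonneg_left h2 (by linarith : 0 ≤ (μ - 4 * Real.log 2) / 2)
  linarith

/-- Strictly above the critical value the barrier on `[1/3, 1/2]` is strictly below `c0`. -/
lemma exists_barrier {μ : ℝ} (hμ : 4 * Real.log 2 < μ) : ∃ b, 0 ≤ b ∧ b < c0 ∧
    ∀ s t, 1 / 3 ≤ s → s ≤ t → t ≤ 1 / 2 → gg μ s - b ≤ gg μ t := by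
  set K : Set (ℝ × ℝ) := (Set.Icc (1 / 3) (1 / 2) ×ˢ Set.Icc (1 / 3) (1 / 2)) ∩ {p | p.1 ≤ p.2}
  have hK : IsCompact K := (isCompact_Icc.prod isCompact_Icc).inter_right
    (isClosed_le continuous_fst continuous_snd)
  have hmem : ((1 / 3 : ℝ), (1 / 3 : ℝ)) ∈ K := by
    refine ⟨⟨⟨le_rfl, by norm_num⟩, ⟨le_rfl, by norm_num⟩⟩, le_refl (1 / 3 : ℝ)⟩
  have hcont : ContinuousOn (fun p : ℝ × ℝ => gg μ p.1 - gg μ p.2) K :=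
    (((gg_continuous μ).comp continuous_fst).sub ((gg_continuous μ).comp continuous_snd)).continuousOn
  obtain ⟨⟨s0, t0⟩, ⟨⟨hs0, ht0⟩, hst0⟩, hmax⟩ := hK.exists_isMaxOn ⟨_, hmem⟩ hcont
  have hst0 : s0 ≤ t0 := hst0
  refine ⟨gg μ s0 - gg μ t0, ?_, ?_, ?_⟩
  · have := hmax hmem
    simpa using this
  · rcases hst0.eq_or_lt with h | h
    · rw [h, sub_self]; exact c0_pos
    · rw [gg_crit μ s0, gg_crit μ t0]
      have h1 := gg_crit_barrier hs0.1 hst0 ht0.2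
      have h2 : s0 ^ 2 + (1 - s0) ^ 2 / 2 < t0 ^ 2 + (1 - t0) ^ 2 / 2 := by
        have := hs0.1
        nlinarith
      have h3 := mul_lt_mul_of_pos_left h2 (by linarith : 0 < (μ - 4 * Real.log 2) / 2)
      linarith
  · intro s t hs hst ht
    have := hmax (show (s, t) ∈ K from ⟨⟨⟨hs, hst.trans ht⟩, ⟨hs.trans hst, ht⟩⟩, hst⟩)
    simp only [Set.mem_ofPred_eq] at this
    linarith

/-- The landscape of `gg μ` on `[1/3, 1]`: moving monotonically to the maximizer `r` of the ordered
phase never requires climbing down by more than some `b < c0`. -/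
lemma exists_landscape {μ : ℝ} (hμ : 4 * Real.log 2 < μ) : ∃ b r, 0 ≤ b ∧ b < c0 ∧ 1 / 2 ≤ r ∧
    r ≤ 1 ∧ (∀ s t, 1 / 3 ≤ s → s ≤ t → t ≤ r → gg μ s - b ≤ gg μ t) ∧
    (∀ s t, s ≤ 1 → r ≤ t → t ≤ s → gg μ s ≤ gg μ t) := by
  obtain ⟨b, hb0, hb, hbar⟩ := exists_barrier hμ
  obtain ⟨r, hr, hmax⟩ := isCompact_Icc.exists_isMaxOn (⟨1 / 2, le_rfl, by norm_num⟩ :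
    (Set.Icc (1 / 2 : ℝ) 1).Nonempty) (gg_continuous μ).continuousOn
  have hmax' : ∀ s, 1 / 2 ≤ s → s ≤ 1 → gg μ s ≤ gg μ r := fun s h1 h2 => hmax ⟨h1, h2⟩
  have hup : ∀ s t, 1 / 2 ≤ s → s ≤ t → t ≤ r → gg μ s ≤ gg μ t := by
    intro s t hs hst ht
    rcases gg_quasiconcave hμ hs hst ht hr.2 with h | h
    · exact h
    · exact (hmax' s hs (by linarith [hr.2])).trans h
  refine ⟨b, r, hb0, hb, hr.1, hr.2, ?_, ?_⟩
  · intro s t hs hst ht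
    by_cases h1 : 1 / 2 ≤ s
    · linarith [hup s t h1 hst ht]
    push Not at h1
    by_cases h2 : 1 / 2 ≤ t
    · linarith [hup (1 / 2) t le_rfl h2 ht, hbar s (1 / 2) hs h1.le le_rfl]
    · exact hbar s t hs hst (by linarith)
  · intro s t hs hrt hts
    rcases gg_quasiconcave hμ hr.1 hrt hts hs with h | h
    · exact (hmax' s (by linarith [hr.1]) hs).trans h
    · exact h

end freeEnergy

/-! ### Weights of color classes and the free energy -/

section weights

lemma log_factorial_ge (a : ℕ) : (a : ℝ) * Real.log a - a ≤ Real.log (a.factorial : ℝ) := by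
  induction a with
  | zero => simp
  | succ a ih =>
    rw [Nat.factorial_succ]
    push_cast
    rw [Real.log_mul (by positivity) (by exact_mod_cast a.factorial_ne_zero)]
    have key : (a : ℝ) * (Real.log (a + 1) - Real.log a) ≤ 1 := by
      rcases Nat.eq_zero_or_pos a with rfl | ha
      · simp
      have ha' : (0 : ℝ) < a := by exact_mod_cast ha
      rw [← Real.log_div (by positivity) (by positivity)]
      have := Real.log_le_sub_one_of_pos (show (0 : ℝ) < (a + 1) / a by positivity)
      calc (a : ℝ) * Real.log ((a + 1) / a) ≤ a * ((a + 1) / a - 1) := by gcongr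
        _ = 1 := by field_simp; ring
    linarith

lemma log_factorial_le (a : ℕ) :
    Real.log (a.factorial : ℝ) ≤ a * Real.log a - a + Real.log a + 1 := by
  induction a with
  | zero => simp
  | succ a ih =>
    rcases Nat.eq_zero_or_pos a with rfl | ha
    · simp
    rw [Nat.factorial_succ]
    push_cast
    rw [Real.log_mul (by positivity) (by exact_mod_cast a.factorial_ne_zero)]
    have ha' : (0 : ℝ) < a := by exact_mod_cast ha
    have key : 1 ≤ ((a : ℝ) + 1) * (Real.log (a + 1) - Real.log a) := by
      have := Real.log_le_sub_one_of_pos (show (0 : ℝ) < a / (a + 1) by positivity)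
      rw [Real.log_div (by positivity) (by positivity)] at this
      calc (1 : ℝ) = (a + 1) * (1 - a / (a + 1)) := by field_simp; ring
        _ ≤ _ := mul_le_mul_of_nonneg_left (by linarith) (by positivity)
    linarith

variable {n : ℕ}

/-- Densities of the three colors plugged into the free energy. -/
noncomputable def FFc (μ : ℝ) (x : Fin n → Fin 3) : ℝ :=
  FF μ (colorCount n x 0 / n) (colorCount n x 1 / n) (colorCount n x 2 / n)

lemma mul_negMulLog_div (hn : 0 < n) (a : ℕ) :
    (n : ℝ) * ((a : ℝ) / n).negMulLog = a * Real.log n - a * Real.log a := by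
  have hn' : (n : ℝ) ≠ 0 := by positivity
  rcases Nat.eq_zero_or_pos a with rfl | ha
  · simp
  rw [Real.negMulLog, Real.log_div (by positivity) hn']
  field_simp
  ring

lemma log_Wt_eq (hn : 0 < n) (ν : ℝ) (x : Fin n → Fin 3) :
    Real.log (Wt n (ν / n) x) = Real.log (n.factorial : ℝ)
      - (Real.log ((colorCount n x 0).factorial : ℝ) + Real.log ((colorCount n x 1).factorial : ℝ)
        + Real.log ((colorCount n x 2).factorial : ℝ))
      + (ν / 2 * n * ((colorCount n x 0 / n : ℝ) ^ 2 + (colorCount n x 1 / n : ℝ) ^ 2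
        + (colorCount n x 2 / n : ℝ) ^ 2) - ν / 2) := by
  have hn' : (n : ℝ) ≠ 0 := by positivity
  have hc := card_cls_mul x
  rw [Fin.prod_univ_three] at hc
  have hc' : ((cls n x).card : ℝ) * ((colorCount n x 0).factorial * (colorCount n x 1).factorial
      * (colorCount n x 2).factorial) = (n.factorial : ℝ) := by exact_mod_cast hc
  have f0 : ∀ k : ℕ, (k.factorial : ℝ) ≠ 0 := fun k => by exact_mod_cast k.factorial_ne_zero
  have hp : (0 : ℝ) < (cls n x).card := by exact_mod_cast card_cls_pos x
  rw [Wt, Real.log_mul hp.ne' (Real.exp_pos _).ne', Real.log_exp, ← hc',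
    Real.log_mul hp.ne' (by simp [f0]), Real.log_mul (by simp [f0]) (f0 _),
    Real.log_mul (f0 _) (f0 _)]
  have := two_mul_pottsH_real x
  have h2 : (pottsH n x : ℝ) = ((colorCount n x 0 : ℝ) ^ 2 + (colorCount n x 1 : ℝ) ^ 2
    + (colorCount n x 2 : ℝ) ^ 2 - n) / 2 := by linarith
  rw [h2]
  field_simp
  ring

lemma colorCount_sum3 (x : Fin n → Fin 3) :
    (colorCount n x 0 : ℝ) + colorCount n x 1 + colorCount n x 2 = n := by
  exact_mod_cast colorCount_sum x

lemma log_Wt_le (hn : 0 < n) {ν : ℝ} (hν : 0 ≤ ν) (x : Fin n → Fin 3) :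
    Real.log (Wt n (ν / n) x) ≤ n * FFc ν x + Real.log n + 1 := by
  have h1 := log_factorial_le n
  have h2 := log_factorial_ge (colorCount n x 0)
  have h3 := log_factorial_ge (colorCount n x 1)
  have h4 := log_factorial_ge (colorCount n x 2)
  have hs := colorCount_sum3 x
  have e0 := mul_negMulLog_div hn (colorCount n x 0)
  have e1 := mul_negMulLog_div hn (colorCount n x 1)
  have e2 := mul_negMulLog_div hn (colorCount n x 2)
  rw [log_Wt_eq hn, FFc, FF]
  have : (n : ℝ) * Real.log n = colorCount n x 0 * Real.log n + colorCount n x 1 * Real.log n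
      + colorCount n x 2 * Real.log n := by rw [← hs]; ring
  linarith

lemma le_log_Wt (hn : 0 < n) (ν : ℝ) (x : Fin n → Fin 3) :
    n * FFc ν x - 3 * (Real.log n + 1) - ν / 2 ≤ Real.log (Wt n (ν / n) x) := by
  have h1 := log_factorial_ge n
  have h2 := log_factorial_le (colorCount n x 0)
  have h3 := log_factorial_le (colorCount n x 1)
  have h4 := log_factorial_le (colorCount n x 2)
  have hs := colorCount_sum3 x
  have e0 := mul_negMulLog_div hn (colorCount n x 0)
  have e1 := mul_negMulLog_div hn (colorCount n x 1)
  have e2 := mul_negMulLog_div hn (colorCount n x 2)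
  have hl : ∀ j, Real.log (colorCount n x j : ℝ) ≤ Real.log n := fun j => by
    rcases Nat.eq_zero_or_pos (colorCount n x j) with h | h
    · rw [h]; simpa using Real.log_natCast_nonneg n
    · refine Real.log_le_log (by exact_mod_cast h) ?_
      exact_mod_cast (card_le_univ _).trans (by simp)
  have l0 := hl 0
  have l1 := hl 1
  have l2 := hl 2
  rw [log_Wt_eq hn, FFc, FF]
  have : (n : ℝ) * Real.log n = colorCount n x 0 * Real.log n + colorCount n x 1 * Real.log n
      + colorCount n x 2 * Real.log n := by rw [← hs]; ring
  linarith

end weights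

/-! ### Asymptotic comparisons -/

section asymptotics

open Filter Topology

lemma eventually_poly_le_exp (C : ℝ) (k : ℕ) {δ : ℝ} (hδ : 0 < δ) :
    ∀ᶠ n : ℕ in atTop, C * ((n : ℝ) + 1) ^ k ≤ Real.exp (δ * n) := by
  have h1 : Tendsto (fun x : ℝ => Real.exp (δ * x) / x ^ k) atTop atTop := by
    have := tendsto_exp_mul_div_rpow_atTop (k : ℝ) δ hδ
    simpa using this
  have h2 : Tendsto (fun n : ℕ => (n : ℝ) + 1) atTop atTop :=
    tendsto_atTop_add_const_right _ _ tendsto_natCast_atTop_atTop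
  filter_upwards [(h1.comp h2).eventually_ge_atTop (C * Real.exp δ)] with n hn
  simp only [Function.comp] at hn
  rw [le_div_iff₀ (by positivity), mul_add, mul_one, Real.exp_add] at hn
  have := Real.exp_pos δ
  nlinarith

lemma eventually_log_le (C : ℝ) {δ : ℝ} (hδ : 0 < δ) :
    ∀ᶠ n : ℕ in atTop, 3 * (Real.log n + 1) + C ≤ δ * n := by
  filter_upwards [eventually_poly_le_exp (Real.exp (3 + C)) 3 hδ, eventually_gt_atTop 0]
    with n hn h0
  have hn0 : (0 : ℝ) < n := by exact_mod_cast h0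
  rw [← Real.exp_le_exp]
  refine le_trans ?_ hn
  rw [show 3 * (Real.log n + 1) + C = (3 + C) + ((3 : ℕ) : ℝ) * Real.log n by push_cast; ring,
    Real.exp_add, Real.exp_nat_mul, Real.exp_log hn0]
  gcongr
  linarith

/-- Up to `e^{o(n)}`, uniformly in the inverse temperature, the weight of a color class is the
exponential of `n` times the free energy. -/
lemma eventually_log_Wt {μ δ : ℝ} (hμ : 0 ≤ μ) (hδ : 0 < δ) :
    ∀ᶠ n : ℕ in atTop, ∀ ν, 0 ≤ ν → ν ≤ μ → ∀ x : Fin n → Fin 3,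
      |Real.log (Wt n (ν / n) x) - n * FFc ν x| ≤ δ * n := by
  filter_upwards [eventually_log_le (μ / 2) hδ, eventually_gt_atTop 0]
    with n hn h0 ν hν hνμ x
  have h1 := log_Wt_le h0 hν x
  have h2 := le_log_Wt h0 ν x
  have h3 := Real.log_natCast_nonneg n
  rw [abs_le]
  constructor <;> linarith

/-- On balanced configurations the free energy is asymptotically that of the balanced line. -/
lemma eventually_FFc_balanced {μ δ : ℝ} (hμ : 0 ≤ μ) (hδ : 0 < δ) :
    ∀ᶠ n : ℕ in atTop, ∀ x ∈ RGBset n, colorCount n x 1 ≤ colorCount n x 2 + 1 →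
      |FFc μ x - gg μ (colorCount n x 0 / n)| ≤ δ := by
  have hu : UniformContinuousOn Real.negMulLog (Set.Icc 0 1) :=
    isCompact_Icc.uniformContinuousOn_of_continuous Real.continuous_negMulLog.continuousOn
  rw [Metric.uniformContinuousOn_iff] at hu
  obtain ⟨η, hη, hu⟩ := hu (δ / 3) (by positivity)
  have t1 := (tendsto_one_div_atTop_nhds_zero_nat (𝕜 := ℝ)).eventually_lt_const hη
  have t2 : ∀ᶠ n : ℕ in atTop, μ / n < δ / 3 :=
    (tendsto_const_div_atTop_nhds_zero_nat μ).eventually_lt_const (by positivity)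
  filter_upwards [t1, t2, eventually_gt_atTop 0] with n h1 h2 h0 x hx hb
  have hn0 : (0 : ℝ) < n := by exact_mod_cast h0
  have hn1 : (1 : ℝ) ≤ n := by exact_mod_cast h0
  obtain ⟨-, hx2⟩ := mem_RGB.1 hx
  have hx2' : (colorCount n x 2 : ℝ) ≤ colorCount n x 1 := by exact_mod_cast hx2
  have hb' : (colorCount n x 1 : ℝ) ≤ colorCount n x 2 + 1 := by exact_mod_cast hb
  have hs : (colorCount n x 0 / n : ℝ) + colorCount n x 1 / n + colorCount n x 2 / n = 1 := by
    rw [← add_div, ← add_div, colorCount_sum3, div_self hn0.ne']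
  have p0 : (0 : ℝ) ≤ colorCount n x 0 / n := by positivity
  have p1 : (0 : ℝ) ≤ colorCount n x 1 / n := by positivity
  have p2 : (0 : ℝ) ≤ colorCount n x 2 / n := by positivity
  have q1 : (colorCount n x 2 / n : ℝ) ≤ colorCount n x 1 / n := by gcongr
  have q2 : (colorCount n x 1 / n : ℝ) ≤ colorCount n x 2 / n + 1 / n := by
    rw [← add_div]; gcongr
  have q3 : (1 : ℝ) / n ≤ 1 := by rw [div_le_one hn0]; exact hn1
  rw [show μ / n = μ * (1 / n) by ring] at h2
  have h4 : (0 : ℝ) < 1 / n := by positivity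
  unfold FFc gg FF
  generalize (colorCount n x 0 / n : ℝ) = s at *
  generalize (colorCount n x 1 / n : ℝ) = t at *
  generalize (colorCount n x 2 / n : ℝ) = u at *
  generalize (1 / n : ℝ) = e at *
  have a1 := hu t ⟨p1, by linarith⟩ ((1 - s) / 2) ⟨by linarith, by linarith⟩
    (by rw [Real.dist_eq, abs_lt]; constructor <;> linarith)
  have a2 := hu u ⟨p2, by linarith⟩ ((1 - s) / 2) ⟨by linarith, by linarith⟩
    (by rw [Real.dist_eq, abs_lt]; constructor <;> linarith)
  rw [Real.dist_eq, abs_lt] at a1 a2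
  have hq : t ^ 2 + u ^ 2 - (((1 - s) / 2) ^ 2 + ((1 - s) / 2) ^ 2) = (t - u) ^ 2 / 2 := by
    rw [show s = 1 - t - u by linarith]; ring
  have hq2 : (t - u) ^ 2 ≤ e := by nlinarith
  have hq3 : μ / 2 * ((t - u) ^ 2 / 2) ≤ δ / 3 := by nlinarith
  have hq4 : 0 ≤ μ / 2 * ((t - u) ^ 2 / 2) := by positivity
  rw [← hq] at hq3 hq4
  rw [abs_le]
  constructor <;> nlinarith

lemma eventually_log_Wt_balanced {μ δ : ℝ} (hμ : 0 ≤ μ) (hδ : 0 < δ) :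
    ∀ᶠ n : ℕ in atTop, ∀ x ∈ RGBset n, colorCount n x 1 ≤ colorCount n x 2 + 1 →
      |Real.log (Wt n (μ / n) x) - n * gg μ (colorCount n x 0 / n)| ≤ δ * n := by
  filter_upwards [eventually_log_Wt hμ (half_pos hδ), eventually_FFc_balanced hμ (half_pos hδ)]
    with n h1 h2 x hx hb
  have a := h1 μ hμ le_rfl x
  have b := h2 x hx hb
  have hn : (0 : ℝ) ≤ n := by positivity
  rw [abs_le] at *
  constructor <;> nlinarith

end asymptotics

/-! ### The Metropolis chain mixes in time `e^{(b + o(1)) n}` -/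

section upper

open Filter Topology

variable {n : ℕ}

lemma pottsH_le (x : Fin n → Fin 3) : (pottsH n x : ℝ) ≤ n * n := by
  have h := two_mul_pottsH_real x
  have hs := colorCount_sum3 x
  have h0 : (0 : ℝ) ≤ colorCount n x 0 := by positivity
  have h1 : (0 : ℝ) ≤ colorCount n x 1 := by positivity
  have h2 : (0 : ℝ) ≤ colorCount n x 2 := by positivity
  have hn : (0 : ℝ) ≤ n := by positivity
  have hH : (0 : ℝ) ≤ pottsH n x := by positivity
  have : (colorCount n x 0 : ℝ) ^ 2 + (colorCount n x 1 : ℝ) ^ 2 + (colorCount n x 2 : ℝ) ^ 2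
      ≤ n * n := by
    rw [← hs]
    nlinarith [mul_nonneg h0 h1, mul_nonneg h0 h2, mul_nonneg h1 h2]
  linarith

lemma exp_neg_le_gibbsRGB (hn : 0 < n) {μ : ℝ} (hμ : 0 ≤ μ) (x : ↥(RGBset n)) :
    Real.exp (-((Real.log 3 + μ) * n)) ≤ gibbsRGB n (μ / n) x := by
  have hn' : (0 : ℝ) < n := by exact_mod_cast hn
  rw [gibbsRGB_eq, Real.exp_neg, ← one_div]
  have hZ : ZRGB n (μ / n) ≤ Real.exp ((Real.log 3 + μ) * n) := by
    calc ZRGB n (μ / n) ≤ ∑ y ∈ RGBset n, Real.exp (μ * n) := by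
          refine sum_le_sum fun y _ => Real.exp_le_exp.2 ?_
          calc μ / n * pottsH n y ≤ μ / n * (n * n) := by gcongr; exact pottsH_le y
            _ = μ * n := by field_simp
      _ ≤ ∑ y : Fin n → Fin 3, Real.exp (μ * n) :=
          sum_le_sum_of_subset_of_nonneg (subset_univ _) fun _ _ _ => (Real.exp_pos _).le
      _ = Real.exp ((Real.log 3 + μ) * n) := by
          rw [add_mul, Real.exp_add, mul_comm (Real.log 3), Real.exp_nat_mul,
            Real.exp_log (by norm_num)]
          simp
  refine div_le_div₀ (Real.exp_pos _).le (Real.one_le_exp (by positivity)) (ZRGB_pos _) hZ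

/-- If the free energy drops by at most `b` on the way up to `r` and is decreasing beyond `r`,
then from every configuration there is a path to a fixed balanced configuration of density
about `r` along which the class weight drops by a factor of at most `e^{(b + o(1)) n}`. -/
lemma eventually_paths {μ b r δ : ℝ} (hμ : 0 ≤ μ) (hδ : 0 < δ) (hb : 0 ≤ b) (hr : 1 / 2 ≤ r)
    (hr1 : r ≤ 1) (h1 : ∀ s t, 1 / 3 ≤ s → s ≤ t → t ≤ r → gg μ s - b ≤ gg μ t)
    (h2 : ∀ s t, s ≤ 1 → r ≤ t → t ≤ s → gg μ s ≤ gg μ t) :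
    ∀ᶠ n : ℕ in atTop, ∃ z, ∀ x ∈ RGBset n, ∃ l ≤ 4 * n,
      RPath n (μ / n) (Wt n (μ / n) x * Real.exp (-((b + 3 * δ) * n))) l x z := by
  have hu : UniformContinuousOn (gg μ) (Set.Icc 0 1) :=
    isCompact_Icc.uniformContinuousOn_of_continuous (gg_continuous μ).continuousOn
  rw [Metric.uniformContinuousOn_iff] at hu
  obtain ⟨η, hη, hu⟩ := hu δ hδ
  have t1 := (tendsto_one_div_atTop_nhds_zero_nat (𝕜 := ℝ)).eventually_lt_const hη
  filter_upwards [t1, eventually_log_Wt_balanced hμ hδ, eventually_ge_atTop 12] with n hnη hW hn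
  have hn0 : (0 : ℝ) < n := by exact_mod_cast (by omega : 0 < n)
  obtain ⟨m, hm⟩ : ∃ m, m = ⌈r * n⌉₊ := ⟨_, rfl⟩
  have hm1 : r * n ≤ m := hm ▸ Nat.le_ceil _
  have hm2 : (m : ℝ) < r * n + 1 := hm ▸ Nat.ceil_lt_add_one (by positivity)
  have hmn : m ≤ n := hm ▸ Nat.ceil_le.2 (by nlinarith)
  have hnm : n ≤ 2 * m := by
    have : (n : ℝ) ≤ 2 * m := by nlinarith
    exact_mod_cast this
  obtain ⟨z, z0, z1, z2⟩ := exists_config (n := n) m ((n - m + 1) / 2) ((n - m) / 2) (by omega)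
  have hz : z ∈ RGBset n := mem_RGB.2 (by omega)
  refine ⟨z, fun x hx => canonical_path hn hz (by omega) (by omega) hx ?_ ?_⟩
  · refine mul_le_of_le_one_right (Wt_pos _ _).le (Real.exp_le_one_iff.2 ?_)
    have : 0 ≤ (b + 3 * δ) * n := by positivity
    linarith
  intro y hy hyb hxy y' hy' hyb' hbt
  have key : gg μ (colorCount n y 0 / n) - b - δ ≤ gg μ (colorCount n y' 0 / n) := by
    have hle : ∀ x : Fin n → Fin 3, (colorCount n x 0 : ℝ) / n ≤ 1 := fun x => by
      rw [div_le_one hn0]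
      have := colorCount_sum3 x
      have : (0 : ℝ) ≤ colorCount n x 1 := by positivity
      have : (0 : ℝ) ≤ colorCount n x 2 := by positivity
      linarith
    have h3 : (1 : ℝ) / 3 ≤ colorCount n y 0 / n := by
      obtain ⟨a1, a2⟩ := mem_RGB.1 hy
      have a1' : (colorCount n y 1 : ℝ) ≤ colorCount n y 0 := by exact_mod_cast a1
      have a2' : (colorCount n y 2 : ℝ) ≤ colorCount n y 1 := by exact_mod_cast a2
      have := colorCount_sum3 y
      rw [div_le_div_iff₀ (by norm_num) hn0]
      linarith
    rw [z0] at hbt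
    rcases hbt with ⟨u1, u2⟩ | ⟨u1, u2⟩
    · have v1 : (colorCount n y 0 : ℝ) / n ≤ colorCount n y' 0 / n := by gcongr
      have v2 : (colorCount n y' 0 : ℝ) / n < r + 1 / n := by
        have : (colorCount n y' 0 : ℝ) ≤ m := by exact_mod_cast u2
        rw [div_lt_iff₀ hn0, add_mul, one_div_mul_cancel hn0.ne']
        linarith
      have l1 := hle y
      have l2 := hle y'
      generalize (colorCount n y 0 : ℝ) / n = s at *
      generalize (colorCount n y' 0 : ℝ) / n = s' at *
      by_cases c1 : s' ≤ r
      · linarith [h1 s s' h3 v1 c1]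
      -- `s'` overshoots `r` by less than `1 / n`
      have c2 : ∀ v, r ≤ v → v ≤ s' → gg μ v - δ ≤ gg μ s' := fun v w1 w2 => by
        have := hu v ⟨by linarith, by linarith⟩ s' ⟨by linarith, l2⟩
          (by rw [Real.dist_eq, abs_lt]; constructor <;> linarith)
        rw [Real.dist_eq, abs_lt] at this
        linarith
      rcases le_total s r with c3 | c3
      · linarith [h1 s r h3 c3 le_rfl, c2 r le_rfl (by linarith)]
      · linarith [c2 s c3 v1]
    · have v1 : (colorCount n y' 0 : ℝ) / n ≤ colorCount n y 0 / n := by gcongr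
      have v2 : r ≤ (colorCount n y' 0 : ℝ) / n := by
        have : (m : ℝ) ≤ colorCount n y' 0 := by exact_mod_cast u1
        rw [le_div_iff₀ hn0]
        linarith
      linarith [h2 _ _ (hle y) v2 v1]
  have w1 := abs_le.1 (hW y hy hyb)
  have w2 := abs_le.1 (hW y' hy' hyb')
  calc Wt n (μ / n) x * Real.exp (-((b + 3 * δ) * n))
      ≤ Wt n (μ / n) y * Real.exp (-((b + 3 * δ) * n)) := by gcongr
    _ ≤ Wt n (μ / n) y' := by
      rw [← Real.log_le_log_iff (mul_pos (Wt_pos _ _) (Real.exp_pos _)) (Wt_pos _ _),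
        Real.log_mul (Wt_pos _ _).ne' (Real.exp_pos _).ne', Real.log_exp]
      nlinarith [w1.2, w2.1, mul_le_mul_of_nonneg_left key hn0.le]

lemma eventually_mixingTime_le {μ b r δ : ℝ} (hμ : 0 ≤ μ) (hδ : 0 < δ) (hb : 0 ≤ b)
    (hr : 1 / 2 ≤ r)
    (hr1 : r ≤ 1) (h1 : ∀ s t, 1 / 3 ≤ s → s ≤ t → t ≤ r → gg μ s - b ≤ gg μ t)
    (h2 : ∀ s t, s ≤ 1 → r ≤ t → t ≤ s → gg μ s ≤ gg μ t) :
    ∀ᶠ n : ℕ in atTop, ∀ ε : ℝ, 0 < ε → ε < 1 →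
      (mixingTime (metropolis (propRGB n) (gibbsRGB n (μ / n))) (gibbsRGB n (μ / n)) ε : ℝ) ≤
        Real.exp ((b + 4 * δ) * n) * (1 + Real.log (1 / ε)) := by
  filter_upwards [eventually_paths hμ hδ hb hr hr1 h1 h2, eventually_gt_atTop 0,
    eventually_poly_le_exp (192 * Real.exp μ * (4 + 3 / 2 * (Real.log 3 + μ))) 7 hδ]
    with n ⟨z, hz⟩ hn hpoly ε hε hε1
  have hn1 : (1 : ℝ) ≤ n := by exact_mod_cast hn
  have hl3 : 0 ≤ Real.log 3 := Real.log_nonneg (by norm_num)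
  have hP := poincare_of_paths (n := n) (β := μ / n) (by positivity) z hz
  obtain ⟨K, hK⟩ : ∃ K : ℝ, K = 12 * ((4 * n : ℕ) : ℝ) ^ 2 * n * Real.exp (μ / n * n)
      * Real.exp ((b + 3 * δ) * n) * ((n : ℝ) + 1) ^ 3 := ⟨_, rfl⟩
  rw [← hK] at hP
  rw [div_mul_cancel₀ _ (by positivity)] at hK
  have e1 : 1 ≤ Real.exp μ := Real.one_le_exp hμ
  have e2 : 1 ≤ Real.exp ((b + 3 * δ) * n) := Real.one_le_exp (by positivity)
  have hK1 : 1 ≤ K := by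
    have a1 : (1 : ℝ) ≤ 12 * ((4 * n : ℕ) : ℝ) ^ 2 := by push_cast; nlinarith
    have a2 : (1 : ℝ) ≤ ((n : ℝ) + 1) ^ 3 := one_le_pow₀ (by linarith)
    rw [hK]
    exact one_le_mul_of_one_le_of_one_le (one_le_mul_of_one_le_of_one_le
      (one_le_mul_of_one_le_of_one_le (one_le_mul_of_one_le_of_one_le a1 hn1) e1) e2) a2
  have hM := metroRGB_revChain (n := n) (μ / n)
  have := (hM.1.mixingTime_le (κ := 1 / 3) (by norm_num) hM.2 (by linarith) hP
    (by rw [div_le_one (by linarith)]; linarith) (exp_neg_le_gibbsRGB hn hμ)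
    (by positivity) hε hε1).2
  refine this.trans ?_
  have hL : 0 ≤ Real.log (1 / ε) := Real.log_nonneg (by rw [le_div_iff₀ hε]; linarith)
  have hKb : K * (4 + 3 / 2 * (Real.log 3 + μ)) * (n + 1) ≤ Real.exp ((b + 4 * δ) * n) := by
    rw [show (b + 4 * δ) * n = δ * n + (b + 3 * δ) * n by ring, Real.exp_add]
    refine le_trans ?_ (mul_le_mul_of_nonneg_right hpoly (Real.exp_pos _).le)
    have : (12 * ((4 * n : ℕ) : ℝ) ^ 2 * n) ≤ 192 * ((n : ℝ) + 1) ^ 3 := by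
      push_cast
      nlinarith
    calc K * (4 + 3 / 2 * (Real.log 3 + μ)) * (n + 1)
        ≤ 192 * ((n : ℝ) + 1) ^ 3 * Real.exp μ * Real.exp ((b + 3 * δ) * n) * ((n : ℝ) + 1) ^ 3
          * (4 + 3 / 2 * (Real.log 3 + μ)) * (n + 1) := by rw [hK]; gcongr
      _ = _ := by ring
  refine le_trans ?_ (mul_le_mul_of_nonneg_right hKb (by linarith))
  generalize Real.log (1 / ε) = L at *
  have hA : 0 ≤ Real.log 3 + μ := by linarith
  generalize Real.log 3 + μ = A at *
  have x1 : 0 ≤ K * L := by positivity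
  have x2 : 0 ≤ K * A := by positivity
  have x3 : 0 ≤ K * A * n := by positivity
  have x4 : 0 ≤ K * n := by positivity
  have x5 : 0 ≤ K * A * L := by positivity
  have x6 : 0 ≤ K * A * n * L := by positivity
  have x7 : 0 ≤ K * n * L := by positivity
  have : K / (2 * (1 / 3)) * (2 * L + A * n) + 1 ≤ 3 * (K * L) + 3 / 2 * (K * A * n) + K := by
    rw [show K / (2 * (1 / 3)) = 3 / 2 * K by ring]; nlinarith
  nlinarith

end upper

/-! ### The bottleneck at first-color density `1 / 2` -/

section bottleneck

lemma negMulLog_le_of_pos {t q : ℝ} (ht : 0 ≤ t) (hq : 0 < q) :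
    t.negMulLog ≤ -t * Real.log q + q - t := by
  rcases ht.eq_or_lt with rfl | ht
  · simp [hq.le]
  have := Real.log_le_sub_one_of_pos (div_pos hq ht)
  rw [Real.log_div hq.ne' ht.ne'] at this
  have h2 := mul_le_mul_of_nonneg_left this ht.le
  rw [show t * (q / t - 1) = q - t by field_simp] at h2
  rw [Real.negMulLog]
  linarith

/-- Binary Pinsker inequality, scaled to total mass `1 / 2`. It is the Gibbs inequality against the
weights `e^{±v} / (4 cosh v)` with `v = 4 d`. -/
lemma entropy_half_le {d : ℝ} (h1 : -(1 / 4) ≤ d) (h2 : d ≤ 1 / 4) :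
    (1 / 4 + d).negMulLog + (1 / 4 - d).negMulLog ≤ Real.log 2 - 4 * d ^ 2 := by
  have hc := Real.cosh_pos (4 * d)
  have hlog : Real.log (Real.cosh (4 * d)) ≤ (4 * d) ^ 2 / 2 := by
    rw [Real.log_le_iff_le_exp hc]
    exact Real.cosh_le_exp_half_sq _
  have a1 := negMulLog_le_of_pos (t := 1 / 4 + d) (q := Real.exp (4 * d) / (4 * Real.cosh (4 * d)))
    (by linarith) (by positivity)
  have a2 := negMulLog_le_of_pos (t := 1 / 4 - d)
    (q := Real.exp (-(4 * d)) / (4 * Real.cosh (4 * d))) (by linarith) (by positivity)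
  have hs : Real.exp (4 * d) / (4 * Real.cosh (4 * d))
      + Real.exp (-(4 * d)) / (4 * Real.cosh (4 * d)) = 1 / 2 := by
    rw [← add_div, div_eq_iff (by positivity), Real.cosh_eq]
    ring
  rw [Real.log_div (Real.exp_pos _).ne' (by positivity), Real.log_exp,
    Real.log_mul (by norm_num) hc.ne'] at a1 a2
  have h4 : Real.log 4 = 2 * Real.log 2 := by
    rw [show (4 : ℝ) = 2 ^ 2 by norm_num, Real.log_pow]; norm_num
  rw [h4] at a1 a2
  nlinarith

/-- At every `ν`, a configuration with first-color density `1 / 2` has free energy at least `c0`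
below that of the disordered state or of the ordered state with density `2 / 3`. -/
lemma FF_half_le (ν t u : ℝ) (ht : 0 ≤ t) (hu : 0 ≤ u) (htu : t + u = 1 / 2) :
    FF ν (1 / 2) t u + c0 ≤ max (gg ν (1 / 3)) (gg ν (2 / 3)) := by
  obtain ⟨d, rfl⟩ : ∃ d, t = 1 / 4 + d := ⟨t - 1 / 4, by ring⟩
  obtain rfl : u = 1 / 4 - d := by linarith
  have he := entropy_half_le (d := d) (by linarith) (by linarith)
  have hd : d ^ 2 ≤ 1 / 16 := by nlinarith
  have hl2 : Real.log 2 ≤ 1 := by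
    have := Real.log_two_lt_d9
    linarith
  have hl0 : 0 < Real.log 2 := Real.log_pos (by norm_num)
  have hhalf : (1 / 2 : ℝ).negMulLog = Real.log 2 / 2 := by
    rw [Real.negMulLog, one_div, Real.log_inv]; ring
  rw [gg_third, gg_two_thirds, FF, hhalf, c0]
  rcases le_total ν 4 with h | h
  · have h5 : (ν - 4) * d ^ 2 ≤ 0 := mul_nonpos_of_nonpos_of_nonneg (by linarith) (sq_nonneg d)
    by_contra hcon
    rw [not_le, max_lt_iff] at hcon
    nlinarith [hcon.1, hcon.2]
  · refine le_trans ?_ (le_max_right _ _)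
    nlinarith [mul_le_mul_of_nonneg_left hd (by linarith : 0 ≤ ν - 4)]

end bottleneck

section slices

open Filter Topology

lemma FFc_of_counts {n : ℕ} (hn : 0 < n) (ν : ℝ) {x : Fin n → Fin 3} {s : ℝ}
    (h0 : (colorCount n x 0 : ℝ) = s * n) (h12 : colorCount n x 1 = colorCount n x 2) :
    FFc ν x = gg ν s := by
  have hn' : (n : ℝ) ≠ 0 := by positivity
  have h := colorCount_sum3 x
  rw [h0, h12] at h
  have h2 : (colorCount n x 2 : ℝ) / n = (1 - s) / 2 := by
    rw [div_eq_iff hn']; linarith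
  rw [FFc, gg, h12, h2, h0, mul_div_cancel_right₀ _ hn']

lemma exists_disordered {n : ℕ} (hn : 0 < n) (h6 : 6 ∣ n) : ∃ D ∈ RGBset n,
    2 * colorCount n D 0 < n ∧ ∀ ν, FFc ν D = gg ν (1 / 3) := by
  obtain ⟨k, rfl⟩ := h6
  obtain ⟨x, x0, x1, x2⟩ := exists_config (n := 6 * k) (2 * k) (2 * k) (2 * k) (by ring)
  refine ⟨x, mem_RGB.2 (by omega), by omega, fun ν => FFc_of_counts hn ν ?_ (by omega)⟩
  rw [x0]; push_cast; ring

lemma exists_ordered {n : ℕ} (hn : 0 < n) (h6 : 6 ∣ n) : ∃ O ∈ RGBset n,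
    n ≤ 2 * colorCount n O 0 ∧ ∀ ν, FFc ν O = gg ν (2 / 3) := by
  obtain ⟨k, rfl⟩ := h6
  obtain ⟨x, x0, x1, x2⟩ := exists_config (n := 6 * k) (4 * k) k k (by ring)
  refine ⟨x, mem_RGB.2 (by omega), by omega, fun ν => FFc_of_counts hn ν ?_ (by omega)⟩
  rw [x0]; push_cast; ring

/-- The slice of first-color density `1 / 2` is exponentially unlikely at all temperatures. -/
lemma eventually_slice_le {μ δ : ℝ} (hμ : 0 ≤ μ) (hδ : 0 < δ) :
    ∀ᶠ n : ℕ in atTop, 6 ∣ n → ∀ ν, 0 ≤ ν → ν ≤ μ →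
      ∑ x ∈ (RGBset n).filter (fun x => 2 * colorCount n x 0 = n),
          Real.exp (ν / n * pottsH n x) ≤
        Real.exp (-((c0 - 3 * δ) * n)) * ZRGB n (ν / n) := by
  filter_upwards [eventually_log_Wt hμ hδ, eventually_poly_le_exp 1 3 hδ, eventually_gt_atTop 0]
    with n hW hpoly hn h6 ν hν hνμ
  have hn0 : (0 : ℝ) < n := by exact_mod_cast hn
  have hmax : n * max (gg ν (1 / 3)) (gg ν (2 / 3)) - δ * n ≤ Real.log (ZRGB n (ν / n)) := by
    obtain ⟨D, hD, -, hDF⟩ := exists_disordered hn h6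
    obtain ⟨O, hO, -, hOF⟩ := exists_ordered hn h6
    have d1 := (abs_le.1 (hW ν hν hνμ D)).1
    have o1 := (abs_le.1 (hW ν hν hνμ O)).1
    have d2 := Real.log_le_log (Wt_pos _ _) (Wt_le_ZRGB (ν / n) hD)
    have o2 := Real.log_le_log (Wt_pos _ _) (Wt_le_ZRGB (ν / n) hO)
    rw [hDF] at d1
    rw [hOF] at o1
    rcases max_choice (gg ν (1 / 3)) (gg ν (2 / 3)) with h | h <;> rw [h] <;> linarith
  have hs := sum_exp_le (n := n) (β := ν / n) (W := Real.exp (-((c0 - 2 * δ) * n)) * ZRGB n (ν / n))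
    (T := (RGBset n).filter (fun x => 2 * colorCount n x 0 = n))
    (mul_pos (Real.exp_pos _) (ZRGB_pos _)).le (fun x hx => by
      have hx2 := (mem_filter.1 hx).2
      have h0 : (colorCount n x 0 : ℝ) / n = 1 / 2 := by
        have : (2 : ℝ) * colorCount n x 0 = n := by exact_mod_cast hx2
        rw [div_eq_div_iff hn0.ne' (by norm_num)]; linarith
      have h12 : (colorCount n x 1 : ℝ) / n + colorCount n x 2 / n = 1 / 2 := by
        have : (colorCount n x 0 / n : ℝ) + colorCount n x 1 / n + colorCount n x 2 / n = 1 := by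
          rw [← add_div, ← add_div, colorCount_sum3, div_self hn0.ne']
        linarith
      have hF := FF_half_le ν _ _ (by positivity) (by positivity) h12
      rw [← h0] at hF
      have hw := (abs_le.1 (hW ν hν hνμ x)).2
      rw [← Real.log_le_log_iff (Wt_pos _ _) (mul_pos (Real.exp_pos _) (ZRGB_pos _)),
        Real.log_mul (Real.exp_pos _).ne' (ZRGB_pos _).ne', Real.log_exp]
      have hF' := mul_le_mul_of_nonneg_left hF hn0.le
      rw [FFc] at hw
      rw [h0] at hw hF'
      linarith)
  refine hs.trans ?_
  rw [← mul_assoc]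
  refine mul_le_mul_of_nonneg_right ?_ (ZRGB_pos _).le
  rw [show -((c0 - 3 * δ) * n) = δ * n + -((c0 - 2 * δ) * n) by ring, Real.exp_add]
  gcongr
  linarith

/-- At infinite temperature the equipartition class carries at least a fraction `e^{-δn}`. -/
lemma eventually_disordered_mass {δ : ℝ} (hδ : 0 < δ) :
    ∀ᶠ n : ℕ in atTop, 6 ∣ n → ∃ D ∈ RGBset n, 2 * colorCount n D 0 < n ∧
      Real.exp (-(δ * n)) * ZRGB n (0 / n) ≤ Wt n (0 / n) D := by
  filter_upwards [eventually_log_Wt (le_refl (0 : ℝ)) hδ, eventually_gt_atTop 0] with n hW hn h6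
  obtain ⟨D, hD, hDn, hDF⟩ := exists_disordered hn h6
  refine ⟨D, hD, hDn, ?_⟩
  have h1 := (abs_le.1 (hW 0 le_rfl le_rfl D)).1
  rw [hDF, gg_third] at h1
  have hZ : ZRGB n (0 / n) ≤ Real.exp (n * Real.log 3) := by
    rw [Real.exp_nat_mul, Real.exp_log (by norm_num), ZRGB]
    calc ∑ y ∈ RGBset n, Real.exp (0 / n * pottsH n y)
        ≤ ∑ y : Fin n → Fin 3, Real.exp (0 / n * pottsH n y) :=
          sum_le_sum_of_subset_of_nonneg (subset_univ _) fun _ _ _ => (Real.exp_pos _).le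
      _ = 3 ^ n := by simp
  calc Real.exp (-(δ * n)) * ZRGB n (0 / n) ≤ Real.exp (-(δ * n)) * Real.exp (n * Real.log 3) := by
        gcongr
    _ = Real.exp (n * Real.log 3 - δ * n) := by rw [← Real.exp_add]; ring_nf
    _ ≤ Wt n (0 / n) D := by
        rw [← Real.le_log_iff_exp_le (Wt_pos _ _)]; linarith

/-- At supercritical `μ` some class of first-color density at least `1 / 2` carries at least a
fraction `e^{-3δn}`. -/
lemma eventually_ordered_mass {μ δ : ℝ} (hμ : 4 * Real.log 2 < μ) (hδ : 0 < δ) :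
    ∀ᶠ n : ℕ in atTop, 6 ∣ n → ∃ w ∈ RGBset n, n ≤ 2 * colorCount n w 0 ∧
      Real.exp (-(3 * δ * n)) * ZRGB n (μ / n) ≤ Wt n (μ / n) w := by
  have hμ0 : 0 ≤ μ := by linarith [Real.log_pos (by norm_num : (1 : ℝ) < 2)]
  filter_upwards [eventually_log_Wt hμ0 hδ, eventually_log_Wt_balanced hμ0 hδ,
    eventually_poly_le_exp 1 3 hδ, eventually_gt_atTop 0] with n hW hB hpoly hn h6
  have hn0 : (0 : ℝ) < n := by exact_mod_cast hn
  obtain ⟨x, hx, hmax⟩ := exists_max_image (RGBset n) (Wt n (μ / n)) ⟨_, const_mem_RGB⟩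
  obtain ⟨y, hy, hyb, hxy, -⟩ := balance (μ / n) _ x hx le_rfl
  have hZ : ZRGB n (μ / n) ≤ Real.exp (δ * n) * Wt n (μ / n) y := by
    refine (sum_exp_le (Wt_pos _ y).le fun v hv => (hmax v hv).trans hxy).trans ?_
    exact mul_le_mul_of_nonneg_right (by linarith) (Wt_pos _ _).le
  have hfin : ∀ w, Real.exp (-(2 * δ * n)) * Wt n (μ / n) y ≤ Wt n (μ / n) w →
      Real.exp (-(3 * δ * n)) * ZRGB n (μ / n) ≤ Wt n (μ / n) w := fun w hw => by
    refine le_trans ?_ hw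
    calc Real.exp (-(3 * δ * n)) * ZRGB n (μ / n)
        ≤ Real.exp (-(3 * δ * n)) * (Real.exp (δ * n) * Wt n (μ / n) y) := by gcongr
      _ = Real.exp (-(2 * δ * n)) * Wt n (μ / n) y := by
        rw [← mul_assoc, ← Real.exp_add]; ring_nf
  by_cases hy2 : n ≤ 2 * colorCount n y 0
  · refine ⟨y, hy, hy2, hfin y (mul_le_of_le_one_left (Wt_pos _ _).le (Real.exp_le_one_iff.2 ?_))⟩
    have : 0 ≤ 2 * δ * n := by positivity
    linarith
  obtain ⟨O, hO, hOn, hOF⟩ := exists_ordered hn h6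
  refine ⟨O, hO, hOn, hfin O ?_⟩
  have h1 := (abs_le.1 (hB y hy hyb)).2
  have h2 := (abs_le.1 (hW μ hμ0 le_rfl O)).1
  rw [hOF] at h2
  have hg := gg_le_two_thirds hμ.le (s := colorCount n y 0 / n)
    (by
      obtain ⟨a1, a2⟩ := mem_RGB.1 hy
      have a1' : (colorCount n y 1 : ℝ) ≤ colorCount n y 0 := by exact_mod_cast a1
      have a2' : (colorCount n y 2 : ℝ) ≤ colorCount n y 1 := by exact_mod_cast a2
      have := colorCount_sum3 y
      rw [div_le_div_iff₀ (by norm_num) hn0]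
      linarith)
    (by
      have : (2 : ℝ) * colorCount n y 0 ≤ n := by exact_mod_cast (not_le.1 hy2).le
      rw [div_le_div_iff₀ hn0 (by norm_num)]
      linarith)
  rw [← Real.log_le_log_iff (mul_pos (Real.exp_pos _) (Wt_pos _ _)) (Wt_pos _ _),
    Real.log_mul (Real.exp_pos _).ne' (Wt_pos _ _).ne', Real.log_exp]
  nlinarith [mul_le_mul_of_nonneg_left hg hn0.le]

end slices

/-! ### The tempering chain mixes in time at least `e^{(c0 - o(1)) n}` -/

section tempering

open Filter Topology

variable {n : ℕ}

/-- The simulated tempering chain on `Ω_RGB` with inverse temperatures `β`. -/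
noncomputable abbrev tempRGB (n : ℕ) (β : Fin (n + 1) → ℝ) :
    Matrix (↥(RGBset n) × Fin (n + 1)) (↥(RGBset n) × Fin (n + 1)) ℝ :=
  temperingChain (fun i => metropolis (propRGB n) (gibbsRGB n (β i))) (fun i => gibbsRGB n (β i))

/-- The stationary distribution of `tempRGB`. -/
noncomputable abbrev statRGB (n : ℕ) (β : Fin (n + 1) → ℝ) (p : ↥(RGBset n) × Fin (n + 1)) : ℝ :=
  gibbsRGB n (β p.2) p.1 / (n + 1)

/-- The side of the bottleneck on which the first color has density below `1 / 2`. -/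
noncomputable def lowSet (n : ℕ) : Finset (↥(RGBset n) × Fin (n + 1)) :=
  univ.filter fun p => 2 * colorCount n p.1.1 0 < n

lemma tempRGB_revChain (β : Fin (n + 1) → ℝ) :
    RevChain (tempRGB n β) (statRGB n β) ∧ ∀ p, 1 / 6 ≤ tempRGB n β p p :=
  tempering_revChain (fun i => (metroRGB_revChain (β i)).1) (fun i => (metroRGB_revChain (β i)).2)

lemma tempRGB_converges (hn : 12 ≤ n) (β : Fin (n + 1) → ℝ) {ε : ℝ} (hε : 0 < ε) (hε1 : ε < 1) :
    ∃ t, ∀ t' : ℕ, t ≤ t' → ∀ p,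
      (1 / 2) * ∑ q, |(tempRGB n β ^ t') p q - statRGB n β q| ≤ ε := by
  obtain ⟨h, hh⟩ := tempRGB_revChain β
  obtain ⟨K, hK, hP⟩ := h.exists_poincare
    (tempering_connected (fun i => (metroRGB_revChain (β i)).1)
      (fun i => metroRGB_connected hn (β i)) (fun p => lt_of_lt_of_le (by norm_num) (hh p)))
  refine (h.mixingTime_le (κ := 1 / 6) (by norm_num) hh (by linarith) hP
    (by rw [div_le_one (by linarith)]; linarith)
    (B := ∑ p, |Real.log (statRGB n β p)|) (fun p => ?_)
    (sum_nonneg fun _ _ => abs_nonneg _) hε hε1).1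
  rw [← Real.le_log_iff_exp_le (h.pos p)]
  have h1 := single_le_sum (f := fun p => |Real.log (statRGB n β p)|)
    (fun _ _ => abs_nonneg _) (mem_univ p)
  have h2 := neg_abs_le (Real.log (statRGB n β p))
  linarith

/-- Since `n` is even and a step moves at most one vertex, the low set is entered only from states
whose first color has density exactly `1 / 2`. -/
lemma tempRGB_eq_zero (h2 : 2 ∣ n) (β : Fin (n + 1) → ℝ) {p q : ↥(RGBset n) × Fin (n + 1)}
    (hp : 2 * colorCount n p.1.1 0 < n) (hq : n < 2 * colorCount n q.1.1 0) :
    tempRGB n β q p = 0 := by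
  have hne : p.1 ≠ q.1 := fun h => by rw [h] at hp; omega
  have hprop : propRGB n q.1 p.1 = 0 := by
    rw [propRGB, pottsProp, filter_eq_empty_iff.2, card_empty]
    · simp
    · rintro ⟨v, c⟩ - hvc
      have := colorCount_update q.1.1 v c 0
      simp only at hvc
      rw [hvc] at this
      split_ifs at this <;> omega
  have hpq : p ≠ q := fun h => hne (by rw [h])
  simp [tempRGB, temperingChain, temperingOff, metropolis, hpq, hne, hprop]

lemma flow_le (h2 : 2 ∣ n) (β : Fin (n + 1) → ℝ) {η : ℝ}
    (hη : ∀ i, ∑ x ∈ (RGBset n).filter (fun x => 2 * colorCount n x 0 = n),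
      Real.exp (β i * pottsH n x) ≤ η * ZRGB n (β i)) :
    ∑ p ∈ lowSet n, ∑ q ∈ (lowSet n)ᶜ, statRGB n β p * tempRGB n β p q ≤ η := by
  obtain ⟨h, -⟩ := tempRGB_revChain β
  have hn : (0 : ℝ) < n + 1 := by positivity
  have hlow : ∀ p, p ∈ lowSet n ↔ 2 * colorCount n p.1.1 0 < n := fun p => by simp [lowSet]
  rw [sum_comm]
  calc ∑ q ∈ (lowSet n)ᶜ, ∑ p ∈ lowSet n, statRGB n β p * tempRGB n β p q
      = ∑ q ∈ (lowSet n)ᶜ, statRGB n β q * ∑ p ∈ lowSet n, tempRGB n β q p := by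
        refine sum_congr rfl fun q _ => ?_
        rw [mul_sum]
        exact sum_congr rfl fun p _ => h.rev p q
    _ ≤ ∑ q ∈ (lowSet n)ᶜ, if 2 * colorCount n q.1.1 0 = n then statRGB n β q else 0 := by
        refine sum_le_sum fun q hq => ?_
        split_ifs with hqn
        · refine mul_le_of_le_one_right (h.pos q).le ?_
          rw [← h.row q]
          exact sum_le_sum_of_subset_of_nonneg (subset_univ _) fun p _ _ => h.nonneg q p
        · rw [sum_eq_zero, mul_zero]
          intro p hp
          have hq' : ¬ 2 * colorCount n q.1.1 0 < n := fun hh => mem_compl.1 hq ((hlow q).2 hh)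
          exact tempRGB_eq_zero h2 β ((hlow p).1 hp) (by omega)
    _ ≤ ∑ q, if 2 * colorCount n q.1.1 0 = n then statRGB n β q else 0 :=
        sum_le_sum_of_subset_of_nonneg (subset_univ _) fun q _ _ => by
          split_ifs
          · exact (h.pos q).le
          · exact le_rfl
    _ = ∑ i, (∑ x ∈ (RGBset n).filter (fun x => 2 * colorCount n x 0 = n),
          Real.exp (β i * pottsH n x)) / ZRGB n (β i) / (n + 1) := by
        rw [Fintype.sum_prod_type_right]
        refine sum_congr rfl fun i _ => ?_
        rw [sum_filter, sum_div, sum_div, ← sum_coe_sort (RGBset n)]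
        refine sum_congr rfl fun x _ => ?_
        simp only [statRGB, gibbsRGB_eq]
        split_ifs <;> simp
    _ ≤ ∑ _i : Fin (n + 1), η / (n + 1) := by
        refine sum_le_sum fun i _ => ?_
        gcongr
        exact (div_le_iff₀ (ZRGB_pos _)).2 (hη i)
    _ = η := by
        rw [sum_const, card_univ, Fintype.card_fin, nsmul_eq_mul]
        push_cast
        field_simp

lemma class_mass_le (β : Fin (n + 1) → ℝ) (i : Fin (n + 1)) {w : Fin n → Fin 3}
    (hw : w ∈ RGBset n) (A : Finset (↥(RGBset n) × Fin (n + 1)))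
    (hA : ∀ p : ↥(RGBset n) × Fin (n + 1), colorCount n p.1.1 = colorCount n w → p ∈ A) :
    Wt n (β i) w / ZRGB n (β i) / (n + 1) ≤ ∑ p ∈ A, statRGB n β p := by
  have hpos := (tempRGB_revChain β).1.pos
  calc Wt n (β i) w / ZRGB n (β i) / (n + 1)
      = ∑ x : ↥(RGBset n), if x.1 ∈ cls n w then statRGB n β (x, i) else 0 := by
        have : Wt n (β i) w = ∑ y ∈ cls n w, Real.exp (β i * pottsH n y) := by
          rw [Wt, ← nsmul_eq_mul, ← sum_const]
          exact sum_congr rfl fun y hy => by rw [pottsH_congr (mem_cls.mp hy)]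
        have hsub : cls n w = (RGBset n).filter (fun x => x ∈ cls n w) := by
          ext x
          rw [mem_filter]
          exact ⟨fun hx => ⟨(mem_RGB_congr (mem_cls.1 hx)).2 hw, hx⟩, fun hx => hx.2⟩
        rw [this, hsub, sum_filter, sum_div, sum_div, ← sum_coe_sort (RGBset n), ← hsub]
        refine sum_congr rfl fun x _ => ?_
        simp only [statRGB, gibbsRGB_eq]
        split_ifs <;> simp
    _ = ∑ x ∈ (univ : Finset ↥(RGBset n)).filter (fun x => x.1 ∈ cls n w), statRGB n β (x, i) := by
        rw [sum_filter]
    _ = ∑ p ∈ ((univ : Finset ↥(RGBset n)).filter (fun x => x.1 ∈ cls n w)).map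
          ⟨fun x => (x, i), fun a b h => (Prod.ext_iff.1 h).1⟩, statRGB n β p := by
        rw [sum_map]; rfl
    _ ≤ ∑ p ∈ A, statRGB n β p := by
        refine sum_le_sum_of_subset_of_nonneg ?_ fun p _ _ => (hpos p).le
        intro p hp
        obtain ⟨x, hx, rfl⟩ := mem_map.1 hp
        exact hA _ (mem_cls.1 (mem_filter.1 hx).2)

lemma eventually_le_mixingTime {μ δ : ℝ} (hμ : 4 * Real.log 2 < μ) (hδ : 0 < δ)
    (hδc : 9 * δ < c0) :
    ∀ᶠ n : ℕ in atTop, 6 ∣ n → ∀ ε : ℝ, 0 < ε → ε < 1 / 4 →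
      Real.exp ((c0 - 10 * δ) * n) * Real.log (1 / ε) ≤
        mixingTime (tempRGB n fun i : Fin (n + 1) => ((i : ℕ) : ℝ) * (μ / n) / n)
          (statRGB n fun i : Fin (n + 1) => ((i : ℕ) : ℝ) * (μ / n) / n) ε := by
  have hμ0 : 0 ≤ μ := by linarith [Real.log_pos (by norm_num : (1 : ℝ) < 2)]
  filter_upwards [eventually_slice_le hμ0 hδ, eventually_disordered_mass hδ,
    eventually_ordered_mass hμ hδ, eventually_poly_le_exp 8 1 hδ,
    eventually_poly_le_exp 4 0 (sub_pos.2 hδc), eventually_ge_atTop 12]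
    with n hslice hdis hord hpoly hγ hn h6 ε hε hε1
  have hn0 : (0 : ℝ) < n := by exact_mod_cast (by omega : 0 < n)
  have hn1 : (1 : ℝ) + n ≤ Real.exp (δ * n) := by linarith
  obtain ⟨β, hβ⟩ : ∃ β : Fin (n + 1) → ℝ,
      β = fun i : Fin (n + 1) => ((i : ℕ) : ℝ) * (μ / n) / n := ⟨_, rfl⟩
  rw [← hβ]
  obtain ⟨D, hD, hDn, hDW⟩ := hdis h6
  obtain ⟨O, hO, hOn, hOW⟩ := hord h6
  have hβ0 : β 0 = 0 / n := by simp [hβ]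
  have hβn : β (Fin.last n) = μ / n := by
    simp only [hβ, Fin.val_last]; field_simp
  have hflow := flow_le (dvd_trans (by norm_num) h6) β (η := Real.exp (-((c0 - 3 * δ) * n)))
    (fun i => by
      have : β i = ((i : ℕ) * (μ / n)) / n := by rw [hβ]
      rw [this]
      refine hslice h6 _ (by positivity) ?_
      have hi : ((i : ℕ) : ℝ) ≤ n := by exact_mod_cast Nat.lt_succ_iff.1 i.2
      calc ((i : ℕ) : ℝ) * (μ / n) ≤ n * (μ / n) := by gcongr
        _ = μ := by field_simp)
  obtain ⟨h, -⟩ := tempRGB_revChain β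
  have hlow : ∀ p, p ∈ lowSet n ↔ 2 * colorCount n p.1.1 0 < n := fun p => by simp [lowSet]
  have hmass : ∀ {a Z W : ℝ}, 0 < Z → Real.exp (-(a * n)) * Z ≤ W →
      Real.exp (-((a + δ) * n)) ≤ W / Z / (n + 1) := fun {a Z W} hZ hW => by
    rw [le_div_iff₀ (by positivity), le_div_iff₀ hZ]
    refine le_trans ?_ hW
    refine mul_le_mul_of_nonneg_right ?_ hZ.le
    rw [show -(a * n) = -((a + δ) * n) + δ * n by ring, Real.exp_add]
    gcongr
    linarith
  have hA : Real.exp (-((δ + δ) * n)) ≤ ∑ p ∈ lowSet n, statRGB n β p := by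
    refine le_trans ?_ (class_mass_le β 0 hD (lowSet n) fun p hp => ?_)
    · rw [hβ0]; exact hmass (ZRGB_pos _) hDW
    · rw [hlow, hp]; exact hDn
  have hB : Real.exp (-((3 * δ + δ) * n)) ≤ ∑ p ∈ (lowSet n)ᶜ, statRGB n β p := by
    refine le_trans ?_ (class_mass_le β (Fin.last n) hO _ fun p hp => ?_)
    · rw [hβn]; exact hmass (ZRGB_pos _) hOW
    · rw [mem_compl, hlow, hp]; omega
  have hAB : ∑ p ∈ (lowSet n)ᶜ, statRGB n β p = 1 - ∑ p ∈ lowSet n, statRGB n β p := by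
    rw [← h.tot, ← sum_add_sum_compl (lowSet n)]; ring
  rw [hAB] at hB
  have pA := Real.exp_pos (-((δ + δ) * n))
  have pB := Real.exp_pos (-((3 * δ + δ) * n))
  have hmain := h.le_mixingTime (lowSet n) (γ := Real.exp (-((c0 - 9 * δ) * n))) (Real.exp_pos _)
    (by
      rw [Real.exp_neg, inv_le_comm₀ (Real.exp_pos _) (by norm_num)]
      linarith)
    (by linarith) (by linarith)
    (hflow.trans (by
      calc Real.exp (-((c0 - 3 * δ) * n)) = Real.exp (-((c0 - 9 * δ) * n))
            * (Real.exp (-((δ + δ) * n)) * Real.exp (-((3 * δ + δ) * n))) := by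
            rw [← Real.exp_add, ← Real.exp_add]; ring_nf
        _ ≤ _ := mul_le_mul_of_nonneg_left
            (mul_le_mul hA hB pB.le (pA.le.trans hA)) (Real.exp_pos _).le))
    hε hε1 (tempRGB_converges hn β hε (by linarith))
  refine le_trans ?_ hmain
  have hL : 0 ≤ Real.log (1 / ε) := Real.log_nonneg (by rw [le_div_iff₀ hε]; linarith)
  rw [mul_comm, div_eq_mul_inv]
  refine mul_le_mul_of_nonneg_left ?_ hL
  rw [mul_inv, ← Real.exp_neg, neg_neg,
    show (c0 - 9 * δ) * n = (c0 - 10 * δ) * n + δ * n by ring, Real.exp_add]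
  have h8 : 8 ≤ Real.exp (δ * n) := by linarith
  have := Real.exp_pos ((c0 - 10 * δ) * n)
  nlinarith

end tempering

/-- for every `μ > 4·ln 2` there are `0 < c' < c` and `N` such that for
all `n ≥ N` divisible by 6, with `β = μ/n`: the Metropolis chain on `Ω_RGB` at `β` has
mixing time at most `e^(c'n)·(1 + ln(1/ε))` for all `ε ∈ (0,1)`, while the simulated
tempering chain on `Ω_RGB` with the `n+1` equally spaced inverse temperatures
`β_i = i·β/n` has mixing time at least `e^(cn)·ln(1/ε)` for all `ε ∈ (0,1/4)`. -/
theorem tempering_exponentially_slower_than_metropolis :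
    ∀ μ : ℝ, 4 * Real.log 2 < μ → ∃ c c' : ℝ, 0 < c' ∧ c' < c ∧ ∃ N : ℕ,
      ∀ n : ℕ, N ≤ n → 6 ∣ n →
        (∀ ε : ℝ, 0 < ε → ε < 1 →
          (mixingTime (metropolis (propRGB n) (gibbsRGB n (μ / n)))
              (gibbsRGB n (μ / n)) ε : ℝ) ≤
            Real.exp (c' * n) * (1 + Real.log (1 / ε))) ∧
        (∀ ε : ℝ, 0 < ε → ε < 1/4 →
          Real.exp (c * n) * Real.log (1 / ε) ≤
            (mixingTime
              (temperingChain
                (fun i : Fin (n+1) =>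
                  metropolis (propRGB n) (gibbsRGB n (((i : ℕ) : ℝ) * (μ / n) / n)))
                (fun i : Fin (n+1) => gibbsRGB n (((i : ℕ) : ℝ) * (μ / n) / n)))
              (fun p : ↥(RGBset n) × Fin (n+1) =>
                gibbsRGB n (((p.2 : ℕ) : ℝ) * (μ / n) / n) p.1 / (n + 1)) ε : ℝ)) := by
  intro μ hμ
  obtain ⟨b, r, hb0, hbc, hr, hr1, h1, h2⟩ := exists_landscape hμ
  have hμ0 : 0 ≤ μ := by linarith [Real.log_pos (by norm_num : (1 : ℝ) < 2)]
  -- The constants `b + 4 δ` and `c0 - 10 δ` must stay apart: `20 δ = c0 - b` suffices.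
  obtain ⟨δ, hδ⟩ : ∃ δ, δ = (c0 - b) / 20 := ⟨_, rfl⟩
  have hδ0 : 0 < δ := by rw [hδ]; linarith
  obtain ⟨N, hN⟩ := Filter.eventually_atTop.1
    ((eventually_mixingTime_le hμ0 hδ0 hb0 hr hr1 h1 h2).and
      (eventually_le_mixingTime hμ hδ0 (by linarith)))
  exact ⟨c0 - 10 * δ, b + 4 * δ, by linarith, by linarith, N,
    fun n hn h6 => ⟨(hN n hn).1, (hN n hn).2 h6⟩⟩
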